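/- arXiv:math/0103178 — 4 statements merged into one kernel-verified Lean document; each statement's English description precedes it below -/
import Mathlib

section
/- The set Ω₂ = {v ∈ [1,∞) : v = v(G) for some group G with respect to some generating set of two elements} has the cardinality of the continuum, i.e. #Ω₂ = 2^{ℵ₀}. -/
/-!
Since `Ω₂ ⊆ ℝ`, only a lower bound is needed, and it comes from a strictly increasing map
`ℝ → Ω₂`. Let `FG` be the free group on `a` and `b`, and for a normal subgroup `R` let `R²`
(`sq R`) be the normal subgroup generated by the squares of elements of `R`.

*Strict monotonicity.* Let `R < R'` be normal with `a² ∈ R`, `a ∉ R'`, and no positive power of `b`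
in `R'`. Then `FG ⧸ R²` grows strictly faster than `FG ⧸ R'²` (`rate_wball_lt`). Take a geodesic
word of length `l` modulo `R'²`. Its path in `FG ⧸ R'` visits no point too often, because a word
that leaves a point twice through the same letter can be shortened (`shorten`); so at least `l / 16`
well separated positions can be chosen on it (`exists_positions`). For `r ∈ R' \ R`, the element
`loop r`, a commutator of elements of `R'`, is trivial modulo `R'²`. Inserting it at any `m` of
these positions does not change the value modulo `R'²`, while modulo `R²` the resulting values are
distinct for distinct choices of positions, as seen in a wreath product of `C₂` with `FG ⧸ R`
(`insertion_injective`). Hence every element of the sphere of radius `l` in `FG ⧸ R'²` has at least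
`(l / 16).choose m` preimages in the ball of radius `l + L m` in `FG ⧸ R²`
(`sphere_mul_choose_le`), and summing over `m` with suitable weights gives an exponential gain (`rate_lt_rate`).

*A chain of order type `ℝ`.* Let `a` act on `ℤ/n` as the transposition `(0 1)` and `b` as the
translation by `1`, with `ℤ/0 = ℤ`, and let `RA A` be the set of elements acting trivially for all
`n ∈ A`. For a prime `p`, the commutator of `a` and its conjugate by `b ^ (3 p + 1)` acts trivially
on `ℤ` and on `ℤ/3p'` for every prime `p' ≠ p`, because the two transpositions have disjoint
supports, but nontrivially on `ℤ/3p`. Indexing the primes by the rationals and letting `A` run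
through the sets given by lower cuts yields a strictly decreasing family of normal subgroups
indexed by `ℝ`.
-/

/-- The ball of radius `n` in a group `G` with respect to a generating set `S`
(products of at most `n` elements of `S ∪ S⁻¹`). -/
def ball {G : Type*} [Group G] (S : Set G) (n : ℕ) : Set G :=
  {g | ∃ w : List G, (∀ x ∈ w, x ∈ S ∨ x⁻¹ ∈ S) ∧ w.length ≤ n ∧ w.prod = g}

/-- The exponential growth rate `v(G) = lim (#B_G(n))^(1/n)` of a group with
respect to a generating set `S` (the limit exists by submultiplicativity, so we
may express it as a `limsup`). -/
noncomputable def growthRate {G : Type*} [Group G] (S : Set G) : ℝ :=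
  Filter.limsup (fun n : ℕ => (Nat.card (ball S n) : ℝ) ^ ((1 : ℝ) / n)) Filter.atTop


namespace GrowthChain

open Finset

/-- The free group on the two letters `true` and `false`, written `a` and `b` below. -/
abbrev FG : Type := FreeGroup Bool

/-- Unreduced words in the letters `a`, `b` and their inverses. -/
abbrev Word : Type := List (Bool × Bool)

/-- The first free generator. -/
def ga : FG := FreeGroup.of true

/-- The second free generator. -/
def gb : FG := FreeGroup.of false

/-- The subgroup `R²` generated by all conjugates of squares of elements of `R`. For normal `R`,
the quotient `FG ⧸ R²` is the largest extension of `FG ⧸ R` by an elementary abelian `2`-group on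
two marked generators. -/
def sq (R : Subgroup FG) : Subgroup FG :=
  Subgroup.normalClosure {w | ∃ r ∈ R, w = r ^ 2}

instance (R : Subgroup FG) : (sq R).Normal := Subgroup.normalClosure_normal

lemma sq_mono {R R' : Subgroup FG} (h : R ≤ R') : sq R ≤ sq R' := by
  apply Subgroup.normalClosure_mono
  rintro w ⟨r, hr, rfl⟩
  exact ⟨r, h hr, rfl⟩

lemma sq_le (R : Subgroup FG) [R.Normal] : sq R ≤ R := by
  apply Subgroup.normalClosure_le_normal
  rintro w ⟨r, hr, rfl⟩
  exact R.pow_mem hr 2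

lemma coe_sq_eq_one {R : Subgroup FG} {r : FG} (hr : r ∈ R) :
    (r : FG ⧸ sq R) * (r : FG ⧸ sq R) = 1 := by
  rw [← QuotientGroup.mk_mul, QuotientGroup.eq_one_iff, ← pow_two]
  exact Subgroup.subset_normalClosure ⟨r, hr, rfl⟩

lemma coe_inv_eq {R : Subgroup FG} {r : FG} (hr : r ∈ R) :
    (r : FG ⧸ sq R)⁻¹ = (r : FG ⧸ sq R) :=
  inv_eq_of_mul_eq_one_left (coe_sq_eq_one hr)

/-- A group in which every square is trivial is abelian, so commutators in `R` lie in `R²`. -/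
lemma commutator_mem_sq {R : Subgroup FG} {r u : FG} (hr : r ∈ R) (hu : u ∈ R) :
    r * u * r⁻¹ * u⁻¹ ∈ sq R := by
  rw [← QuotientGroup.eq_one_iff]
  have h := coe_sq_eq_one (R.mul_mem hr hu)
  simp only [QuotientGroup.mk_mul, QuotientGroup.mk_inv, coe_inv_eq hr, coe_inv_eq hu] at h ⊢
  rw [← h, ← mul_assoc]

/-! ### Geodesic words visit many points -/

/-- The word `w` has minimal length among all words with the same value modulo `N`. -/
def Geodesic (N : Subgroup FG) (w : Word) : Prop :=
  ∀ w' : Word, (FreeGroup.mk w' : FG ⧸ N) = (FreeGroup.mk w : FG ⧸ N) → w.length ≤ w'.length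

/-- A loop in `R` whose first letter `c` is also the letter following the loop can be shortened:
modulo `R²` the loop equals its inverse, and then the two letters `c` cancel. -/
lemma shorten {R : Subgroup FG} (α u v γ : Word) (c : Bool × Bool)
    (hu : FreeGroup.mk (c :: u) ∈ R) :
    (FreeGroup.mk (α ++ FreeGroup.invRev u ++ v ++ γ) : FG ⧸ sq R) =
      (FreeGroup.mk (α ++ (c :: u) ++ (c :: v) ++ γ) : FG ⧸ sq R) := by
  have e1 : ∀ x : Word, (FreeGroup.mk (c :: x) : FG) = FreeGroup.mk [c] * FreeGroup.mk x := by
    intro x; rw [FreeGroup.mul_mk]; rfl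
  have h := coe_inv_eq hu
  simp only [← FreeGroup.mul_mk, ← FreeGroup.inv_mk, QuotientGroup.mk_mul]
  rw [← h, e1 u, e1 v]
  simp only [QuotientGroup.mk_mul, QuotientGroup.mk_inv]
  group

lemma split_word (w : Word) {i j : ℕ} (hij : i < j) (hj : j < w.length) :
    ∃ u, w.take j = w.take i ++ w[i] :: u := by
  refine ⟨(w.take j).drop (i + 1), ?_⟩
  have h1 : w.take i = (w.take j).take i := by
    rw [List.take_take, min_eq_left hij.le]
  have h2 : w[i] = (w.take j)[i]'(by simp; omega) := by simp
  rw [h2, ← List.drop_eq_getElem_cons, h1, List.take_append_drop]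

/-- A geodesic modulo `R²` cannot leave a point of `FG ⧸ R` twice through the same letter, unless
the second time is at its very last letter. -/
lemma no_three {R : Subgroup FG} {w : Word} (hw : Geodesic (sq R) w)
    {i j k : ℕ} (hij : i < j) (hjk : j < k) (hk : k < w.length)
    (h1 : (FreeGroup.mk (w.take i) : FG ⧸ R) = (FreeGroup.mk (w.take j) : FG ⧸ R))
    (hc : w[i] = w[j]) : False := by
  obtain ⟨u, hu⟩ := split_word w hij (by omega)
  obtain ⟨v, hv⟩ := split_word w hjk hk
  have hw' : w = w.take i ++ (w[i] :: u) ++ (w[i] :: v) ++ w.drop k := by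
    conv_lhs => rw [← List.take_append_drop k w, hv, hu, ← hc]
  have hR : FreeGroup.mk (w[i] :: u) ∈ R := by
    rw [hu, ← FreeGroup.mul_mk, QuotientGroup.eq] at h1
    rwa [inv_mul_cancel_left] at h1
  have := hw _ ((shorten (w.take i) u v (w.drop k) w[i] hR).trans (by rw [← hw']))
  have hl := congrArg List.length hw'
  simp only [List.length_append, List.length_cons, FreeGroup.invRev_length] at this hl
  omega

lemma mem_zpowers_of_sq {Q : Type*} [Group Q] {s x : Q} (hs : s * s = 1)
    (hx : x ∈ Subgroup.zpowers s) : x = 1 ∨ x = s := by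
  obtain ⟨n, rfl⟩ := Subgroup.mem_zpowers_iff.1 hx
  rcases Int.even_or_odd' n with ⟨m, rfl | rfl⟩
  · left; rw [zpow_mul, zpow_two, hs, one_zpow]
  · right; rw [zpow_add, zpow_mul, zpow_two, hs, one_zpow]; simp

/-- A geodesic word of length `ℓ` modulo `R²` has at least `ℓ / 16` prefixes whose values modulo
`R` lie in pairwise distinct left cosets of the subgroup generated by the involution `a`. -/
lemma exists_positions {R : Subgroup FG} [R.Normal] (ha : ga * ga ∈ R) {w : Word}
    (hw : Geodesic (sq R) w) :
    ∃ e : Fin (w.length / 16) → ℕ, (∀ x, e x < w.length) ∧ ∀ x y, x ≠ y →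
      ((FreeGroup.mk (w.take (e x)) : FG ⧸ R)⁻¹ * (FreeGroup.mk (w.take (e y)) : FG ⧸ R)) ≠ 1 ∧
      ((FreeGroup.mk (w.take (e x)) : FG ⧸ R)⁻¹ * (FreeGroup.mk (w.take (e y)) : FG ⧸ R)) ≠
        (ga : FG ⧸ R) := by
  classical
  set s : FG ⧸ R := (ga : FG ⧸ R) with hs
  have hss : s * s = 1 := by
    rw [hs, ← QuotientGroup.mk_mul, QuotientGroup.eq_one_iff]; exact ha
  set p : ℕ → FG ⧸ R := fun i => (FreeGroup.mk (w.take i) : FG ⧸ R) with hp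
  let f : ℕ → (FG ⧸ R) ⧸ Subgroup.zpowers s := fun i => (p i : (FG ⧸ R) ⧸ Subgroup.zpowers s)
  have hfib : ∀ y ∈ (range w.length).image f, #{i ∈ range w.length | f i = y} ≤ 16 := by
    intro y hy
    obtain ⟨i₀, -, rfl⟩ := mem_image.1 hy
    by_contra hcon
    push Not at hcon
    let g : ℕ → Bool × Option (Bool × Bool) := fun i => (decide (p i = p i₀), w[i]?)
    have ht : ∀ i ∈ {i ∈ range w.length | f i = f i₀},
        g i ∈ (univ : Finset Bool) ×ˢ ((univ : Finset (Bool × Bool)).image some) := by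
      intro i hi
      simp only [mem_filter, Finset.mem_range] at hi
      simp [g, hi.1, em]
    obtain ⟨y, -, hy⟩ := exists_lt_card_fiber_of_mul_lt_card_of_maps_to (n := 2) ht (by
      refine lt_of_le_of_lt (le_of_eq ?_) hcon
      decide)
    obtain ⟨T, hT, hT3⟩ := Finset.exists_subset_card_eq (n := 3) hy
    let o := T.orderEmbOfFin hT3
    have ho : ∀ x, (o x < w.length ∧ f (o x) = f i₀) ∧ g (o x) = y := by
      intro x
      have := hT (T.orderEmbOfFin_mem hT3 x)
      simpa only [mem_filter, Finset.mem_range] using this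
    have hpos : ∀ x, p (o x) = p i₀ ∨ p (o x) = p i₀ * s := by
      intro x
      have h := (ho x).1.2
      have h' : (p i₀)⁻¹ * p (o x) ∈ Subgroup.zpowers s := QuotientGroup.eq.1 h.symm
      rcases mem_zpowers_of_sq hss h' with h | h
      · left; rw [inv_mul_eq_one] at h; exact h.symm
      · right; rw [← h]; group
    have hg : g (o 0) = g (o 1) := (ho 0).2.trans (ho 1).2.symm
    simp only [g, Prod.mk.injEq, decide_eq_decide] at hg
    have h01 : o 0 < o 1 := o.strictMono (by decide)
    have h12 : o 1 < o 2 := o.strictMono (by decide)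
    have hpe : p (o 0) = p (o 1) := by
      rcases hpos 0 with h0 | h0
      · rw [h0, hg.1.1 h0]
      · rcases hpos 1 with h1 | h1
        · rw [h1, hg.1.2 h1]
        · rw [h0, h1]
    refine no_three hw h01 h12 (ho 2).1.1 hpe ?_
    have := hg.2
    rw [List.getElem?_eq_getElem (ho 0).1.1, List.getElem?_eq_getElem (ho 1).1.1] at this
    exact Option.some.inj this
  have hcard := card_le_mul_card_image (range w.length) 16 hfib
  rw [card_range] at hcard
  obtain ⟨T, hT, hTc⟩ := Finset.exists_subset_card_eq
    (show w.length / 16 ≤ #((range w.length).image f) by omega)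
  have hpre : ∀ x : Fin (w.length / 16), ∃ i, i < w.length ∧
      f i = (T.equivFinOfCardEq hTc).symm x := by
    intro x
    have := hT ((T.equivFinOfCardEq hTc).symm x).2
    obtain ⟨i, hi, h⟩ := mem_image.1 this
    exact ⟨i, Finset.mem_range.1 hi, h⟩
  choose e he1 he2 using hpre
  refine ⟨e, he1, fun x y hxy => ?_⟩
  have hne : f (e x) ≠ f (e y) := by
    rw [he2, he2]
    intro h
    exact hxy ((T.equivFinOfCardEq hTc).symm.injective (Subtype.ext h))
  constructor
  · intro h
    apply hne
    exact QuotientGroup.eq.2 (by rw [show (p (e x))⁻¹ * p (e y) = 1 from h]; exact one_mem _)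
  · intro h
    apply hne
    exact QuotientGroup.eq.2 (by
      rw [show (p (e x))⁻¹ * p (e y) = s from h]; exact Subgroup.mem_zpowers s)

/-! ### Independent insertions -/

/-- The word obtained from `w` by inserting `κ` in front of the letter number `i` for every `i`
with `I i`. -/
noncomputable def ins (κ : Word) : Word → (ℕ → Prop) → Word
  | [], _ => []
  | c :: w, I => by
      classical exact (if I 0 then κ else []) ++ c :: ins κ w (fun i => I (i + 1))

open Classical in
lemma ins_length (κ w : Word) (I : ℕ → Prop) :
    (ins κ w I).length = w.length + κ.length * #{i ∈ range w.length | I i} := by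
  induction w generalizing I with
  | nil => simp [ins]
  | cons c w ih =>
    rw [ins, List.length_append, List.length_cons, ih, card_filter, card_filter, List.length_cons,
      sum_range_succ']
    by_cases h : I 0
    · simp only [h, if_true]; ring
    · simp only [h, if_false, List.length_nil]; ring

lemma ins_coe {N : Subgroup FG} [N.Normal] {κ : Word} (hκ : FreeGroup.mk κ ∈ N) (w : Word)
    (I : ℕ → Prop) : (FreeGroup.mk (ins κ w I) : FG ⧸ N) = (FreeGroup.mk w : FG ⧸ N) := by
  classical
  induction w generalizing I with
  | nil => rfl
  | cons c w ih =>
    have h1 : ((FreeGroup.mk (if I 0 then κ else []) : FG) : FG ⧸ N) = 1 := by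
      split_ifs
      · exact (QuotientGroup.eq_one_iff _).2 hκ
      · rfl
    have e1 : ∀ x : Word, (FreeGroup.mk (c :: x) : FG) = FreeGroup.mk [c] * FreeGroup.mk x := by
      intro x; rw [FreeGroup.mul_mk]; rfl
    rw [ins, ← FreeGroup.mul_mk, QuotientGroup.mk_mul, h1, one_mul, e1, QuotientGroup.mk_mul, ih,
      e1 w, QuotientGroup.mk_mul]

/-- The cyclic group of order two in which the lamps take their values. -/
abbrev C2 : Type := Multiplicative (ZMod 2)

lemma c2_mul_self (x : C2) : x * x = 1 := by
  revert x; decide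

open Classical in
/-- The indicator function of the identity. -/
noncomputable def delta {Q : Type*} [Group Q] : Q → C2 :=
  fun q => if q = 1 then Multiplicative.ofAdd 1 else 1

/-- The homomorphism to the wreath product `C₂ ≀ (FG ⧸ R)` under which a word records the value
modulo `R`, and the parity of the number of times its path crosses each `a`-edge of the Cayley
graph of `FG ⧸ R`. -/
noncomputable def lamp (R : Subgroup FG) [R.Normal] : FG →* C2 ≀ᵣ (FG ⧸ R) :=
  FreeGroup.lift fun t => ⟨if t then delta else 1, (FreeGroup.of t : FG ⧸ R)⟩

section
variable (R : Subgroup FG) [R.Normal]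

lemma lamp_right (x : FG) : (lamp R x).right = (x : FG ⧸ R) := by
  have : (RegularWreathProduct.rightHom).comp (lamp R) = QuotientGroup.mk' R := by
    ext t
    simp [lamp]
  exact DFunLike.congr_fun this x

lemma lamp_mul_left (x y : FG) (q : FG ⧸ R) :
    (lamp R (x * y)).left q = (lamp R x).left q * (lamp R y).left ((x : FG ⧸ R)⁻¹ * q) := by
  rw [map_mul, RegularWreathProduct.mul_left, Pi.mul_apply, lamp_right]

lemma sq_le_ker_lamp : sq R ≤ (lamp R).ker := by
  apply Subgroup.normalClosure_le_normal
  rintro w ⟨r, hr, rfl⟩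
  have hr1 : (r : FG ⧸ R) = 1 := (QuotientGroup.eq_one_iff _).2 hr
  change lamp R (r ^ 2) = 1
  ext q
  · rw [pow_two, lamp_mul_left, hr1, inv_one, one_mul, c2_mul_self]; rfl
  · rw [lamp_right, QuotientGroup.mk_pow, hr1, one_pow]; rfl

lemma lamp_eq_of_coe_eq {x y : FG} (h : (x : FG ⧸ sq R) = (y : FG ⧸ sq R)) :
    lamp R x = lamp R y := by
  have := sq_le_ker_lamp R (QuotientGroup.eq.1 h)
  rwa [MonoidHom.mem_ker, map_mul, map_inv, inv_mul_eq_one] at this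

lemma lamp_one_left (q : FG ⧸ R) : (lamp R 1).left q = 1 := by
  rw [map_one]; rfl

open Classical in
/-- Inserting a loop `κ` multiplies the lamp configuration by the translates of that of `κ` to the
insertion points. -/
lemma lamp_ins {κ : Word} (hκ : FreeGroup.mk κ ∈ R) (w : Word) (I : ℕ → Prop) (q : FG ⧸ R) :
    (lamp R (FreeGroup.mk (ins κ w I))).left q = (lamp R (FreeGroup.mk w)).left q *
      ∏ i ∈ range w.length, if I i then
        (lamp R (FreeGroup.mk κ)).left ((FreeGroup.mk (w.take i) : FG ⧸ R)⁻¹ * q) else 1 := by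
  induction w generalizing I q with
  | nil => simp [ins]
  | cons c w ih =>
    have h1 : ((FreeGroup.mk (if I 0 then κ else []) : FG) : FG ⧸ R) = 1 := by
      split_ifs
      · exact (QuotientGroup.eq_one_iff _).2 hκ
      · rfl
    have e1 : ∀ x : Word, (FreeGroup.mk (c :: x) : FG) = FreeGroup.mk [c] * FreeGroup.mk x := by
      intro x; rw [FreeGroup.mul_mk]; rfl
    rw [ins, ← FreeGroup.mul_mk, lamp_mul_left, h1, inv_one, one_mul, e1, lamp_mul_left, ih, e1 w,
      lamp_mul_left, List.length_cons, prod_range_succ']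
    have h2 : (lamp R (FreeGroup.mk (if I 0 then κ else []))).left q = if I 0 then
        (lamp R (FreeGroup.mk κ)).left ((FreeGroup.mk ((c :: w).take 0) : FG ⧸ R)⁻¹ * q) else 1 := by
      split_ifs with h
      · rw [List.take_zero, show ((FreeGroup.mk [] : FG) : FG ⧸ R) = 1 from rfl, inv_one, one_mul]
      · exact lamp_one_left R q
    rw [h2]
    have h3 : ∀ i, ((FreeGroup.mk ((c :: w).take (i + 1)) : FG) : FG ⧸ R)⁻¹ * q =
        (FreeGroup.mk (w.take i) : FG ⧸ R)⁻¹ * (((FreeGroup.mk [c] : FG) : FG ⧸ R)⁻¹ * q) := by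
      intro i
      rw [List.take_succ_cons, e1, QuotientGroup.mk_mul, mul_inv_rev, mul_assoc]
    simp only [h3]
    rw [mul_comm]
    simp only [mul_assoc]

/-- The loop that is inserted: trivial modulo `R'²` as soon as `r` and `a²` lie in `R'`. -/
def loop (r : FG) : FG := r * (ga * ga) * r⁻¹ * (ga * ga)⁻¹

lemma lamp_ga_sq_left (q : FG ⧸ R) :
    (lamp R (ga * ga)).left q = delta q * delta ((ga : FG ⧸ R)⁻¹ * q) := by
  rw [lamp_mul_left]
  simp [lamp, ga]

lemma lamp_loop_left (ha : ga * ga ∈ R) (r : FG) (q : FG ⧸ R) :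
    (lamp R (loop r)).left q =
      (lamp R (ga * ga)).left ((r : FG ⧸ R)⁻¹ * q) * (lamp R (ga * ga)).left q := by
  have hs : ((ga * ga : FG) : FG ⧸ R) = 1 := (QuotientGroup.eq_one_iff _).2 ha
  have hi : (lamp R r).left q * (lamp R r⁻¹).left ((r : FG ⧸ R)⁻¹ * q) = 1 := by
    rw [← lamp_mul_left, mul_inv_cancel, lamp_one_left]
  have hi2 : (lamp R (ga * ga)⁻¹).left q = (lamp R (ga * ga)).left q := by
    have : (lamp R (ga * ga)).left q * (lamp R (ga * ga)⁻¹).left q = 1 := by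
      have := lamp_mul_left R (ga * ga) (ga * ga)⁻¹ q
      rw [mul_inv_cancel, lamp_one_left, hs, inv_one, one_mul] at this
      exact this.symm
    exact mul_left_cancel (this.trans (c2_mul_self _).symm)
  have hr : ((r * (ga * ga) * r⁻¹ : FG) : FG ⧸ R)⁻¹ = 1 := by
    rw [QuotientGroup.mk_mul, QuotientGroup.mk_mul, hs]; simp
  have hr' : ((r * (ga * ga) : FG) : FG ⧸ R) = (r : FG ⧸ R) := by
    rw [QuotientGroup.mk_mul, hs, mul_one]
  rw [loop, lamp_mul_left, hr, one_mul, hi2, lamp_mul_left, lamp_mul_left, hr',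
    mul_right_comm ((lamp R r).left q), hi, one_mul]

end

lemma delta_ne {Q : Type*} [Group Q] {q : Q} (h : q ≠ 1) : delta q = 1 := if_neg h

lemma delta_one {Q : Type*} [Group Q] : delta (1 : Q) ≠ 1 := by
  rw [delta, if_pos rfl]; decide

section
variable {R R' : Subgroup FG} [R.Normal]

lemma lamp_loop_at_one (hRR : R ≤ R') (ha : ga * ga ∈ R) (ha' : ga ∉ R') {r : FG} (hr : r ∈ R')
    (hr' : r ∉ R) : (lamp R (loop r)).left 1 ≠ 1 := by
  rw [lamp_loop_left R ha, lamp_ga_sq_left, lamp_ga_sq_left, mul_one, mul_one]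
  have h1 : delta (r : FG ⧸ R)⁻¹ = 1 := delta_ne (by
    rw [Ne, inv_eq_one, QuotientGroup.eq_one_iff]; exact hr')
  have h2 : delta (ga : FG ⧸ R)⁻¹ = 1 := delta_ne (by
    rw [Ne, inv_eq_one, QuotientGroup.eq_one_iff]; exact fun h => ha' (hRR h))
  have h3 : delta ((ga : FG ⧸ R)⁻¹ * (r : FG ⧸ R)⁻¹) = 1 := delta_ne (by
    rw [← mul_inv_rev, Ne, inv_eq_one, ← QuotientGroup.mk_mul, QuotientGroup.eq_one_iff]
    intro h
    exact ha' ((Subgroup.mul_mem_cancel_left _ hr).1 (hRR h)))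
  rw [h1, h2, h3, one_mul, one_mul, mul_one]
  exact delta_one

lemma lamp_loop_support [R'.Normal] (hRR : R ≤ R') (ha : ga * ga ∈ R) {r : FG} (hr : r ∈ R') {x : FG}
    (h1 : (x : FG ⧸ R') ≠ 1) (h2 : (x : FG ⧸ R') ≠ ga) :
    (lamp R (loop r)).left (x : FG ⧸ R) = 1 := by
  have key : ∀ y : FG, (y : FG ⧸ R') = x → (lamp R (ga * ga)).left (y : FG ⧸ R) = 1 := by
    intro y hy
    rw [lamp_ga_sq_left, delta_ne, delta_ne, one_mul]
    · rw [Ne, inv_mul_eq_one, QuotientGroup.eq]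
      intro h
      exact h2 (hy ▸ (QuotientGroup.eq.2 (hRR h)).symm)
    · rw [Ne, QuotientGroup.eq_one_iff]
      intro h
      exact h1 (hy ▸ (QuotientGroup.eq_one_iff _).2 (hRR h))
  rw [lamp_loop_left R ha, key x rfl, ← QuotientGroup.mk_inv, ← QuotientGroup.mk_mul, key, one_mul]
  rw [QuotientGroup.mk_mul, (QuotientGroup.eq_one_iff _).2 (R'.inv_mem hr), one_mul]

/-- The subsets of a family of sufficiently separated insertion points are recovered from the
value of the resulting word modulo `R²`. -/
lemma insertion_injective [R'.Normal] (hRR : R ≤ R') (ha : ga * ga ∈ R) (ha' : ga ∉ R')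
    {r : FG} (hr : r ∈ R') (hr' : r ∉ R) {w : Word} {n : ℕ} {e : Fin n → ℕ} (he : ∀ x, e x < w.length)
    (hsep : ∀ x y, x ≠ y →
      ((FreeGroup.mk (w.take (e x)) : FG ⧸ R')⁻¹ * (FreeGroup.mk (w.take (e y)) : FG ⧸ R')) ≠ 1 ∧
      ((FreeGroup.mk (w.take (e x)) : FG ⧸ R')⁻¹ * (FreeGroup.mk (w.take (e y)) : FG ⧸ R')) ≠
        (ga : FG ⧸ R')) {I I' : Finset (Fin n)}
    (h : (FreeGroup.mk (ins (loop r).toWord w (fun i => ∃ x ∈ I, e x = i)) : FG ⧸ sq R) =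
      (FreeGroup.mk (ins (loop r).toWord w (fun i => ∃ x ∈ I', e x = i)) : FG ⧸ sq R)) :
    I = I' := by
  classical
  have hloop : FreeGroup.mk (loop r).toWord ∈ R := by
    rw [FreeGroup.mk_toWord, loop]
    exact R.mul_mem (Subgroup.Normal.conj_mem inferInstance _ ha r) (R.inv_mem ha)
  have hinj : ∀ x y, e x = e y → x = y := by
    intro x y hxy
    by_contra hne
    exact (hsep x y hne).1 (by rw [hxy, inv_mul_cancel])
  have key : ∀ (I : Finset (Fin n)) (x : Fin n),
      (∏ i ∈ range w.length, if (∃ y ∈ I, e y = i) then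
        (lamp R (FreeGroup.mk (loop r).toWord)).left ((FreeGroup.mk (w.take i) : FG ⧸ R)⁻¹ *
          (FreeGroup.mk (w.take (e x)) : FG ⧸ R)) else 1) =
      if x ∈ I then (lamp R (loop r)).left 1 else 1 := by
    intro I x
    rw [prod_eq_single (e x)]
    · rw [inv_mul_cancel, FreeGroup.mk_toWord]
      refine if_congr ⟨?_, fun hx => ⟨x, hx, rfl⟩⟩ rfl rfl
      rintro ⟨y, hy, hxy⟩
      exact hinj _ _ hxy ▸ hy
    · intro i _ hi
      split_ifs with hex
      · obtain ⟨y, hy, rfl⟩ := hex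
        have hyx : y ≠ x := fun h => hi (by rw [h])
        rw [FreeGroup.mk_toWord, ← QuotientGroup.mk_inv, ← QuotientGroup.mk_mul]
        exact lamp_loop_support hRR ha hr (hsep y x hyx).1 (hsep y x hyx).2
      · rfl
    · intro hx
      exact absurd (Finset.mem_range.2 (he x)) hx
  ext x
  have hl := congrFun (congrArg RegularWreathProduct.left (lamp_eq_of_coe_eq R h))
    (FreeGroup.mk (w.take (e x)) : FG ⧸ R)
  rw [lamp_ins R hloop, lamp_ins R hloop] at hl
  have hl : (if x ∈ I then (lamp R (loop r)).left 1 else 1) =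
      if x ∈ I' then (lamp R (loop r)).left 1 else 1 := by
    rw [← key, ← key]
    convert mul_left_cancel hl
  have h1 := lamp_loop_at_one hRR ha ha' hr hr'
  by_cases hx : x ∈ I <;> by_cases hx' : x ∈ I' <;> simp only [hx, hx', if_true, if_false] at hl ⊢
  · exact absurd hl h1
  · exact absurd hl.symm h1

end

/-! ### Counting -/

/-- The ball of radius `n` in `FG ⧸ N` with respect to the images of the free generators. -/
def wball (N : Subgroup FG) (n : ℕ) : Set (FG ⧸ N) :=
  {g | ∃ w : Word, w.length ≤ n ∧ (FreeGroup.mk w : FG ⧸ N) = g}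

lemma wball_finite (N : Subgroup FG) (n : ℕ) : (wball N n).Finite := by
  refine ((List.finite_length_le (Bool × Bool) n).image
    (fun w => (FreeGroup.mk w : FG ⧸ N))).subset ?_
  rintro g ⟨w, hw, rfl⟩
  exact ⟨w, hw, rfl⟩

lemma wball_pos (N : Subgroup FG) (n : ℕ) : 1 ≤ (wball N n).ncard := by
  rw [Nat.one_le_iff_ne_zero, Ne, Set.ncard_eq_zero (wball_finite N n)]
  exact Set.Nonempty.ne_empty ⟨_, [], Nat.zero_le _, rfl⟩

lemma wball_le (N : Subgroup FG) [N.Normal] (n : ℕ) : (wball N n).ncard ≤ 5 ^ n := by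
  induction n with
  | zero =>
    have : wball N 0 ⊆ {1} := by
      rintro g ⟨w, hw, rfl⟩
      rw [List.length_eq_zero_iff.1 (Nat.le_zero.1 hw)]
      rfl
    exact (Set.ncard_le_ncard this).trans (by simp)
  | succ n ih =>
    -- a word of length at most `n + 1` is either a letter or nothing, then at most `n` letters
    let f : Option (Bool × Bool) × (FG ⧸ N) → FG ⧸ N := fun x =>
      (x.1.elim 1 fun c => (FreeGroup.mk [c] : FG ⧸ N)) * x.2
    have hsub : wball N (n + 1) ⊆ f '' (Set.univ ×ˢ wball N n) := by
      rintro g ⟨w, hw, rfl⟩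
      cases w with
      | nil => exact ⟨(none, 1), ⟨trivial, [], Nat.zero_le _, rfl⟩, by simp [f]; rfl⟩
      | cons c w =>
        refine ⟨(some c, (FreeGroup.mk w : FG ⧸ N)), ⟨trivial, w, ?_, rfl⟩, ?_⟩
        · simpa using hw
        · simp only [f, Option.elim]
          rw [← QuotientGroup.mk_mul, FreeGroup.mul_mk]; rfl
    have hfin : (Set.univ ×ˢ wball N n : Set (Option (Bool × Bool) × (FG ⧸ N))).Finite :=
      Set.finite_univ.prod (wball_finite N n)
    calc (wball N (n + 1)).ncard ≤ (f '' (Set.univ ×ˢ wball N n)).ncard :=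
          Set.ncard_le_ncard hsub (hfin.image f)
      _ ≤ (Set.univ ×ˢ wball N n : Set (Option (Bool × Bool) × (FG ⧸ N))).ncard :=
          Set.ncard_image_le hfin
      _ = 5 * (wball N n).ncard := by
          rw [Set.ncard_prod, Set.ncard_univ, Nat.card_eq_fintype_card]; rfl
      _ ≤ 5 * 5 ^ n := Nat.mul_le_mul_left _ ih
      _ = 5 ^ (n + 1) := by ring

lemma exists_geodesic (N : Subgroup FG) (g : FG ⧸ N) :
    ∃ w : Word, (FreeGroup.mk w : FG ⧸ N) = g ∧ Geodesic N w := by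
  have hne : ({w : Word | (FreeGroup.mk w : FG ⧸ N) = g}).Nonempty := by
    obtain ⟨x, rfl⟩ := QuotientGroup.mk_surjective g
    exact ⟨x.toWord, congrArg _ FreeGroup.mk_toWord⟩
  obtain ⟨w, hw, hmin⟩ := (measure (List.length : Word → ℕ)).wf.has_min _ hne
  exact ⟨w, hw, fun w' hw' => not_lt.1 (hmin w' (hw'.trans hw))⟩

/-- A chosen geodesic word for an element of `FG ⧸ N`. -/
noncomputable def geo (N : Subgroup FG) (g : FG ⧸ N) : Word := (exists_geodesic N g).choose

lemma geo_coe (N : Subgroup FG) (g : FG ⧸ N) : (FreeGroup.mk (geo N g) : FG ⧸ N) = g :=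
  (exists_geodesic N g).choose_spec.1

lemma geo_geodesic (N : Subgroup FG) (g : FG ⧸ N) : Geodesic N (geo N g) :=
  (exists_geodesic N g).choose_spec.2

/-- The sphere of radius `n` in `FG ⧸ N`. -/
def sphere (N : Subgroup FG) (n : ℕ) : Set (FG ⧸ N) := {g | (geo N g).length = n}

lemma mem_wball_iff {N : Subgroup FG} {n : ℕ} {g : FG ⧸ N} :
    g ∈ wball N n ↔ (geo N g).length ≤ n := by
  constructor
  · rintro ⟨w, hw, rfl⟩
    exact (geo_geodesic N _ w (geo_coe N _).symm).trans hw
  · intro h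
    exact ⟨geo N g, h, geo_coe N g⟩

lemma sphere_finite (N : Subgroup FG) (n : ℕ) : (sphere N n).Finite :=
  (wball_finite N n).subset fun _ hg => mem_wball_iff.2 (le_of_eq hg)

lemma wball_eq_sum (N : Subgroup FG) (n : ℕ) :
    (wball N n).ncard = ∑ l ∈ range (n + 1), (sphere N l).ncard := by
  classical
  rw [Set.ncard_eq_toFinset_card _ (wball_finite N n),
    card_eq_sum_card_fiberwise (f := fun g => (geo N g).length) (t := range (n + 1))]
  · refine sum_congr rfl fun l hl => ?_
    rw [Set.ncard_eq_toFinset_card _ (sphere_finite N l)]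
    congr 1
    ext g
    simp only [mem_filter, Set.Finite.mem_toFinset, mem_wball_iff, sphere, Set.mem_ofPred_eq,
      and_iff_right_iff_imp]
    intro h
    rw [h]
    have := Finset.mem_range.1 hl
    omega
  · intro g hg
    have : (geo N g).length ≤ n := mem_wball_iff.1 (by simpa using hg)
    simpa using Nat.lt_succ_of_le this

/-- Every element of length `l` modulo `R'²` has many preimages of controlled length modulo `R²`:
insert a loop which is trivial modulo `R'²` at `m` out of `l / 16` separated points of a
geodesic. -/
lemma sphere_mul_choose_le {R R' : Subgroup FG} [R.Normal] [R'.Normal] (hRR : R ≤ R')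
    (ha : ga * ga ∈ R) (ha' : ga ∉ R') {r : FG} (hr : r ∈ R') (hr' : r ∉ R) (l m : ℕ) :
    (sphere (sq R') l).ncard * (l / 16).choose m ≤
      (wball (sq R) (l + (loop r).toWord.length * m)).ncard := by
  classical
  have hex : ∀ g : FG ⧸ sq R', ∃ e : Fin (l / 16) → ℕ, g ∈ sphere (sq R') l →
      (∀ x, e x < (geo (sq R') g).length) ∧ ∀ x y, x ≠ y →
      ((FreeGroup.mk ((geo (sq R') g).take (e x)) : FG ⧸ R')⁻¹ *
        (FreeGroup.mk ((geo (sq R') g).take (e y)) : FG ⧸ R')) ≠ 1 ∧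
      ((FreeGroup.mk ((geo (sq R') g).take (e x)) : FG ⧸ R')⁻¹ *
        (FreeGroup.mk ((geo (sq R') g).take (e y)) : FG ⧸ R')) ≠ (ga : FG ⧸ R') := by
    intro g
    by_cases hg : (geo (sq R') g).length = l
    · subst hg
      obtain ⟨e, he⟩ := exists_positions (hRR ha) (geo_geodesic (sq R') g)
      exact ⟨e, fun _ => he⟩
    · exact ⟨fun _ => 0, fun h => absurd h hg⟩
  choose e he using hex
  have hκ : FreeGroup.mk (loop r).toWord ∈ sq R' := by
    rw [FreeGroup.mk_toWord]
    exact commutator_mem_sq hr (hRR ha)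
  let word : (FG ⧸ sq R') × Finset (Fin (l / 16)) → Word := fun x =>
    ins (loop r).toWord (geo (sq R') x.1) (fun i => ∃ y ∈ x.2, e x.1 y = i)
  have hval : ∀ x, (FreeGroup.mk (word x) : FG ⧸ sq R') = x.1 := fun x =>
    (ins_coe hκ _ _).trans (geo_coe _ _)
  rw [Set.ncard_eq_toFinset_card _ (sphere_finite _ l),
    Set.ncard_eq_toFinset_card _ (wball_finite _ _)]
  have hc : (l / 16).choose m = #(powersetCard m (univ : Finset (Fin (l / 16)))) := by simp
  rw [hc, ← card_product]
  apply card_le_card_of_injOn (fun x => (FreeGroup.mk (word x) : FG ⧸ sq R))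
  · rintro ⟨g, I⟩ hx
    simp only [coe_product, Set.mem_prod, mem_coe, Set.Finite.mem_toFinset, mem_powersetCard] at hx
    simp only [Set.Finite.coe_toFinset]
    refine ⟨word (g, I), ?_, rfl⟩
    rw [ins_length, show (geo (sq R') g).length = l from hx.1]
    refine Nat.add_le_add_left (Nat.mul_le_mul_left _ ?_) _
    rw [← hx.2.2]
    refine le_trans (card_le_card ?_) (card_image_le (s := I) (f := e g))
    intro i hi
    simp only [mem_filter] at hi
    obtain ⟨-, y, hy, rfl⟩ := hi
    exact mem_image_of_mem _ hy
  · rintro ⟨g, I⟩ hx ⟨g', I'⟩ hx' h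
    simp only [coe_product, Set.mem_prod, mem_coe, Set.Finite.mem_toFinset] at hx hx'
    have hgg : g = g' := by
      have h' := QuotientGroup.eq.2 (sq_mono hRR (QuotientGroup.eq.1 h))
      rw [hval, hval] at h'
      exact h'
    subst hgg
    have := insertion_injective hRR ha ha' hr hr' (he g hx.1).1 (he g hx.1).2 h
    exact Prod.ext rfl this

lemma mk_replicate (k : ℕ) : FreeGroup.mk (List.replicate k (false, true)) = gb ^ k := by
  induction k with
  | zero => rfl
  | succ k ih =>
    rw [pow_succ', ← ih, List.replicate_succ, gb, FreeGroup.of, FreeGroup.mul_mk]; rfl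

lemma lt_wball {N : Subgroup FG} [N.Normal] (hb : ∀ k : ℕ, gb ^ k ∈ N → k = 0) (n : ℕ) :
    n < (wball N n).ncard := by
  classical
  rw [Set.ncard_eq_toFinset_card _ (wball_finite _ _), ← Nat.succ_le_iff, ← card_range n.succ]
  apply card_le_card_of_injOn (fun k => ((gb ^ k : FG) : FG ⧸ N))
  · intro k hk
    simp only [coe_range, Set.mem_Iio] at hk
    simp only [Set.Finite.coe_toFinset]
    exact ⟨List.replicate k (false, true), by simpa using Nat.le_of_lt_succ hk, by rw [mk_replicate]⟩
  · have key : ∀ i j : ℕ, i ≤ j → ((gb ^ i : FG) : FG ⧸ N) = ((gb ^ j : FG) : FG ⧸ N) → i = j := by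
      intro i j hij h
      obtain ⟨d, rfl⟩ := Nat.exists_eq_add_of_le hij
      rw [QuotientGroup.eq, pow_add, inv_mul_cancel_left] at h
      rw [hb d h, add_zero]
    intro i _ j _ h
    rcases le_total i j with hij | hij
    · exact key i j hij h
    · exact (key j i hij h.symm).symm

/-! ### Comparison of exponential rates -/

open Filter Topology

/-- The upper exponential rate of a sequence of natural numbers. -/
noncomputable def rate (b : ℕ → ℕ) : ℝ :=
  limsup (fun n : ℕ => (b n : ℝ) ^ ((1 : ℝ) / n)) atTop

section
variable {b : ℕ → ℕ}

lemma one_le_root (h1 : ∀ n, 1 ≤ b n) (n : ℕ) : 1 ≤ (b n : ℝ) ^ ((1 : ℝ) / n) :=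
  Real.one_le_rpow (by exact_mod_cast h1 n) (by positivity)

lemma root_le_of_le_pow {n : ℕ} (hn : n ≠ 0) {x : ℝ} (hx : 0 ≤ x) (h : (b n : ℝ) ≤ x ^ n) :
    (b n : ℝ) ^ ((1 : ℝ) / n) ≤ x := by
  calc (b n : ℝ) ^ ((1 : ℝ) / n) ≤ (x ^ n) ^ ((1 : ℝ) / n) :=
        Real.rpow_le_rpow (by positivity) h (by positivity)
    _ = x := by rw [one_div, Real.pow_rpow_inv_natCast hx hn]

lemma root_le (h5 : ∀ n, b n ≤ 5 ^ n) (n : ℕ) : (b n : ℝ) ^ ((1 : ℝ) / n) ≤ 5 := by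
  rcases eq_or_ne n 0 with rfl | hn
  · norm_num
  · exact root_le_of_le_pow hn (by norm_num) (by exact_mod_cast h5 n)

lemma root_bdd (h5 : ∀ n, b n ≤ 5 ^ n) :
    IsBoundedUnder (· ≤ ·) atTop (fun n : ℕ => (b n : ℝ) ^ ((1 : ℝ) / n)) :=
  isBoundedUnder_of ⟨5, root_le h5⟩

lemma root_cobdd (h1 : ∀ n, 1 ≤ b n) :
    IsCoboundedUnder (· ≤ ·) atTop (fun n : ℕ => (b n : ℝ) ^ ((1 : ℝ) / n)) :=
  (isBoundedUnder_of ⟨1, one_le_root h1⟩ :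
    IsBoundedUnder (· ≥ ·) atTop (fun n : ℕ => (b n : ℝ) ^ ((1 : ℝ) / n))).isCoboundedUnder_le

lemma one_le_rate (h1 : ∀ n, 1 ≤ b n) (h5 : ∀ n, b n ≤ 5 ^ n) : 1 ≤ rate b :=
  le_limsup_of_frequently_le (Frequently.of_forall (one_le_root h1)) (root_bdd h5)

lemma rate_le_five (h1 : ∀ n, 1 ≤ b n) (h5 : ∀ n, b n ≤ 5 ^ n) : rate b ≤ 5 :=
  limsup_le_of_le (root_cobdd h1) (Eventually.of_forall (root_le h5))

lemma exists_bound_of_rate_lt (h5 : ∀ n, b n ≤ 5 ^ n) {ν : ℝ} (hν : 1 ≤ ν) (h : rate b < ν) :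
    ∃ K : ℝ, 0 ≤ K ∧ ∀ n, (b n : ℝ) ≤ K * ν ^ n := by
  have hev := eventually_lt_of_limsup_lt h (root_bdd h5)
  obtain ⟨N, hN⟩ := eventually_atTop.1 hev
  refine ⟨1 + ∑ i ∈ range (N + 1), (b i : ℝ), by positivity, fun n => ?_⟩
  have hS : 0 ≤ ∑ i ∈ range (N + 1), (b i : ℝ) := by positivity
  have hp : 1 ≤ ν ^ n := one_le_pow₀ hν
  rcases lt_or_ge N n with hn | hn
  · have hn0 : n ≠ 0 := by omega
    have hb : (b n : ℝ) ≤ ν ^ n := by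
      calc (b n : ℝ) = ((b n : ℝ) ^ ((1 : ℝ) / n)) ^ n := by
            rw [one_div, Real.rpow_inv_natCast_pow (by positivity) hn0]
        _ ≤ ν ^ n := pow_le_pow_left₀ (by positivity) (hN n hn.le).le n
    nlinarith
  · have : (b n : ℝ) ≤ ∑ i ∈ range (N + 1), (b i : ℝ) :=
      single_le_sum (f := fun i => (b i : ℝ)) (fun i _ => by positivity)
        (Finset.mem_range.2 (by omega))
    nlinarith

lemma rate_le_of_bound (h1 : ∀ n, 1 ≤ b n) {K θ : ℝ} (hK : 0 ≤ K) (hθ : 0 < θ)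
    (h : ∀ n, (b n : ℝ) ≤ K * ((n : ℝ) + 1) ^ 2 * θ ^ n) : rate b ≤ θ := by
  refine le_of_forall_gt_imp_ge_of_dense fun θ' hθ' => ?_
  apply limsup_le_of_le (root_cobdd h1)
  have hθ'0 : 0 < θ' := hθ.trans hθ'
  have hlim : Tendsto (fun n : ℕ => (n : ℝ) ^ 2 * (θ / θ') ^ n) atTop (𝓝 0) :=
    tendsto_pow_const_mul_const_pow_of_abs_lt_one 2 (by
      rw [abs_of_pos (by positivity), div_lt_one hθ'0]; exact hθ')
  have hev := (hlim.const_mul (4 * K)).eventually (gt_mem_nhds (show 4 * K * 0 < 1 by norm_num))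
  filter_upwards [hev, eventually_ge_atTop 1] with n hn hn1
  apply root_le_of_le_pow (by omega) hθ'0.le
  refine (h n).trans ?_
  have hn1' : (1 : ℝ) ≤ n := by exact_mod_cast hn1
  have h4 : ((n : ℝ) + 1) ^ 2 ≤ 4 * (n : ℝ) ^ 2 := by nlinarith
  calc K * ((n : ℝ) + 1) ^ 2 * θ ^ n ≤ K * (4 * (n : ℝ) ^ 2) * θ ^ n := by gcongr
    _ = 4 * K * ((n : ℝ) ^ 2 * (θ / θ') ^ n) * θ' ^ n := by
        rw [div_pow]; field_simp
    _ ≤ 1 * θ' ^ n := by gcongr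
    _ = θ' ^ n := one_mul _

end

/-- If `b₂` is the summatory function of `s`, and each of the `s l` elements has at least
`(l / 16).choose m` preimages in the ball of size `b₁ (l + L * m)`, then `b₁` has a strictly larger
exponential rate. Weighting the preimages by `ν ^ (-L m)` and summing over `m` gives
`s l * (1 + ν ^ (-L)) ^ (l / 16) ≤ C * (l + 1) * ν ^ l` for every `ν > rate b₁`. -/
lemma rate_lt_rate {b₁ b₂ s : ℕ → ℕ} (L : ℕ) (h1 : ∀ n, 1 ≤ b₂ n)
    (h5 : ∀ n, b₁ n ≤ 5 ^ n) (hb5 : ∀ n, b₂ n ≤ 5 ^ n)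
    (hsum : ∀ n, b₂ n = ∑ l ∈ range (n + 1), s l) (hinf : ∀ n, n < b₂ n)
    (hch : ∀ l m, s l * (l / 16).choose m ≤ b₁ (l + L * m)) : rate b₂ < rate b₁ := by
  by_contra hcon
  push Not at hcon
  set v := rate b₂ with hv
  have hv1 : 1 ≤ v := one_le_rate h1 hb5
  have hv5 : v ≤ 5 := rate_le_five h1 hb5
  -- `6` bounds the exponents `ν` used below
  set A : ℝ := 1 + ((6 : ℝ) ^ L)⁻¹ with hA
  have hA1 : 1 < A := by
    have : (0 : ℝ) < ((6 : ℝ) ^ L)⁻¹ := by positivity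
    linarith
  set η : ℝ := A ^ ((1 : ℝ) / 16) with hη
  have hη1 : 1 < η := Real.one_lt_rpow hA1 (by norm_num)
  have hη16 : η ^ 16 = A := by
    rw [hη, ← Real.rpow_natCast, ← Real.rpow_mul (by linarith)]
    norm_num
  obtain ⟨ν, hν1, hν2⟩ := exists_between (show v < min (v * η) 6 by
    rw [lt_min_iff]; constructor <;> nlinarith)
  have hνη : ν < v * η := hν2.trans_le (min_le_left _ _)
  have hν6 : ν ≤ 6 := (hν2.trans_le (min_le_right _ _)).le
  have hν0 : 0 < ν := by linarith
  obtain ⟨K, hK, hb⟩ := exists_bound_of_rate_lt h5 (by linarith) (hcon.trans_lt hν1)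
  set θ := ν / η with hθ
  have hη0 : 0 < η := by linarith
  have hθ0 : 0 < θ := by positivity
  have hθv : θ < v := by rw [hθ, div_lt_iff₀ hη0]; exact hνη
  have hs : ∀ l, (s l : ℝ) ≤ K * A * ((l : ℝ) + 1) * θ ^ l := by
    intro l
    set j := l / 16 with hj
    set z := (ν ^ L)⁻¹ with hz
    have hz0 : 0 < z := by positivity
    have hAz : A ≤ 1 + z := by
      rw [hA, hz]; gcongr
    have e1 : (s l : ℝ) * (1 + z) ^ j ≤ ((j : ℝ) + 1) * (K * ν ^ l) := by
      rw [add_comm, add_pow, mul_sum]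
      have : ∀ m ∈ range (j + 1),
          (s l : ℝ) * (z ^ m * 1 ^ (j - m) * (j.choose m : ℝ)) ≤ K * ν ^ l := by
        intro m _
        have h2 : (s l : ℝ) * (j.choose m : ℝ) ≤ K * ν ^ (l + L * m) := by
          refine le_trans ?_ (hb _)
          exact_mod_cast hch l m
        calc (s l : ℝ) * (z ^ m * 1 ^ (j - m) * (j.choose m : ℝ))
            = (s l : ℝ) * (j.choose m : ℝ) * z ^ m := by rw [one_pow]; ring
          _ ≤ K * ν ^ (l + L * m) * z ^ m := by gcongr
          _ = K * ν ^ l := by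
              rw [hz, pow_add, pow_mul, inv_pow]; field_simp
      refine (sum_le_sum this).trans ?_
      rw [sum_const, card_range, nsmul_eq_mul]
      push_cast
      exact le_rfl
    have hjl : (j : ℝ) ≤ l := by exact_mod_cast Nat.div_le_self l 16
    have e2 : η ^ l ≤ A * (1 + z) ^ j := by
      calc η ^ l ≤ η ^ (16 * (j + 1)) := pow_le_pow_right₀ hη1.le (by omega)
        _ = A * A ^ j := by rw [pow_mul, hη16, pow_succ']
        _ ≤ A * (1 + z) ^ j := by gcongr
    have e3 : (s l : ℝ) * η ^ l ≤ K * A * ((l : ℝ) + 1) * ν ^ l := by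
      calc (s l : ℝ) * η ^ l ≤ (s l : ℝ) * (A * (1 + z) ^ j) := by gcongr
        _ = A * ((s l : ℝ) * (1 + z) ^ j) := by ring
        _ ≤ A * (((j : ℝ) + 1) * (K * ν ^ l)) := by gcongr
        _ ≤ A * (((l : ℝ) + 1) * (K * ν ^ l)) := by gcongr
        _ = _ := by ring
    rw [hθ, div_pow, ← mul_div_assoc, le_div_iff₀ (by positivity)]
    exact e3
  have hb2 : ∀ n, (b₂ n : ℝ) = ∑ l ∈ range (n + 1), (s l : ℝ) := by
    intro n; rw [hsum]; push_cast; rfl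
  have hKA : 0 ≤ K * A := by positivity
  rcases lt_or_ge θ 1 with hθ1 | hθ1
  · -- the spheres would be summable, contradicting that `b₂` is unbounded
    have hsm : Summable (fun l : ℕ => K * A * ((l : ℝ) + 1) * θ ^ l) := by
      have s1 : Summable (fun l : ℕ => (l : ℝ) ^ 1 * θ ^ l) :=
        summable_pow_mul_geometric_of_norm_lt_one 1 (by
          rw [Real.norm_eq_abs, abs_of_pos hθ0]; exact hθ1)
      have s2 : Summable (fun l : ℕ => θ ^ l) := summable_geometric_of_lt_one hθ0.le hθ1
      refine ((s1.add s2).mul_left (K * A)).congr fun l => ?_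
      ring
    obtain ⟨n, hn⟩ := exists_nat_gt (∑' l : ℕ, K * A * ((l : ℝ) + 1) * θ ^ l)
    have hle : (b₂ n : ℝ) ≤ ∑' l : ℕ, K * A * ((l : ℝ) + 1) * θ ^ l := by
      rw [hb2]
      exact (sum_le_sum fun l _ => hs l).trans
        (hsm.sum_le_tsum _ fun l _ => by positivity)
    have : (n : ℝ) < b₂ n := by exact_mod_cast hinf n
    linarith
  · have : v ≤ θ := by
      apply rate_le_of_bound h1 hKA hθ0
      intro n
      rw [hb2]
      have : ∀ l ∈ range (n + 1), (s l : ℝ) ≤ K * A * ((n : ℝ) + 1) * θ ^ n := by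
        intro l hl
        have hl' : l ≤ n := Nat.le_of_lt_succ (Finset.mem_range.1 hl)
        have hl'' : (l : ℝ) ≤ n := by exact_mod_cast hl'
        refine (hs l).trans ?_
        have := pow_le_pow_right₀ hθ1 hl'
        gcongr
      refine (sum_le_sum this).trans (le_of_eq ?_)
      rw [sum_const, card_range, nsmul_eq_mul]
      push_cast
      ring
    linarith

/-! ### Growth rates of the quotients -/

/-- Enlarging `R` to `R'` strictly decreases the growth rate of `FG ⧸ R²`. -/
lemma rate_wball_lt {R R' : Subgroup FG} [R.Normal] [R'.Normal] (hRR : R ≤ R')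
    (ha : ga * ga ∈ R) (ha' : ga ∉ R') {r : FG} (hr : r ∈ R') (hr' : r ∉ R)
    (hb : ∀ k : ℕ, gb ^ k ∈ R' → k = 0) :
    rate (fun n => (wball (sq R') n).ncard) < rate (fun n => (wball (sq R) n).ncard) :=
  rate_lt_rate (s := fun l => (sphere (sq R') l).ncard) (loop r).toWord.length
    (wball_pos _) (wball_le _) (wball_le _) (wball_eq_sum _)
    (lt_wball fun k hk => hb k (sq_le R' hk)) (sphere_mul_choose_le hRR ha ha' hr hr')

/-- The images of the two free generators in `FG ⧸ N`. -/
noncomputable def gens (N : Subgroup FG) : Finset (FG ⧸ N) := by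
  classical exact {(ga : FG ⧸ N), (gb : FG ⧸ N)}

lemma coe_gens (N : Subgroup FG) : (gens N : Set (FG ⧸ N)) = {(ga : FG ⧸ N), (gb : FG ⧸ N)} := by
  simp [gens]

lemma card_gens {N : Subgroup FG} (h : (ga : FG ⧸ N) ≠ gb) : (gens N).card = 2 := by
  classical
  rw [gens]
  convert card_pair h

lemma closure_gens (N : Subgroup FG) [N.Normal] :
    Subgroup.closure (gens N : Set (FG ⧸ N)) = ⊤ := by
  have h := congrArg (Subgroup.map (QuotientGroup.mk' N)) (FreeGroup.closure_range_of Bool)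
  rw [MonoidHom.map_closure, Subgroup.map_top_of_surjective _ (QuotientGroup.mk'_surjective N)] at h
  rw [← h, coe_gens]
  congr 1
  ext x
  simp only [Set.mem_insert_iff, Set.mem_singleton_iff, Set.mem_image, Set.mem_range,
    Bool.exists_bool, QuotientGroup.mk'_apply, ga, gb]
  aesop

lemma ball_gens (N : Subgroup FG) [N.Normal] (n : ℕ) :
    ball (gens N : Set (FG ⧸ N)) n = wball N n := by
  rw [coe_gens]
  ext g
  constructor
  · rintro ⟨w, hw, hn, rfl⟩
    suffices ∃ u : Word, u.length = w.length ∧ (FreeGroup.mk u : FG ⧸ N) = w.prod by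
      obtain ⟨u, hu, he⟩ := this
      exact ⟨u, hu.trans_le hn, he⟩
    clear hn
    induction w with
    | nil => exact ⟨[], rfl, rfl⟩
    | cons x w ih =>
      obtain ⟨u, hu, he⟩ := ih fun y hy => hw y (List.mem_cons_of_mem _ hy)
      have hx : ∃ c : Bool × Bool, (FreeGroup.mk [c] : FG ⧸ N) = x := by
        rcases hw x List.mem_cons_self with (h | h) | (h | h)
        · exact ⟨(true, true), h.symm⟩
        · exact ⟨(false, true), h.symm⟩
        · refine ⟨(true, false), ?_⟩
          rw [← inv_inv x, h]; rfl
        · refine ⟨(false, false), ?_⟩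
          rw [← inv_inv x, h]; rfl
      obtain ⟨c, rfl⟩ := hx
      refine ⟨c :: u, by simp [hu], ?_⟩
      rw [List.prod_cons, ← he, ← QuotientGroup.mk_mul, FreeGroup.mul_mk]
      rfl
  · rintro ⟨u, hu, rfl⟩
    refine ⟨u.map fun c => (FreeGroup.mk [c] : FG ⧸ N), ?_, by simpa using hu, ?_⟩
    · intro x hx
      obtain ⟨⟨c, d⟩, -, rfl⟩ := List.mem_map.1 hx
      cases c <;> cases d
      · exact Or.inr (Or.inr rfl)
      · exact Or.inl (Or.inr rfl)
      · exact Or.inr (Or.inl rfl)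
      · exact Or.inl (Or.inl rfl)
    · clear hu
      induction u with
      | nil => rfl
      | cons c u ih =>
        rw [List.map_cons, List.prod_cons, ih, ← QuotientGroup.mk_mul, FreeGroup.mul_mk]
        rfl

lemma growthRate_gens (N : Subgroup FG) [N.Normal] :
    growthRate (gens N : Set (FG ⧸ N)) = rate (fun n => (wball N n).ncard) := by
  simp only [growthRate, rate, ball_gens, Nat.card_coe_set_eq]

/-! ### Permutation representations -/

/-- The action of the free group on `ℤ/n` (on `ℤ` for `n = 0`) where `a` transposes `0` and `1`
and `b` is the translation by `1`. -/
def rho (n : ℕ) : FG →* Equiv.Perm (ZMod n) :=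
  FreeGroup.lift fun c => cond c (Equiv.swap 0 1) (Equiv.addRight 1)

/-- The normal subgroup of elements acting trivially on `ℤ/n` for all `n ∈ A`. -/
def RA (A : Set ℕ) : Subgroup FG := (MonoidHom.pi fun n : A => rho n).ker

instance (A : Set ℕ) : (RA A).Normal := MonoidHom.normal_ker _

/-- The commutator of `a` with its conjugate by `b ^ m`, where `m = 3 p + 1`. It acts on `ℤ/n` as
the commutator of the transpositions `(0 1)` and `(m m+1)`. -/
def comm (p : ℕ) : FG :=
  ga * (gb ^ (3 * p + 1) * ga * (gb ^ (3 * p + 1))⁻¹) *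
    ga⁻¹ * (gb ^ (3 * p + 1) * ga * (gb ^ (3 * p + 1))⁻¹)⁻¹

lemma mem_RA {A : Set ℕ} {w : FG} : w ∈ RA A ↔ ∀ n ∈ A, rho n w = 1 := by
  simp [RA, MonoidHom.mem_ker, funext_iff]

lemma RA_anti {A B : Set ℕ} (h : A ⊆ B) : RA B ≤ RA A := fun _ hw =>
  mem_RA.2 fun n hn => mem_RA.1 hw n (h hn)

lemma rho_ga (n : ℕ) : rho n ga = Equiv.swap 0 1 := by simp [rho, ga]

lemma rho_gb (n : ℕ) : rho n gb = Equiv.addRight 1 := by simp [rho, gb]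

lemma rho_gb_pow (n k : ℕ) (x : ZMod n) : rho n (gb ^ k) x = x + k := by
  induction k with
  | zero => simp
  | succ k ih =>
    rw [pow_succ', map_mul, Equiv.Perm.mul_apply, ih, rho_gb]
    simp [add_assoc]

lemma ga_sq_mem (A : Set ℕ) : ga * ga ∈ RA A :=
  mem_RA.2 fun n _ => by rw [map_mul, rho_ga, Equiv.swap_mul_self]

lemma ga_not_mem {A : Set ℕ} (h0 : 0 ∈ A) : ga ∉ RA A := fun h => by
  have h1 := mem_RA.1 h 0 h0
  rw [rho_ga] at h1
  have h2 := DFunLike.congr_fun h1 (0 : ZMod 0)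
  rw [Equiv.swap_apply_left] at h2
  exact absurd h2 (by decide)

lemma gb_pow_mem {A : Set ℕ} (h0 : 0 ∈ A) (k : ℕ) (h : gb ^ k ∈ RA A) : k = 0 := by
  have h1 := DFunLike.congr_fun (mem_RA.1 h 0 h0) (0 : ZMod 0)
  rw [rho_gb_pow, zero_add, Equiv.Perm.one_apply, ZMod.natCast_eq_zero_iff] at h1
  exact Nat.eq_zero_of_zero_dvd h1

lemma ga_ne_gb {A : Set ℕ} (h0 : 0 ∈ A) : (ga : FG ⧸ sq (RA A)) ≠ gb := fun h => by
  have h1 := mem_RA.1 (sq_le _ (QuotientGroup.eq.1 h)) 0 h0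
  rw [map_mul, map_inv, inv_mul_eq_one, rho_ga, rho_gb] at h1
  have h2 := DFunLike.congr_fun h1 (1 : ZMod 0)
  rw [Equiv.swap_apply_right] at h2
  exact absurd h2 (by decide)

lemma rho_comm (n p : ℕ) : rho n (comm p) =
    Equiv.swap ((0 : ℕ) : ZMod n) (1 : ℕ) *
      Equiv.swap ((3 * p + 1 : ℕ) : ZMod n) ((3 * p + 2 : ℕ) : ZMod n) *
      Equiv.swap ((0 : ℕ) : ZMod n) (1 : ℕ) *
      Equiv.swap ((3 * p + 1 : ℕ) : ZMod n) ((3 * p + 2 : ℕ) : ZMod n) := by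
  have h : rho n (gb ^ (3 * p + 1) * ga * (gb ^ (3 * p + 1))⁻¹) =
      Equiv.swap ((3 * p + 1 : ℕ) : ZMod n) ((3 * p + 2 : ℕ) : ZMod n) := by
    rw [map_mul, map_mul, map_inv, rho_ga, ← Equiv.swap_apply_apply, rho_gb_pow, rho_gb_pow]
    congr 1
    · push_cast; ring
    · push_cast; ring
  rw [comm, map_mul, map_mul, map_mul, map_inv, map_inv, h, rho_ga, Equiv.swap_inv,
    Equiv.swap_inv, Nat.cast_zero, Nat.cast_one]

/-- Residues modulo `3` separate all pairs among `0`, `1`, `3 p + 1`, `3 p + 2` except `1` and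
`3 p + 1`. -/
lemma cast_ne {n x y : ℕ} (hn : 3 ∣ n) (hxy : x % 3 ≠ y % 3) : (x : ZMod n) ≠ (y : ZMod n) := by
  rw [Ne, ZMod.natCast_eq_natCast_iff]
  exact fun h => hxy (h.of_dvd hn)

lemma rho_comm_eq_one {n p : ℕ} (hn : 3 ∣ n) (hp : ¬ n ∣ 3 * p) : rho n (comm p) = 1 := by
  have h1 : ((1 : ℕ) : ZMod n) ≠ ((3 * p + 1 : ℕ) : ZMod n) := by
    rw [Ne, ZMod.natCast_eq_natCast_iff, Nat.modEq_iff_dvd' (by omega)]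
    simpa using hp
  have hd : Equiv.Perm.Disjoint (Equiv.swap ((0 : ℕ) : ZMod n) (1 : ℕ))
      (Equiv.swap ((3 * p + 1 : ℕ) : ZMod n) ((3 * p + 2 : ℕ) : ZMod n)) := by
    apply Equiv.Perm.disjoint_swap_swap
    simp only [List.nodup_cons, List.mem_cons, List.not_mem_nil, or_false, not_or,
      not_false_eq_true, List.nodup_nil, and_true]
    exact ⟨⟨cast_ne hn (by omega), cast_ne hn (by omega), cast_ne hn (by omega)⟩,
      ⟨h1, cast_ne hn (by omega)⟩, cast_ne hn (by omega)⟩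
  rw [rho_comm, hd.commute.eq, mul_assoc _ _ (Equiv.swap ((0 : ℕ) : ZMod n) (1 : ℕ)),
    Equiv.swap_mul_self, mul_one, Equiv.swap_mul_self]

lemma rho_comm_ne_one (p : ℕ) : rho (3 * p) (comm p) ≠ 1 := by
  have hn : 3 ∣ 3 * p := dvd_mul_right _ _
  have e : ((3 * p + 1 : ℕ) : ZMod (3 * p)) = (1 : ℕ) := by
    rw [ZMod.natCast_eq_natCast_iff]; simp [Nat.ModEq]
  intro h
  have h1 := DFunLike.congr_fun h ((0 : ℕ) : ZMod (3 * p))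
  rw [rho_comm, e] at h1
  simp only [Equiv.Perm.mul_apply, Equiv.Perm.one_apply] at h1
  rw [Equiv.swap_apply_of_ne_of_ne (cast_ne hn (by omega)) (cast_ne hn (by omega)),
    Equiv.swap_apply_left, Equiv.swap_apply_left,
    Equiv.swap_apply_of_ne_of_ne (cast_ne hn (by omega)) (cast_ne hn (by omega))] at h1
  exact cast_ne hn (by omega) h1

/-! ### A continuum of growth rates -/

/-- A chain of sets of moduli, strictly increasing in the real parameter: `0` together with `3 p`
for the primes `p` whose index encodes a rational number below `α`. -/
def modSet (α : ℝ) : Set ℕ :=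
  insert 0 {n | ∃ q : ℚ, (q : ℝ) < α ∧ n = 3 * Nat.nth Nat.Prime (Encodable.encode q)}

lemma zero_mem_modSet (α : ℝ) : 0 ∈ modSet α := Set.mem_insert _ _

lemma modSet_mono {α β : ℝ} (h : α ≤ β) : modSet α ⊆ modSet β := by
  rintro n (rfl | ⟨q, hq, rfl⟩)
  · exact zero_mem_modSet β
  · exact Or.inr ⟨q, hq.trans_le h, rfl⟩

lemma comm_mem {α : ℝ} {q : ℚ} (hq : α ≤ q) :
    comm (Nat.nth Nat.Prime (Encodable.encode q)) ∈ RA (modSet α) := by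
  have hpr : ∀ k, (Nat.nth Nat.Prime k).Prime := Nat.prime_nth_prime
  refine mem_RA.2 ?_
  rintro n (rfl | ⟨q', hq', rfl⟩)
  · refine rho_comm_eq_one (dvd_zero 3) fun h => ?_
    have := (hpr (Encodable.encode q)).pos
    have := Nat.eq_zero_of_zero_dvd h
    omega
  · refine rho_comm_eq_one (dvd_mul_right _ _) fun h => ?_
    have h1 := Nat.dvd_of_mul_dvd_mul_left (by norm_num) h
    have h2 := (Nat.prime_dvd_prime_iff_eq (hpr _) (hpr _)).1 h1
    have h3 := Encodable.encode_injective (Nat.nth_injective Nat.infinite_setOfPred_prime h2)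
    rw [h3] at hq'
    exact absurd hq' (not_lt.2 hq)

lemma comm_not_mem {β : ℝ} {q : ℚ} (hq : (q : ℝ) < β) :
    comm (Nat.nth Nat.Prime (Encodable.encode q)) ∉ RA (modSet β) := fun h =>
  rho_comm_ne_one _ (mem_RA.1 h _ (Or.inr ⟨q, hq, rfl⟩))

/-- A real parameter `α` is sent to the growth rate of `FG ⧸ R²`, where `R` consists of the
elements acting trivially on `ℤ/n` for all `n ∈ modSet α`. -/
noncomputable def vel (α : ℝ) : ℝ := rate fun n => (wball (sq (RA (modSet α))) n).ncard

lemma vel_strictMono : StrictMono vel := by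
  intro α β h
  obtain ⟨q, hq, hq'⟩ := exists_rat_btwn h
  exact rate_wball_lt (RA_anti (modSet_mono h.le)) (ga_sq_mem _) (ga_not_mem (zero_mem_modSet α))
    (comm_mem hq.le) (comm_not_mem hq') (gb_pow_mem (zero_mem_modSet α))

end GrowthChain

open GrowthChain

/-- The set `Ω₂` of exponential growth rates of groups with respect to
two-element generating sets has the cardinality of the continuum. -/
theorem omega_two_has_cardinality_continuum :
    Cardinal.mk ↥{v : ℝ | 1 ≤ v ∧ ∃ (G : Type) (_ : Group G) (S : Finset G),
      S.card = 2 ∧ Subgroup.closure (S : Set G) = ⊤ ∧ growthRate (S : Set G) = v} =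
    2 ^ Cardinal.aleph0 := by
  rw [Cardinal.two_power_aleph0]
  apply le_antisymm
  · exact (Cardinal.mk_set_le _).trans_eq Cardinal.mk_real
  · rw [← Cardinal.mk_real]
    refine Cardinal.mk_le_of_injective
      (f := fun α : ℝ => ⟨vel α, one_le_rate (wball_pos _) (wball_le _), _, inferInstance,
        gens (sq (RA (modSet α))), card_gens (ga_ne_gb (zero_mem_modSet α)), closure_gens _,
        growthRate_gens _⟩) ?_
    intro α β h
    exact vel_strictMono.injective (congrArg Subtype.val h)
end

section
/- There exists a function E : ℕ → ℕ with the following property. For i ∈ ℕ let r_i = (a^{E(i)} b^{E(i)})^{100} in the free group on {a,b}, and for each subset J ⊆ ℕ let G_J = ⟨a, b | r_j = e, j ∈ J⟩. Then for all subsets I, J ⊆ ℕ, if I ≠ J then v(G_I) ≠ v(G_J), where growth rates are taken with respect to the images of the generators {a,b}. -/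
namespace GrowthRates

open Filter Topology

/-! ### Balls and growth rates -/

section Growth

variable {G : Type*} [Group G] {S : Set G}

lemma one_mem_ball (S : Set G) (n : ℕ) : (1 : G) ∈ ball S n :=
  ⟨[], by simp, by simp, rfl⟩

lemma mul_mem_ball {m n : ℕ} {g h : G} (hg : g ∈ ball S m) (hh : h ∈ ball S n) :
    g * h ∈ ball S (m + n) := by
  obtain ⟨v, hv, hvl, rfl⟩ := hg
  obtain ⟨w, hw, hwl, rfl⟩ := hh
  refine ⟨v ++ w, ?_, by simp; omega, by simp⟩
  intro x hx
  rcases List.mem_append.1 hx with h | h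
  exacts [hv x h, hw x h]

lemma ball_add_subset (S : Set G) (m n : ℕ) :
    ball S (m + n) ⊆ Set.image2 (· * ·) (ball S m) (ball S n) := by
  rintro g ⟨w, hw, hwl, rfl⟩
  refine ⟨(w.take m).prod, ⟨_, fun x hx => hw x (List.mem_of_mem_take hx), by simp, rfl⟩,
    (w.drop m).prod, ⟨_, fun x hx => hw x (List.mem_of_mem_drop hx), by simp; omega, rfl⟩, ?_⟩
  simp [← List.prod_append]

lemma finite_ball (hS : S.Finite) (n : ℕ) : (ball S n).Finite := by
  induction n with
  | zero =>
    refine (Set.finite_singleton (1 : G)).subset ?_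
    rintro g ⟨w, -, hwl, rfl⟩
    simp [List.length_eq_zero_iff.1 (Nat.le_zero.1 hwl)]
  | succ n ih =>
    refine (ih.image2 _ ?_).subset (ball_add_subset S n 1)
    refine ((hS.union hS.inv).union (Set.finite_singleton (1 : G))).subset ?_
    rintro g ⟨w, hw, hwl, rfl⟩
    rcases w with _ | ⟨x, _ | ⟨y, w⟩⟩
    · simp
    · left; simpa using hw x (by simp)
    · simp at hwl

lemma card_ball_pos (hS : S.Finite) (n : ℕ) : 1 ≤ Nat.card (ball S n) := by
  have := (finite_ball hS n).to_subtype
  have : Nonempty (ball S n) := ⟨⟨1, one_mem_ball S n⟩⟩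
  exact Nat.card_pos

lemma card_ball_add (hS : S.Finite) (m n : ℕ) :
    Nat.card (ball S (m + n)) ≤ Nat.card (ball S m) * Nat.card (ball S n) := by
  have hm := finite_ball hS m
  have hn := finite_ball hS n
  calc (ball S (m + n)).ncard ≤ (Set.image2 (· * ·) (ball S m) (ball S n)).ncard :=
        Set.ncard_le_ncard (ball_add_subset S m n) (hm.image2 _ hn)
    _ ≤ (ball S m ×ˢ ball S n).ncard := by
        rw [← Set.image_prod]
        exact Set.ncard_image_le (hm.prod hn)
    _ = _ := Set.ncard_prod

lemma card_ball_mul (hS : S.Finite) (n k : ℕ) :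
    Nat.card (ball S (k * n)) ≤ Nat.card (ball S n) ^ k := by
  induction k with
  | zero =>
    have : ball S (0 * n) ⊆ {1} := by
      rintro g ⟨w, -, hwl, rfl⟩
      simp [List.length_eq_zero_iff.1 (Nat.le_zero.1 (by simpa using hwl))]
    simpa using Set.ncard_le_ncard this
  | succ k ih =>
    rw [Nat.succ_mul, pow_succ]
    exact (card_ball_add hS _ _).trans (Nat.mul_le_mul_right _ ih)

lemma ball_mono (S : Set G) {m n : ℕ} (h : m ≤ n) : ball S m ⊆ ball S n := by
  rintro g ⟨w, hw, hwl, rfl⟩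
  exact ⟨w, hw, hwl.trans h, rfl⟩

lemma card_ball_mono (hS : S.Finite) {m n : ℕ} (h : m ≤ n) :
    Nat.card (ball S m) ≤ Nat.card (ball S n) :=
  Set.ncard_le_ncard (ball_mono S h) (finite_ball hS n)

lemma root_le (hS : S.Finite) {n : ℕ} (hn : 0 < n) {m : ℕ} (hm : 0 < m) :
    (Nat.card (ball S m) : ℝ) ^ ((1 : ℝ) / m) ≤
      (Nat.card (ball S n) : ℝ) ^ ((1 : ℝ) / n + (1 : ℝ) / m) := by
  have hm' : (0 : ℝ) < m := by exact_mod_cast hm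
  have hn' : (0 : ℝ) < n := by exact_mod_cast hn
  have h1 : (1 : ℝ) ≤ Nat.card (ball S n) := by exact_mod_cast card_ball_pos hS n
  have h2 : Nat.card (ball S m) ≤ Nat.card (ball S n) ^ (m / n + 1) :=
    (card_ball_mono hS (by
      have := Nat.lt_div_mul_add (a := m) hn
      rw [Nat.add_mul, one_mul]; omega)).trans (card_ball_mul hS n _)
  have h3 : (Nat.card (ball S m) : ℝ) ≤ (Nat.card (ball S n) : ℝ) ^ ((m : ℝ) / n + 1) := by
    calc (Nat.card (ball S m) : ℝ) ≤ (Nat.card (ball S n) : ℝ) ^ (m / n + 1) := by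
          exact_mod_cast h2
      _ = (Nat.card (ball S n) : ℝ) ^ (((m / n + 1 : ℕ)) : ℝ) := (Real.rpow_natCast _ _).symm
      _ ≤ _ := by
          apply Real.rpow_le_rpow_of_exponent_le h1
          push_cast
          gcongr
          exact Nat.cast_div_le
  calc (Nat.card (ball S m) : ℝ) ^ ((1 : ℝ) / m)
      ≤ ((Nat.card (ball S n) : ℝ) ^ ((m : ℝ) / n + 1)) ^ ((1 : ℝ) / m) :=
        Real.rpow_le_rpow (by positivity) h3 (by positivity)
    _ = _ := by
        rw [← Real.rpow_mul (by positivity)]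
        congr 1
        field_simp

lemma one_le_root (hS : S.Finite) (m : ℕ) :
    1 ≤ (Nat.card (ball S m) : ℝ) ^ ((1 : ℝ) / m) :=
  Real.one_le_rpow (by exact_mod_cast card_ball_pos hS m) (by positivity)

lemma isBounded_root (hS : S.Finite) :
    IsBoundedUnder (· ≤ ·) atTop
      (fun n : ℕ => (Nat.card (ball S n) : ℝ) ^ ((1 : ℝ) / n)) := by
  refine ⟨(Nat.card (ball S 1) : ℝ) ^ (2 : ℝ), ?_⟩
  rw [eventually_map]
  filter_upwards [eventually_gt_atTop 0] with m hm
  refine (root_le hS one_pos hm).trans ?_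
  apply Real.rpow_le_rpow_of_exponent_le
  · exact_mod_cast card_ball_pos hS 1
  · have : (1 : ℝ) / m ≤ 1 := by
      rw [div_le_one (by exact_mod_cast hm)]; exact_mod_cast hm
    push_cast
    linarith

lemma isCobounded_root (hS : S.Finite) :
    IsCoboundedUnder (· ≤ ·) atTop
      (fun n : ℕ => (Nat.card (ball S n) : ℝ) ^ ((1 : ℝ) / n)) :=
  IsBoundedUnder.isCoboundedUnder_le ⟨1, by
    rw [eventually_map]; exact Eventually.of_forall fun m => one_le_root hS m⟩

lemma one_le_growthRate (hS : S.Finite) : 1 ≤ growthRate S := by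
  refine le_limsup_of_frequently_le ?_ (isBounded_root hS)
  exact (Eventually.of_forall fun m => one_le_root hS m).frequently

/-- Fekete's inequality for the submultiplicative sequence of ball sizes. -/
lemma growthRate_pow_le (hS : S.Finite) (n : ℕ) :
    growthRate S ^ n ≤ Nat.card (ball S n) := by
  rcases Nat.eq_zero_or_pos n with rfl | hn
  · simpa using (by exact_mod_cast card_ball_pos hS 0 : (1 : ℝ) ≤ Nat.card (ball S 0))
  have hc : (0 : ℝ) < Nat.card (ball S n) := by exact_mod_cast card_ball_pos hS n
  have hlim : Tendsto (fun m : ℕ => (Nat.card (ball S n) : ℝ) ^ ((1 : ℝ) / n + (1 : ℝ) / m))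
      atTop (𝓝 ((Nat.card (ball S n) : ℝ) ^ ((1 : ℝ) / n + 0))) := by
    refine Tendsto.rpow tendsto_const_nhds ?_ (Or.inl hc.ne')
    exact tendsto_const_nhds.add tendsto_one_div_atTop_nhds_zero_nat
  have h : growthRate S ≤ (Nat.card (ball S n) : ℝ) ^ ((1 : ℝ) / n + 0) := by
    rw [← hlim.limsup_eq]
    refine limsup_le_limsup ?_ (isCobounded_root hS) hlim.isBoundedUnder_le
    filter_upwards [eventually_gt_atTop 0] with m hm using root_le hS hn hm
  calc growthRate S ^ n ≤ ((Nat.card (ball S n) : ℝ) ^ ((1 : ℝ) / n + 0)) ^ n :=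
        pow_le_pow_left₀ (zero_le_one.trans (one_le_growthRate hS)) h n
    _ = _ := by
        rw [← Real.rpow_natCast, ← Real.rpow_mul hc.le, add_zero,
          one_div_mul_cancel (by exact_mod_cast hn.ne'), Real.rpow_one]

lemma le_growthRate (hS : S.Finite) {κ y : ℝ} (hκ : 0 < κ) (hy : 0 < y)
    (h : ∀ n : ℕ, κ * y ^ n ≤ Nat.card (ball S n)) : y ≤ growthRate S := by
  have hlim : Tendsto (fun m : ℕ => κ ^ ((1 : ℝ) / m) * y) atTop (𝓝 (κ ^ (0 : ℝ) * y)) :=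
    (Tendsto.rpow tendsto_const_nhds tendsto_one_div_atTop_nhds_zero_nat
      (Or.inl hκ.ne')).mul_const y
  rw [Real.rpow_zero, one_mul] at hlim
  rw [← hlim.limsup_eq]
  refine limsup_le_limsup ?_ hlim.isCoboundedUnder_le (isBounded_root hS)
  filter_upwards [eventually_gt_atTop 0] with m hm
  have hm' : (m : ℝ) ≠ 0 := by exact_mod_cast hm.ne'
  calc κ ^ ((1 : ℝ) / m) * y = (κ * y ^ m) ^ ((1 : ℝ) / m) := by
        rw [Real.mul_rpow hκ.le (by positivity), ← Real.rpow_natCast, ← Real.rpow_mul hy.le,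
          mul_one_div_cancel hm', Real.rpow_one]
    _ ≤ _ := Real.rpow_le_rpow (by positivity) (h m) (by positivity)

lemma growthRate_image_le {H : Type*} [Group H] (f : G →* H) (hS : S.Finite) :
    growthRate (f '' S) ≤ growthRate S := by
  have hsub : ∀ n, ball (f '' S) n ⊆ f '' ball S n := by
    rintro n g ⟨w, hw, hwl, rfl⟩
    induction w generalizing n with
    | nil => exact ⟨1, one_mem_ball S n, by simp⟩
    | cons x w ih =>
      obtain ⟨k, rfl⟩ : ∃ k, n = 1 + k := ⟨n - 1, by simp at hwl; omega⟩
      obtain ⟨h, hh, hhe⟩ := ih k (fun y hy => hw y (by simp [hy])) (by simp at hwl; omega)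
      have : ∃ z, (z ∈ S ∨ z⁻¹ ∈ S) ∧ f z = x := by
        rcases hw x (by simp) with ⟨z, hz, rfl⟩ | ⟨z, hz, hzx⟩
        · exact ⟨z, Or.inl hz, rfl⟩
        · exact ⟨z⁻¹, Or.inr (by simpa using hz), by rw [map_inv, hzx, inv_inv]⟩
      obtain ⟨z, hz, rfl⟩ := this
      exact ⟨z * h, mul_mem_ball ⟨[z], by simpa using hz, by simp, by simp⟩ hh, by
        simp [hhe]⟩
  refine limsup_le_limsup ?_ (isCobounded_root (hS.image f)) (isBounded_root hS)
  refine Eventually.of_forall fun n => Real.rpow_le_rpow (by positivity) ?_ (by positivity)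
  have hf := finite_ball hS n
  exact_mod_cast (Set.ncard_le_ncard (hsub n) (hf.image f)).trans (Set.ncard_image_le hf)

end Growth

/-! ### Exponential lower bounds from renewal inequalities -/

/-- If `f` satisfies `f n ≥ ∑ f (n - ℓ a)` for large `n`, and `∑ z ^ ℓ a ≥ 1`, then `f` grows at least
like `z⁻ⁿ`. -/
lemma renewal_lower_bound {α : Type*} (A : Finset α) (ℓ : α → ℕ) (f : ℕ → ℕ) (N : ℕ)
    (hℓ : ∀ a ∈ A, 1 ≤ ℓ a ∧ ℓ a ≤ N) (hf1 : ∀ n, 1 ≤ f n)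
    (hf : ∀ n, N ≤ n → ∑ a ∈ A, f (n - ℓ a) ≤ f n)
    {z : ℝ} (hz0 : 0 < z) (hz1 : z ≤ 1) (hz : 1 ≤ ∑ a ∈ A, z ^ ℓ a) (n : ℕ) :
    z ^ N * z⁻¹ ^ n ≤ f n := by
  induction n using Nat.strong_induction_on with
  | _ n ih =>
    rcases lt_or_ge n N with h | h
    · have : z ^ N * z⁻¹ ^ n ≤ 1 := by
        rw [inv_pow, ← div_eq_mul_inv, div_le_one (by positivity)]
        exact pow_le_pow_of_le_one hz0.le hz1 h.le
      exact this.trans (by exact_mod_cast hf1 n)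
    · calc z ^ N * z⁻¹ ^ n ≤ (z ^ N * z⁻¹ ^ n) * ∑ a ∈ A, z ^ ℓ a :=
            le_mul_of_one_le_right (by positivity) hz
        _ = ∑ a ∈ A, z ^ N * z⁻¹ ^ (n - ℓ a) := by
            rw [Finset.mul_sum]
            refine Finset.sum_congr rfl fun a ha => ?_
            obtain ⟨k, hk⟩ := Nat.exists_eq_add_of_le ((hℓ a ha).2.trans h)
            have : z⁻¹ ^ ℓ a * z ^ ℓ a = 1 := by
              rw [← mul_pow, inv_mul_cancel₀ hz0.ne', one_pow]
            rw [show n - ℓ a = k by omega, hk, pow_add, mul_assoc, mul_right_comm, this, one_mul]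
        _ ≤ ∑ a ∈ A, (f (n - ℓ a) : ℝ) := by
            refine Finset.sum_le_sum fun a ha => ih _ ?_
            have := hℓ a ha
            omega
        _ ≤ f n := by exact_mod_cast hf n h

/-- For an increasing family of finite sets of size at least `z⁻ⁿ` and `n`, the generating
series of the associated length function diverges at `z`. -/
lemma exists_lt_sum_pow {α : Type*} (D : ℕ → Set α) (hD : Monotone D)
    (hfin : ∀ n, (D n).Finite) {z : ℝ} (hz0 : 0 < z) (hz1 : z ≤ 1)
    (hcard : ∀ n, 1 ≤ (D n).ncard * z ^ n) (hinf : ∀ n, n ≤ (D n).ncard) (B : ℝ) :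
    ∃ R, B < ∑ a ∈ (hfin R).toFinset, z ^ sInf {n | a ∈ D n} := by
  classical
  have key : ∀ R : ℕ, (D R).ncard * z ^ R + R * (1 - z) ≤
      ∑ a ∈ (hfin R).toFinset, z ^ sInf {n | a ∈ D n} := by
    intro R
    induction R with
    | zero =>
      rw [Finset.sum_congr rfl (g := fun _ => (1 : ℝ))]
      · simp [Set.ncard_eq_toFinset_card _ (hfin 0)]
      · intro a ha
        have : sInf {n | a ∈ D n} = 0 := Nat.sInf_eq_zero.2 (Or.inl (by simpa using ha))
        rw [this, pow_zero]
    | succ R ih =>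
      have hsub : (hfin R).toFinset ⊆ (hfin (R + 1)).toFinset := by
        simpa using hD (Nat.le_succ R)
      rw [← Finset.sum_sdiff hsub, Finset.sum_congr rfl (g := fun _ => z ^ (R + 1))]
      · rw [Finset.sum_const, Finset.card_sdiff_of_subset hsub, nsmul_eq_mul,
          Nat.cast_sub (Finset.card_le_card hsub), ← Set.ncard_eq_toFinset_card _ (hfin R),
          ← Set.ncard_eq_toFinset_card _ (hfin (R + 1))]
        have h1 := mul_le_mul_of_nonneg_right (hcard R) (sub_nonneg.2 hz1)
        push_cast
        rw [pow_succ]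
        nlinarith
      · intro a ha
        simp only [Finset.mem_sdiff, Set.Finite.mem_toFinset] at ha
        congr 1
        apply le_antisymm (Nat.sInf_le ha.1)
        by_contra! hlt
        have hne : {n | a ∈ D n}.Nonempty := ⟨_, ha.1⟩
        exact ha.2 (hD (Nat.lt_succ_iff.1 hlt) (Nat.sInf_mem hne))
  rcases hz1.eq_or_lt with rfl | hlt
  · obtain ⟨R, hR⟩ := exists_nat_gt B
    refine ⟨R, hR.trans_le (le_trans ?_ (key R))⟩
    simpa using hinf R
  · obtain ⟨R, hR⟩ := exists_nat_gt (B / (1 - z))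
    refine ⟨R, lt_of_lt_of_le ?_ (key R)⟩
    rw [div_lt_iff₀ (by linarith)] at hR
    have : (0 : ℝ) ≤ (D R).ncard * z ^ R := by positivity
    linarith

lemma exists_smaller_root {α : Type*} (A : Finset α) (ℓ : α → ℕ) {z : ℝ} (hz : 0 < z)
    (h : 1 < ∑ a ∈ A, z ^ ℓ a) : ∃ y, 0 < y ∧ y < z ∧ 1 ≤ ∑ a ∈ A, y ^ ℓ a := by
  have hc : Continuous fun y : ℝ => ∑ a ∈ A, y ^ ℓ a := by fun_prop
  have hev : ∀ᶠ y in 𝓝[<] z, 1 < ∑ a ∈ A, y ^ ℓ a :=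
    ((hc.tendsto z).eventually (lt_mem_nhds h)).filter_mono nhdsWithin_le_nhds
  obtain ⟨y, hy, hy1, hy2⟩ :=
    (hev.and ((Ioo_mem_nhdsLT hz : _ ∈ 𝓝[<] z))).exists
  exact ⟨y, hy1, hy2, hy.le⟩

/-! ### The Coxeter groups -/

/-- Relators of the Coxeter group on the integers in which `i, j` are joined by the label `100` when
`|i - j| ∈ X`, and by `∞` otherwise. -/
def coxRels (X : Set ℕ) : Set (FreeGroup ℤ) :=
  {r | (∃ i, r = FreeGroup.of i ^ 2) ∨
    ∃ i j : ℤ, (i - j).natAbs ∈ X ∧ r = (FreeGroup.of i * FreeGroup.of j) ^ 100}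

/-- The even Coxeter group generated by involutions `σ i`, `i ∈ ℤ`, with `(σ i * σ j) ^ 100 = 1`
whenever `|i - j| ∈ X`. -/
abbrev Cox (X : Set ℕ) : Type := PresentedGroup (coxRels X)

/-- The `i`-th simple reflection. -/
def refl (X : Set ℕ) (i : ℤ) : Cox X := PresentedGroup.of i

lemma refl_sq (X : Set ℕ) (i : ℤ) : refl X i ^ 2 = 1 :=
  PresentedGroup.one_of_mem (rels := coxRels X) (x := FreeGroup.of i ^ 2) (Or.inl ⟨i, rfl⟩)

lemma refl_mul_self (X : Set ℕ) (i : ℤ) : refl X i * refl X i = 1 := by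
  rw [← sq, refl_sq]

lemma refl_mul_pow {X : Set ℕ} {i j : ℤ} (h : (i - j).natAbs ∈ X) :
    (refl X i * refl X j) ^ 100 = 1 :=
  PresentedGroup.one_of_mem (rels := coxRels X) (x := (FreeGroup.of i * FreeGroup.of j) ^ 100)
    (Or.inr ⟨i, j, h, rfl⟩)

/-- The universal property of `Cox X`. -/
def coxLift {X : Set ℕ} {G : Type*} [Group G] (f : ℤ → G) (h2 : ∀ i, f i ^ 2 = 1)
    (h : ∀ i j : ℤ, (i - j).natAbs ∈ X → (f i * f j) ^ 100 = 1) : Cox X →* G :=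
  PresentedGroup.toGroup (f := f) (by
    rintro r (⟨i, rfl⟩ | ⟨i, j, hij, hr⟩)
    · rw [map_pow, FreeGroup.lift_apply_of, h2]
    · rw [hr, map_pow, map_mul, FreeGroup.lift_apply_of, FreeGroup.lift_apply_of, h i j hij])

@[simp] lemma coxLift_refl {X : Set ℕ} {G : Type*} [Group G] (f : ℤ → G)
    (h2 : ∀ i, f i ^ 2 = 1) (h : ∀ i j : ℤ, (i - j).natAbs ∈ X → (f i * f j) ^ 100 = 1) (i : ℤ) :
    coxLift f h2 h (refl X i) = f i :=
  PresentedGroup.toGroup.of _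

lemma cox_hom_ext {X : Set ℕ} {G : Type*} [Group G] {f g : Cox X →* G}
    (h : ∀ i, f (refl X i) = g (refl X i)) : f = g :=
  PresentedGroup.ext h

/-- All labels being even, the generators outside a set of indices can be sent to `1`. Restricting to
indices of absolute value at most `ρ`, only the labels at distance at most `2ρ` have to be
respected. -/
def coxRetract {X Y : Set ℕ} (ρ : ℕ) (h : ∀ e ∈ X, e ≤ 2 * ρ → e ∈ Y) : Cox X →* Cox Y :=
  coxLift (fun i => if i.natAbs ≤ ρ then refl Y i else 1)
    (fun i => by split_ifs <;> simp [refl_sq])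
    (fun i j hij => by
      split_ifs with h1 h2 h2
      · exact refl_mul_pow (h _ hij (by omega))
      · rw [mul_one, show (100 : ℕ) = 2 * 50 from rfl, pow_mul, refl_sq, one_pow]
      · rw [one_mul, show (100 : ℕ) = 2 * 50 from rfl, pow_mul, refl_sq, one_pow]
      · simp)

lemma refl_ne_one (X : Set ℕ) (i : ℤ) : refl X i ≠ 1 := by
  intro h
  have := congrArg (coxLift (X := X) (fun _ => (-1 : ℤˣ)) (fun _ => by decide) (fun _ _ _ => by decide)) h
  rw [coxLift_refl, map_one] at this
  exact absurd this (by decide)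

/-- The retraction onto the infinite dihedral group generated by the reflections `p` and `p + L`. -/
def coxDihedral {X : Set ℕ} {L : ℕ} (hL : L ∉ X) (hL0 : 0 < L) (p : ℤ) :
    Cox X →* DihedralGroup 0 :=
  coxLift (fun i => if i = p then .sr 0 else if i = p + L then .sr 1 else 1)
    (fun i => by split_ifs <;> simp [sq])
    (fun i j hij => by
      have h1 : (DihedralGroup.sr (0 : ZMod 0)) ^ 100 = 1 := by
        rw [show (100 : ℕ) = 2 * 50 from rfl, pow_mul, sq, DihedralGroup.sr_mul_self, one_pow]
      have h2 : (DihedralGroup.sr (1 : ZMod 0)) ^ 100 = 1 := by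
        rw [show (100 : ℕ) = 2 * 50 from rfl, pow_mul, sq, DihedralGroup.sr_mul_self, one_pow]
      split_ifs with a b c d e f g k
      · rw [DihedralGroup.sr_mul_self, one_pow]
      · exact absurd (by rw [show L = (i - j).natAbs by omega]; exact hij) hL
      · rw [mul_one, h1]
      · exact absurd (by rw [show L = (i - j).natAbs by omega]; exact hij) hL
      · rw [DihedralGroup.sr_mul_self, one_pow]
      · rw [mul_one, h2]
      · rw [one_mul, h1]
      · rw [one_mul, h2]
      · simp)

/-- The relators `(σ p * σ (p + L)) ^ 100` for a missing label `L` are non-trivial and distinct. -/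
lemma dihedral_relator {X : Set ℕ} {L : ℕ} (hL : L ∉ X) (hL0 : 0 < L) (p : ℤ) :
    (refl X p * refl X (p + L)) ^ 100 ≠ 1 ∧
    ∀ q : ℤ, (refl X p * refl X (p + L)) ^ 100 = (refl X q * refl X (q + L)) ^ 100 → p = q := by
  have hne : p + (L : ℤ) ≠ p := by omega
  have himg : coxDihedral hL hL0 p ((refl X p * refl X (p + L)) ^ 100) ≠ 1 := by
    simp only [coxDihedral, map_pow, map_mul, coxLift_refl, if_true, if_neg hne,
      DihedralGroup.sr_mul_sr]
    rw [DihedralGroup.r_pow, DihedralGroup.one_def]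
    intro h
    have h' := DihedralGroup.r.inj h
    have : ((1 - 0 : ZMod 0) * (100 : ℕ)) ≠ 0 := by
      change (((1 : ℤ) - 0) * (100 : ℕ)) ≠ 0
      norm_num
    exact this h'
  refine ⟨fun h => himg (by rw [h, map_one]), fun q hq => ?_⟩
  by_contra hpq
  apply himg
  rw [hq]
  have h1 : (DihedralGroup.sr (0 : ZMod 0)) ^ 100 = 1 := by
    rw [show (100 : ℕ) = 2 * 50 from rfl, pow_mul, sq, DihedralGroup.sr_mul_self, one_pow]
  have h2 : (DihedralGroup.sr (1 : ZMod 0)) ^ 100 = 1 := by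
    rw [show (100 : ℕ) = 2 * 50 from rfl, pow_mul, sq, DihedralGroup.sr_mul_self, one_pow]
  have hqp : q ≠ p := fun h => hpq h.symm
  have hqL : q + (L : ℤ) ≠ p + L := by omega
  simp only [coxDihedral, map_pow, map_mul, coxLift_refl, if_neg hqp, if_neg hqL]
  split_ifs with a b
  · omega
  · rw [mul_one, h2]
  · rw [one_mul, h1]
  · simp

/-- Product of the reflections listed in `l`. -/
def prodRefl (X : Set ℕ) (l : List ℤ) : Cox X := (l.map (refl X)).prod

@[simp] lemma prodRefl_nil (X : Set ℕ) : prodRefl X [] = 1 := rfl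

@[simp] lemma prodRefl_cons (X : Set ℕ) (i : ℤ) (l : List ℤ) :
    prodRefl X (i :: l) = refl X i * prodRefl X l := by simp [prodRefl]

@[simp] lemma prodRefl_append (X : Set ℕ) (l l' : List ℤ) :
    prodRefl X (l ++ l') = prodRefl X l * prodRefl X l' := by simp [prodRefl]

lemma coxRetract_prodRefl {X Y : Set ℕ} {ρ : ℕ} (h : ∀ e ∈ X, e ≤ 2 * ρ → e ∈ Y) {l : List ℤ}
    (hl : ∀ i ∈ l, i.natAbs ≤ ρ) : coxRetract ρ h (prodRefl X l) = prodRefl Y l := by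
  induction l with
  | nil => simp
  | cons i l ih =>
    rw [prodRefl_cons, map_mul, ih fun j hj => hl j (by simp [hj]), prodRefl_cons]
    simp [coxRetract, hl i (by simp)]

/-! ### The shift and the extended group -/

/-- The shift endomorphism `σ i ↦ σ (i + k)`. -/
def shiftHom (X : Set ℕ) (k : ℤ) : Cox X →* Cox X :=
  coxLift (fun i => refl X (i + k)) (fun _ => refl_sq X _)
    (fun i j hij => refl_mul_pow (by rwa [add_sub_add_right_eq_sub]))

lemma shiftHom_comp (X : Set ℕ) (j k : ℤ) :
    (shiftHom X j).comp (shiftHom X k) = shiftHom X (j + k) :=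
  cox_hom_ext fun i => by
    simp only [MonoidHom.comp_apply, shiftHom, coxLift_refl]
    congr 1; ring

lemma shiftHom_zero (X : Set ℕ) : shiftHom X 0 = MonoidHom.id _ :=
  cox_hom_ext fun i => by simp [shiftHom]

/-- The action of `ℤ` on `Cox X` by shifts. -/
def shift (X : Set ℕ) : Multiplicative ℤ →* MulAut (Cox X) where
  toFun k := (shiftHom X k.toAdd).toMulEquiv (shiftHom X (-k.toAdd))
    (by rw [shiftHom_comp, neg_add_cancel, shiftHom_zero])
    (by rw [shiftHom_comp, add_neg_cancel, shiftHom_zero])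
  map_one' := by
    ext x
    exact DFunLike.congr_fun (shiftHom_zero X) x
  map_mul' j k := by
    ext x
    exact (DFunLike.congr_fun (shiftHom_comp X j.toAdd k.toAdd) x).symm

lemma shift_refl (X : Set ℕ) (k i : ℤ) :
    shift X (.ofAdd k) (refl X i) = refl X (i + k) := by
  change shiftHom X k (refl X i) = _
  exact coxLift_refl _ _ _ _

lemma shift_prodRefl (X : Set ℕ) (k : ℤ) (l : List ℤ) :
    shift X (.ofAdd k) (prodRefl X l) = prodRefl X (l.map (· + k)) := by
  induction l with
  | nil => simp
  | cons i l ih => simp [ih, shift_refl]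

/-- The group `Cox X ⋊ ℤ`, which contains `⟨a, b | (aᵉ bᵉ)¹⁰⁰, e ∈ X⟩` with index two. -/
abbrev Ext (X : Set ℕ) : Type := Cox X ⋊[shift X] Multiplicative ℤ

/-- The element `w tᵖ` of the extended group. -/
def ext (X : Set ℕ) (w : Cox X) (p : ℤ) : Ext X := ⟨w, .ofAdd p⟩

lemma ext_mul (X : Set ℕ) (w w' : Cox X) (p p' : ℤ) :
    ext X w p * ext X w' p' = ext X (w * shift X (.ofAdd p) w') (p + p') := rfl

lemma ext_one (X : Set ℕ) : ext X 1 0 = 1 := rfl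

lemma ext_inj {X : Set ℕ} {w w' : Cox X} {p p' : ℤ} :
    ext X w p = ext X w' p' ↔ w = w' ∧ p = p' := by
  constructor
  · intro h
    exact ⟨congrArg SemidirectProduct.left h,
      Multiplicative.ofAdd.injective (congrArg SemidirectProduct.right h)⟩
  · rintro ⟨rfl, rfl⟩; rfl

lemma exists_ext {X : Set ℕ} (g : Ext X) : ∃ w p, g = ext X w p := ⟨g.left, g.right.toAdd, rfl⟩

/-- The shift generator to the power `p`. -/
abbrev tt (X : Set ℕ) (p : ℤ) : Ext X := ext X 1 p

/-- The reflection `σ 0` as an element of the extended group. -/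
abbrev ss (X : Set ℕ) : Ext X := ext X (refl X 0) 0

lemma tt_add (X : Set ℕ) (p q : ℤ) : tt X p * tt X q = tt X (p + q) := by
  simp [ext_mul]

lemma tt_pow (X : Set ℕ) (p : ℤ) (n : ℕ) : tt X p ^ n = tt X (n * p) := by
  induction n with
  | zero => simp [ext_one]
  | succ n ih => rw [pow_succ, ih, tt_add]; congr 1; push_cast; ring

lemma ss_mul_ss (X : Set ℕ) : ss X * ss X = 1 := by
  simp [ext_mul, refl_mul_self, ← ext_one]

lemma shift_zero (X : Set ℕ) (w : Cox X) : shift X (.ofAdd 0) w = w := by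
  simp

/-! ### Walks -/

/-- The length of the walk on `ℤ` from `q` to `p` through the positions listed in `l`. -/
def cost : ℤ → List ℤ → ℤ → ℕ
  | q, [], p => (p - q).natAbs
  | q, i :: l, p => (i - q).natAbs + cost i l p

lemma cost_triangle (q q' : ℤ) (l : List ℤ) (p : ℤ) :
    cost q l p ≤ (q' - q).natAbs + cost q' l p := by
  cases l <;> simp only [cost] <;> omega

lemma cost_append (q : ℤ) (l l' : List ℤ) (r p : ℤ) :
    cost q (l ++ l') p ≤ cost q l r + cost r l' p := by
  induction l generalizing q with
  | nil => exact cost_triangle _ _ _ _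
  | cons i l ih => simp only [List.cons_append, cost]; have := ih i; omega

lemma cost_remove (q : ℤ) (l m l' : List ℤ) (p : ℤ) :
    cost q (l ++ l') p ≤ cost q (l ++ m ++ l') p := by
  induction l generalizing q with
  | nil =>
    induction m generalizing q with
    | nil => exact le_rfl
    | cons i m ih =>
      have h1 := ih i
      have h2 := cost_triangle q i l' p
      simp only [List.nil_append, List.cons_append, cost] at *
      omega
  | cons i l ih => simp only [List.cons_append, cost]; have := ih i; simpa using this

lemma cost_map_add (q : ℤ) (l : List ℤ) (p k : ℤ) :
    cost (q + k) (l.map (· + k)) (p + k) = cost q l p := by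
  induction l generalizing q with
  | nil => simp [cost]
  | cons i l ih => simp [cost, ih]

lemma natAbs_le_cost {q : ℤ} {l : List ℤ} {p i : ℤ} (hi : i ∈ l) :
    (i - q).natAbs ≤ cost q l p := by
  induction l generalizing q with
  | nil => simp at hi
  | cons j l ih =>
    simp only [cost]
    rcases List.mem_cons.1 hi with rfl | h
    · omega
    · have := ih (q := j) h
      omega

/-- Elements of the extended group reached by a walk of length at most `n` starting at `0`: along the
walk a reflection may be emitted at the current position at no cost. -/
def walkBall (X : Set ℕ) (n : ℕ) : Set (Ext X) :=
  {g | ∃ l p, cost 0 l p ≤ n ∧ g = ext X (prodRefl X l) p}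

lemma walkBall_mono (X : Set ℕ) : Monotone (walkBall X) := by
  rintro m n h g ⟨l, p, hc, rfl⟩
  exact ⟨l, p, hc.trans h, rfl⟩

lemma mul_mem_walkBall {X : Set ℕ} {m n : ℕ} {g h : Ext X} (hg : g ∈ walkBall X m)
    (hh : h ∈ walkBall X n) : g * h ∈ walkBall X (m + n) := by
  obtain ⟨l, p, hc, rfl⟩ := hg
  obtain ⟨l', p', hc', rfl⟩ := hh
  refine ⟨l ++ l'.map (· + p), p + p', ?_, ?_⟩
  · refine (cost_append _ _ _ p _).trans ?_
    have := cost_map_add 0 l' p' p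
    rw [zero_add, add_comm p' p] at this
    omega
  · rw [ext_mul, shift_prodRefl, prodRefl_append]

lemma tt_mem_walkBall (X : Set ℕ) (p : ℤ) : tt X p ∈ walkBall X p.natAbs :=
  ⟨[], p, by simp [cost], rfl⟩

lemma ss_mem_walkBall (X : Set ℕ) : ss X ∈ walkBall X 0 :=
  ⟨[0], 0, by simp [cost], by simp⟩

lemma one_mem_walkBall (X : Set ℕ) (n : ℕ) : (1 : Ext X) ∈ walkBall X n :=
  ⟨[], 0, by simp [cost], rfl⟩

lemma pow_mem_walkBall {X : Set ℕ} {n : ℕ} {g : Ext X} (hg : g ∈ walkBall X n) (k : ℕ) :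
    g ^ k ∈ walkBall X (k * n) := by
  induction k with
  | zero => simpa using one_mem_walkBall X _
  | succ k ih =>
    rw [pow_succ, Nat.succ_mul]
    exact mul_mem_walkBall ih hg

/-! ### The groups `⟨a, b | (aᵉ bᵉ)¹⁰⁰, e ∈ X⟩` -/

/-- The relators `(aᵉ bᵉ)¹⁰⁰`, `e ∈ X`; here `true` stands for `a` and `false` for `b`. -/
def growRels (X : Set ℕ) : Set (FreeGroup Bool) :=
  {r | ∃ e ∈ X, r = (FreeGroup.of true ^ e * FreeGroup.of false ^ e) ^ 100}

/-- The group `⟨a, b | (aᵉ bᵉ)¹⁰⁰, e ∈ X⟩`. -/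
abbrev Grp (X : Set ℕ) : Type := PresentedGroup (growRels X)

/-- The generating set `{a, b}`. -/
def gens (X : Set ℕ) : Set (Grp X) := Set.range (PresentedGroup.of (rels := growRels X))

/-- The generator `a`. -/
def ga (X : Set ℕ) : Grp X := PresentedGroup.of true

/-- The generator `b`. -/
def gb (X : Set ℕ) : Grp X := PresentedGroup.of false

lemma finite_gens (X : Set ℕ) : (gens X).Finite := Set.finite_range _

lemma ga_mem (X : Set ℕ) : ga X ∈ gens X := ⟨true, rfl⟩

lemma gb_mem (X : Set ℕ) : gb X ∈ gens X := ⟨false, rfl⟩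

lemma grp_rel {X : Set ℕ} {e : ℕ} (h : e ∈ X) : (ga X ^ e * gb X ^ e) ^ 100 = 1 :=
  PresentedGroup.one_of_mem (rels := growRels X)
    (x := (FreeGroup.of true ^ e * FreeGroup.of false ^ e) ^ 100) ⟨e, h, rfl⟩

/-- The universal property of `Grp X`. -/
def grpLift {X : Set ℕ} {G : Type*} [Group G] (x y : G)
    (h : ∀ e ∈ X, (x ^ e * y ^ e) ^ 100 = 1) : Grp X →* G :=
  PresentedGroup.toGroup (f := fun c : Bool => if c then x else y) (by
    rintro r ⟨e, he, hr⟩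
    rw [hr, map_pow, map_mul, map_pow, map_pow, FreeGroup.lift_apply_of, FreeGroup.lift_apply_of]
    exact h e he)

lemma grpLift_ga {X : Set ℕ} {G : Type*} [Group G] (x y : G)
    (h : ∀ e ∈ X, (x ^ e * y ^ e) ^ 100 = 1) : grpLift x y h (ga X) = x :=
  PresentedGroup.toGroup.of _

lemma grpLift_gb {X : Set ℕ} {G : Type*} [Group G] (x y : G)
    (h : ∀ e ∈ X, (x ^ e * y ^ e) ^ 100 = 1) : grpLift x y h (gb X) = y :=
  PresentedGroup.toGroup.of _

lemma grp_hom_ext {X : Set ℕ} {G : Type*} [Group G] {f g : Grp X →* G}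
    (ha : f (ga X) = g (ga X)) (hb : f (gb X) = g (gb X)) : f = g :=
  PresentedGroup.ext fun c => by cases c <;> assumption

/-- Adding relators does not increase the growth rate. -/
lemma growthRate_mono {X Y : Set ℕ} (h : X ⊆ Y) : growthRate (gens Y) ≤ growthRate (gens X) := by
  let f : Grp X →* Grp Y := grpLift (ga Y) (gb Y) fun e he => grp_rel (h he)
  have : f '' gens X = gens Y := by
    rw [gens, ← Set.range_comp]
    congr 1
    funext c
    cases c
    · exact grpLift_gb _ _ _
    · exact grpLift_ga _ _ _
  rw [← this]
  exact growthRate_image_le f (finite_gens X)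

lemma ext_pow (X : Set ℕ) (w : Cox X) (n : ℕ) : ext X w 0 ^ n = ext X (w ^ n) 0 := by
  induction n with
  | zero => simp [ext_one]
  | succ n ih => rw [pow_succ, ih, ext_mul, shift_zero, ← pow_succ]; rfl

lemma tt_zpow (X : Set ℕ) (k : ℤ) : tt X 1 ^ k = tt X k := by
  have h : ∀ p, tt X p = SemidirectProduct.inr (Multiplicative.ofAdd p) := fun _ => rfl
  rw [h, h, ← map_zpow, ← ofAdd_zsmul]
  simp

lemma ss_inv (X : Set ℕ) : (ss X)⁻¹ = ss X := inv_eq_of_mul_eq_one_left (ss_mul_ss X)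

lemma ss_conj_zpow (X : Set ℕ) (p k : ℤ) :
    (ss X * tt X p * ss X) ^ k = ss X * tt X (k * p) * ss X := by
  nth_rewrite 2 [← ss_inv]
  rw [conj_zpow, ← tt_zpow X p, ← zpow_mul, tt_zpow, ss_inv, mul_comm]

lemma tt_mul_ss (X : Set ℕ) (i : ℤ) : tt X i * ss X = ext X (refl X i) i := by
  rw [ext_mul, shift_refl]; simp

/-- The embedding `a ↦ t`, `b ↦ s t⁻¹ s` of `Grp X` into the extended group; it maps `aᵉ bᵉ` to
`σ e * σ 0`. -/
def psi (X : Set ℕ) : Grp X →* Ext X :=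
  grpLift (tt X 1) (ss X * tt X (-1) * ss X) fun e he => by
    have h : tt X 1 ^ e * (ss X * tt X (-1) * ss X) ^ e = ext X (refl X e * refl X 0) 0 := by
      rw [← zpow_natCast (ss X * tt X (-1) * ss X), ss_conj_zpow, tt_pow, ← mul_assoc, ← mul_assoc,
        mul_one, tt_mul_ss]
      simp [ext_mul]
    rw [h, ext_pow, refl_mul_pow (by simpa using he), ext_one]

lemma psi_ga (X : Set ℕ) : psi X (ga X) = tt X 1 := grpLift_ga _ _ _

lemma psi_gb (X : Set ℕ) : psi X (gb X) = ss X * tt X (-1) * ss X := grpLift_gb _ _ _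

/-- The involutive automorphism `a ↦ b⁻¹`, `b ↦ a⁻¹`. -/
def swap (X : Set ℕ) : Grp X →* Grp X :=
  grpLift (gb X)⁻¹ (ga X)⁻¹ fun e he => by
    rw [inv_pow, inv_pow, ← mul_inv_rev, inv_pow, grp_rel he, inv_one]

lemma swap_ga (X : Set ℕ) : swap X (ga X) = (gb X)⁻¹ := grpLift_ga _ _ _

lemma swap_gb (X : Set ℕ) : swap X (gb X) = (ga X)⁻¹ := grpLift_gb _ _ _

lemma swap_swap (X : Set ℕ) (g : Grp X) : swap X (swap X g) = g := by
  have : (swap X).comp (swap X) = MonoidHom.id _ := grp_hom_ext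
    (by simp [swap_ga, swap_gb]) (by simp [swap_ga, swap_gb])
  exact DFunLike.congr_fun this g

/-- `swap` as a permutation. -/
def swapPerm (X : Set ℕ) : Equiv.Perm (Grp X) := Function.Involutive.toPerm (swap X) (swap_swap X)

/-- The left regular representation. -/
def lreg (X : Set ℕ) : Grp X →* Equiv.Perm (Grp X) := MulAction.toPermHom (Grp X) (Grp X)

lemma lreg_injective (X : Set ℕ) : Function.Injective (lreg X) := by
  intro g h hgh
  have := congrArg (fun f : Equiv.Perm (Grp X) => f 1) hgh
  simpa [lreg] using this

lemma swapPerm_mul_self (X : Set ℕ) : swapPerm X * swapPerm X = 1 := by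
  ext g
  exact swap_swap X g

lemma swapPerm_mul_lreg (X : Set ℕ) (g : Grp X) :
    swapPerm X * lreg X g = lreg X (swap X g) * swapPerm X := by
  ext h
  exact map_mul (swap X) g h

/-- The permutation by which the reflection `σ i` acts on `Grp X`. -/
def reflPerm (X : Set ℕ) (i : ℤ) : Equiv.Perm (Grp X) :=
  lreg X (ga X ^ i * gb X ^ i) * swapPerm X

lemma reflPerm_mul (X : Set ℕ) (i j : ℤ) :
    reflPerm X i * reflPerm X j = lreg X (ga X ^ i * gb X ^ (i - j) * ga X ^ (-j)) := by
  rw [reflPerm, reflPerm, mul_assoc, ← mul_assoc (swapPerm X), swapPerm_mul_lreg, mul_assoc _ _ (swapPerm X),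
    swapPerm_mul_self, mul_one, ← map_mul]
  congr 1
  rw [map_mul, map_zpow, map_zpow, swap_ga, swap_gb]
  group

lemma grp_rel_zpow {X : Set ℕ} (k : ℤ) (h : k.natAbs ∈ X) (c : Grp X) :
    (c * gb X ^ k * ga X ^ k * c⁻¹) ^ 100 = 1 := by
  have key : (gb X ^ k * ga X ^ k) ^ 100 = 1 := by
    obtain ⟨e, rfl | rfl⟩ := k.eq_nat_or_neg
    · rw [Int.natAbs_natCast] at h
      have h1 : gb X ^ (e : ℤ) * ga X ^ (e : ℤ) =
          (ga X ^ e)⁻¹ * (ga X ^ e * gb X ^ e) * ((ga X ^ e)⁻¹)⁻¹ := by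
        simp only [zpow_natCast]; group
      rw [h1, conj_pow, grp_rel h, mul_one, mul_inv_cancel]
    · rw [Int.natAbs_neg, Int.natAbs_natCast] at h
      rw [zpow_neg, zpow_neg, zpow_natCast, zpow_natCast, ← mul_inv_rev, inv_pow, grp_rel h, inv_one]
  rw [mul_assoc c, conj_pow, key, mul_one, mul_inv_cancel]

/-- The action of `Cox X` on `Grp X`. -/
def coxAct (X : Set ℕ) : Cox X →* Equiv.Perm (Grp X) :=
  coxLift (reflPerm X) (fun i => by rw [sq, reflPerm_mul]; simp)
    (fun i j hij => by
      have : ga X ^ i * gb X ^ (i - j) * ga X ^ (-j) =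
          ga X ^ i * gb X ^ (i - j) * ga X ^ (i - j) * (ga X ^ i)⁻¹ := by group
      rw [reflPerm_mul, this, ← map_pow, grp_rel_zpow _ hij, map_one])

/-- The action of the extended group on `Grp X`, which restricts to the left regular representation
of `Grp X`. -/
def extAct (X : Set ℕ) : Ext X →* Equiv.Perm (Grp X) :=
  SemidirectProduct.lift (coxAct X) (zpowersHom _ (lreg X (ga X))) (by
    intro k
    refine cox_hom_ext fun i => ?_
    obtain ⟨k, rfl⟩ := Multiplicative.ofAdd.surjective k
    have h1 : (coxAct X) (refl X (i + k)) = reflPerm X (i + k) := coxLift_refl _ _ _ _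
    have h2 : (coxAct X) (refl X i) = reflPerm X i := coxLift_refl _ _ _ _
    simp only [MonoidHom.comp_apply, MulEquiv.coe_toMonoidHom, shift_refl, h1, h2,
      MulAut.conj_apply, zpowersHom_apply, toAdd_ofAdd]
    rw [reflPerm, reflPerm, ← map_zpow, ← map_inv, mul_assoc, mul_assoc, swapPerm_mul_lreg,
      ← mul_assoc, ← mul_assoc, ← map_mul, ← map_mul, map_inv, map_zpow, swap_ga]
    congr 2
    group)

lemma extAct_ext (X : Set ℕ) (i p : ℤ) :
    extAct X (ext X (refl X i) p) = reflPerm X i * lreg X (ga X) ^ p := by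
  have h2 : (coxAct X) (refl X i) = reflPerm X i := coxLift_refl _ _ _ _
  rw [← h2]; rfl

lemma extAct_tt (X : Set ℕ) (p : ℤ) : extAct X (tt X p) = lreg X (ga X) ^ p := by
  change coxAct X 1 * _ = _
  rw [map_one, one_mul]; rfl

lemma psi_injective (X : Set ℕ) : Function.Injective (psi X) := by
  have h : (extAct X).comp (psi X) = lreg X := by
    refine grp_hom_ext ?_ ?_
    · rw [MonoidHom.comp_apply, psi_ga, extAct_tt, zpow_one]
    · have hs : extAct X (ss X) = swapPerm X := by
        rw [extAct_ext, zpow_zero, mul_one, reflPerm]; simp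
      rw [MonoidHom.comp_apply, psi_gb, map_mul, map_mul, hs, extAct_tt, ← map_zpow,
        swapPerm_mul_lreg, mul_assoc, swapPerm_mul_self, mul_one, map_zpow, swap_ga]
      simp
  intro g g' hg
  apply lreg_injective X
  rw [← h, MonoidHom.comp_apply, MonoidHom.comp_apply, hg]

lemma psi_ball_subset (X : Set ℕ) (n : ℕ) : psi X '' ball (gens X) n ⊆ walkBall X n := by
  rintro _ ⟨g, ⟨w, hw, hn, rfl⟩, rfl⟩
  refine walkBall_mono X hn ?_
  clear hn
  have hb : ∀ k : ℤ, k.natAbs = 1 → ss X * tt X k * ss X ∈ walkBall X 1 := by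
    intro k hk
    simpa [hk] using mul_mem_walkBall (mul_mem_walkBall (ss_mem_walkBall X) (tt_mem_walkBall X k))
      (ss_mem_walkBall X)
  induction w with
  | nil => simpa using one_mem_walkBall X _
  | cons x w ih =>
    rw [List.prod_cons, map_mul, List.length_cons, add_comm]
    refine mul_mem_walkBall ?_ (ih fun y hy => hw y (by simp [hy]))
    rcases hw x (by simp) with ⟨c, hc⟩ | ⟨c, hc⟩
    · rw [← hc]
      cases c
      · rw [show psi X (PresentedGroup.of false) = _ from psi_gb X]
        exact hb _ rfl
      · rw [show psi X (PresentedGroup.of true) = _ from psi_ga X]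
        exact tt_mem_walkBall X 1
    · rw [← inv_inv x, ← hc, map_inv, ← zpow_neg_one]
      cases c
      · rw [show psi X (PresentedGroup.of false) = _ from psi_gb X, ss_conj_zpow]
        exact hb _ rfl
      · rw [show psi X (PresentedGroup.of true) = _ from psi_ga X, tt_zpow]
        exact tt_mem_walkBall X (-1)

lemma zpow_mem_ball {G : Type*} [Group G] {S : Set G} {g : G} (hg : g ∈ S) (k : ℤ) :
    g ^ k ∈ ball S k.natAbs := by
  obtain ⟨n, rfl | rfl⟩ := k.eq_nat_or_neg
  · exact ⟨List.replicate n g, fun x hx => .inl (by rwa [List.eq_of_mem_replicate hx]), by simp,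
      by simp⟩
  · exact ⟨List.replicate n g⁻¹, fun x hx => .inr (by rwa [List.eq_of_mem_replicate hx, inv_inv]),
      by simp, by simp⟩

/-- The union of the two cosets of (the image of) a ball of `Grp X`. -/
def cosets (X : Set ℕ) (n : ℕ) : Set (Ext X) :=
  psi X '' ball (gens X) n ∪ (fun g => psi X g * ss X) '' ball (gens X) n

lemma mul_ss_mem_cosets {X : Set ℕ} {n : ℕ} {g : Ext X} (hg : g ∈ cosets X n) :
    g * ss X ∈ cosets X n := by
  rcases hg with ⟨x, hx, rfl⟩ | ⟨x, hx, rfl⟩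
  · exact .inr ⟨x, hx, rfl⟩
  · exact .inl ⟨x, hx, by simp only []; rw [mul_assoc, ss_mul_ss, mul_one]⟩

lemma mul_tt_mem_cosets {X : Set ℕ} {n : ℕ} {g : Ext X} (hg : g ∈ cosets X n) (k : ℤ) :
    g * tt X k ∈ cosets X (n + k.natAbs) := by
  rcases hg with ⟨x, hx, rfl⟩ | ⟨x, hx, rfl⟩
  · refine .inl ⟨x * ga X ^ k, mul_mem_ball hx (zpow_mem_ball (ga_mem X) k), ?_⟩
    rw [map_mul, map_zpow, psi_ga, tt_zpow]
  · refine .inr ⟨x * gb X ^ (-k), mul_mem_ball hx ?_, ?_⟩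
    · simpa using zpow_mem_ball (gb_mem X) (-k)
    · simp only []
      rw [map_mul, map_zpow, psi_gb, ss_conj_zpow, mul_assoc, mul_assoc _ (ss X) (ss X), ss_mul_ss,
        mul_one, mul_assoc, neg_mul_neg, mul_one]

lemma walk_mem_cosets {X : Set ℕ} {m : ℕ} (l : List ℤ) (q p : ℤ) (h : Ext X)
    (hh : h * tt X q ∈ cosets X m) :
    h * ext X (prodRefl X l) p ∈ cosets X (m + cost q l p) := by
  induction l generalizing q h m with
  | nil =>
    have := mul_tt_mem_cosets hh (p - q)
    rwa [mul_assoc, tt_add, add_sub_cancel] at this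
  | cons i l ih =>
    have h1 := mul_ss_mem_cosets (mul_tt_mem_cosets hh (i - q))
    rw [mul_assoc h, tt_add, add_sub_cancel, mul_assoc, tt_mul_ss] at h1
    have h2 : h * ext X (refl X i) 0 * tt X i = h * ext X (refl X i) i := by
      rw [mul_assoc, ext_mul]; simp
    rw [← h2] at h1
    have := ih i (h * ext X (refl X i) 0) h1
    rw [mul_assoc, ext_mul, shift_zero, zero_add, ← prodRefl_cons, add_assoc] at this
    exact this

lemma walkBall_subset_cosets (X : Set ℕ) (n : ℕ) : walkBall X n ⊆ cosets X n := by
  rintro _ ⟨l, p, hc, rfl⟩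
  have h1 : (1 : Ext X) * tt X 0 ∈ cosets X (n - cost 0 l p) :=
    .inl ⟨1, one_mem_ball _ _, by simp [ext_one]⟩
  have := walk_mem_cosets l 0 p 1 h1
  rwa [one_mul, Nat.sub_add_cancel hc] at this

lemma finite_walkBall (X : Set ℕ) (n : ℕ) : (walkBall X n).Finite :=
  (((finite_ball (finite_gens X) n).image _).union
    ((finite_ball (finite_gens X) n).image _)).subset (walkBall_subset_cosets X n)

lemma ncard_walkBall_le (X : Set ℕ) (n : ℕ) :
    (walkBall X n).ncard ≤ 2 * Nat.card (ball (gens X) n) := by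
  have hf := finite_ball (finite_gens X) n
  calc (walkBall X n).ncard ≤ (cosets X n).ncard :=
        Set.ncard_le_ncard (walkBall_subset_cosets X n) ((hf.image _).union (hf.image _))
    _ ≤ _ := Set.ncard_union_le _ _
    _ ≤ (ball (gens X) n).ncard + (ball (gens X) n).ncard :=
        add_le_add (Set.ncard_image_le hf) (Set.ncard_image_le hf)
    _ = _ := by rw [two_mul, Nat.card_coe_set_eq]

lemma card_ball_le_ncard (X : Set ℕ) (n : ℕ) :
    Nat.card (ball (gens X) n) ≤ (walkBall X n).ncard := by
  rw [Nat.card_coe_set_eq, ← Set.ncard_image_of_injective _ (psi_injective X)]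
  exact Set.ncard_le_ncard (psi_ball_subset X n) (finite_walkBall X n)

lemma le_ncard_walkBall (X : Set ℕ) (n : ℕ) : n ≤ (walkBall X n).ncard := by
  have h : (fun k : ℕ => tt X k) '' (Finset.range n) ⊆ walkBall X n := by
    rintro _ ⟨k, hk, rfl⟩
    refine walkBall_mono X ?_ (tt_mem_walkBall X k)
    have := Finset.mem_range.1 hk
    simp only [Int.natAbs_natCast]
    omega
  have h2 := Set.ncard_le_ncard h (finite_walkBall X n)
  rwa [Set.ncard_image_of_injective, Set.ncard_coe_finset, Finset.card_range] at h2
  intro i j hij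
  exact_mod_cast (ext_inj.1 hij).2

/-! ### Normal forms in the free product of the odd and the even part -/

/-- The parity of an index; `true` means odd. -/
def par (i : ℤ) : Bool := decide (i % 2 = 1)

/-- The free product of two copies of `Cox X`, one for each parity. -/
abbrev FreeProd (X : Set ℕ) : Type := Monoid.CoprodI (fun _ : Bool => Cox X)

/-- The inclusion of the factor of parity `c`. -/
def inj (X : Set ℕ) (c : Bool) : Cox X →* FreeProd X :=
  Monoid.CoprodI.of (M := fun _ : Bool => Cox X) (i := c)

/-- If all elements of `X` are even then no relation involves generators of different parity, so that
`Cox X` embeds into the free product by `σ i ↦ σ i` in the factor of the parity of `i`. -/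
def split {X : Set ℕ} (hX : ∀ e ∈ X, Even e) : Cox X →* FreeProd X :=
  coxLift (fun i => inj X (par i) (refl X i))
    (fun i => by rw [← map_pow, refl_sq, map_one])
    (fun i j hij => by
      have h : par i = par j := by
        obtain ⟨k, hk⟩ := hX _ hij
        simp only [par, decide_eq_decide]
        omega
      rw [h, ← map_mul, ← map_pow, refl_mul_pow hij, map_one])

lemma split_refl {X : Set ℕ} (hX : ∀ e ∈ X, Even e) (i : ℤ) :
    split hX (refl X i) = inj X (par i) (refl X i) := coxLift_refl _ _ _ _

lemma split_injective {X : Set ℕ} (hX : ∀ e ∈ X, Even e) : Function.Injective (split hX) := by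
  have h : (Monoid.CoprodI.lift (M := fun _ : Bool => Cox X) fun _ => MonoidHom.id (Cox X)).comp
      (split hX) = MonoidHom.id _ := cox_hom_ext fun i => by
    rw [MonoidHom.comp_apply, split_refl]
    exact Monoid.CoprodI.lift_of _ _
  intro w w' hw
  have := congrArg (Monoid.CoprodI.lift (M := fun _ : Bool => Cox X) fun _ => MonoidHom.id (Cox X)) hw
  rwa [← MonoidHom.comp_apply, ← MonoidHom.comp_apply, h] at this

/-- A syllable: an element of one of the two factors. -/
abbrev Syl (X : Set ℕ) : Type := Σ _ : Bool, Cox X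

/-- The product of a list of syllables in the free product. -/
def val {X : Set ℕ} (S : List (Syl X)) : FreeProd X := (S.map fun x => inj X x.1 x.2).prod

/-- `S` is the normal form of `w`: the reduced list of syllables with product `w`. -/
structure IsNF {X : Set ℕ} (hX : ∀ e ∈ X, Even e) (w : Cox X) (S : List (Syl X)) : Prop where
  ne_one : ∀ x ∈ S, x.2 ≠ 1
  chain : S.IsChain fun x y => x.1 ≠ y.1
  val_eq : val S = split hX w

lemma exists_nf {X : Set ℕ} (hX : ∀ e ∈ X, Even e) (w : Cox X) : ∃ S, IsNF hX w S := by
  classical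
  let W := Monoid.CoprodI.Word.equiv (split hX w)
  refine ⟨W.toList, W.ne_one, W.chain_ne, ?_⟩
  exact Monoid.CoprodI.Word.equiv.symm_apply_apply (split hX w)

lemma nf_unique {X : Set ℕ} {hX : ∀ e ∈ X, Even e} {w : Cox X} {S S' : List (Syl X)}
    (h : IsNF hX w S) (h' : IsNF hX w S') : S = S' := by
  classical
  let W : Monoid.CoprodI.Word (fun _ : Bool => Cox X) := ⟨S, h.ne_one, h.chain⟩
  let W' : Monoid.CoprodI.Word (fun _ : Bool => Cox X) := ⟨S', h'.ne_one, h'.chain⟩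
  have : W = W' := Monoid.CoprodI.Word.equiv.symm.injective (h.val_eq.trans h'.val_eq.symm)
  exact congrArg Monoid.CoprodI.Word.toList this

lemma nf_inj {X : Set ℕ} {hX : ∀ e ∈ X, Even e} {w w' : Cox X} {S : List (Syl X)}
    (h : IsNF hX w S) (h' : IsNF hX w' S) : w = w' :=
  split_injective hX (h.val_eq.symm.trans h'.val_eq)

lemma nf_append {X : Set ℕ} {hX : ∀ e ∈ X, Even e} {w w' : Cox X} {S S' : List (Syl X)}
    (h : IsNF hX w S) (h' : IsNF hX w' S')
    (hne : ∀ x ∈ S.getLast?, ∀ y ∈ S'.head?, x.1 ≠ y.1) : IsNF hX (w * w') (S ++ S') where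
  ne_one x hx := (List.mem_append.1 hx).elim (h.ne_one x) (h'.ne_one x)
  chain := List.isChain_append.2 ⟨h.chain, h'.chain, hne⟩
  val_eq := by
    rw [map_mul, ← h.val_eq, ← h'.val_eq, val, List.map_append, List.prod_append]; rfl

lemma nf_single {X : Set ℕ} {hX : ∀ e ∈ X, Even e} {w : Cox X} {c : Bool} (hw : w ≠ 1)
    (h : split hX w = inj X c w) : IsNF hX w [⟨c, w⟩] where
  ne_one x hx := by rw [List.mem_singleton.1 hx]; exact hw
  chain := List.isChain_singleton _
  val_eq := by simp [val, h]

/-- Apply a homomorphism to each syllable. -/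
def mapSyl {X Z : Set ℕ} (f : Cox X →* Cox Z) (S : List (Syl X)) : List (Syl Z) :=
  S.map fun x => ⟨x.1, f x.2⟩

lemma nf_map {X Z : Set ℕ} {hX : ∀ e ∈ X, Even e} {hZ : ∀ e ∈ Z, Even e} {f : Cox X →* Cox Z}
    (hf : ∀ i, split hZ (f (refl X i)) = inj Z (par i) (f (refl X i))) {w : Cox X}
    {S : List (Syl X)} (hne : ∀ x ∈ S, f x.2 ≠ 1) (hc : S.IsChain fun x y => x.1 ≠ y.1)
    (hv : val S = split hX w) : IsNF hZ (f w) (mapSyl f S) where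
  ne_one x hx := by
    obtain ⟨y, hy, rfl⟩ := List.mem_map.1 hx
    exact hne y hy
  chain := by
    rw [mapSyl, List.isChain_map]
    exact hc
  val_eq := by
    let F : FreeProd X →* FreeProd Z :=
      Monoid.CoprodI.lift (M := fun _ : Bool => Cox X) fun c => (inj Z c).comp f
    have hF : ∀ c x, F (inj X c x) = inj Z c (f x) := fun c x =>
      Monoid.CoprodI.lift_of (M := fun _ : Bool => Cox X) (fun c => (inj Z c).comp f) (i := c) x
    have h1 : F.comp (split hX) = (split hZ).comp f := cox_hom_ext fun i => by
      rw [MonoidHom.comp_apply, MonoidHom.comp_apply, split_refl, hF, hf]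
    have h2 : F (val S) = val (mapSyl f S) := by
      rw [val, map_list_prod, List.map_map, val, mapSyl, List.map_map]
      congr 1
    rw [← h2, hv, ← MonoidHom.comp_apply, h1, MonoidHom.comp_apply]

lemma mapSyl_head? {X Z : Set ℕ} {f : Cox X →* Cox Z} {S : List (Syl X)} {c : Bool}
    (h : ∀ x ∈ (mapSyl f S).head?, x.1 = c) : ∀ x ∈ S.head?, x.1 = c := by
  intro x hx
  exact h ⟨x.1, f x.2⟩ (by rw [mapSyl, List.head?_map, Option.mem_def.1 hx]; rfl)

lemma mapSyl_getLast? {X Z : Set ℕ} {f : Cox X →* Cox Z} {S : List (Syl X)} {c : Bool}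
    (h : ∀ x ∈ (mapSyl f S).getLast?, x.1 = c) : ∀ x ∈ S.getLast?, x.1 = c := by
  intro x hx
  exact h ⟨x.1, f x.2⟩ (by rw [mapSyl, List.getLast?_map, Option.mem_def.1 hx]; rfl)

lemma head?_mapSyl {X Z : Set ℕ} {f : Cox X →* Cox Z} {S : List (Syl X)} {c : Bool}
    (h : ∀ x ∈ S.head?, x.1 = c) : ∀ x ∈ (mapSyl f S).head?, x.1 = c := by
  intro x hx
  rw [mapSyl, List.head?_map] at hx
  obtain ⟨y, hy, rfl⟩ := Option.mem_map.1 hx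
  exact h y hy

lemma shift_nf {X : Set ℕ} {hX : ∀ e ∈ X, Even e} {w : Cox X} {S : List (Syl X)} {k : ℤ}
    (hk : Even k) (h : IsNF hX w S) :
    IsNF hX (shift X (.ofAdd k) w) (mapSyl (shift X (.ofAdd k)).toMonoidHom S) := by
  refine nf_map (f := (shift X (.ofAdd k)).toMonoidHom) (fun i => ?_) (fun x hx h1 => ?_) h.chain
    h.val_eq
  · have hp : par (i + k) = par i := by
      obtain ⟨m, rfl⟩ := hk
      simp only [par, decide_eq_decide]
      omega
    rw [MulEquiv.coe_toMonoidHom, shift_refl, split_refl, hp]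
  · exact h.ne_one x hx ((map_eq_one_iff _ (MulEquiv.injective _)).1 h1)

/-- Grouping a product of reflections into syllables; each syllable is the product of a contiguous
block of the given list (the first one of an initial block, for the sake of the induction). -/
lemma exists_syllables {X : Set ℕ} (hX : ∀ e ∈ X, Even e) (l : List ℤ) :
    ∃ S : List (Syl X), (S.IsChain fun x y => x.1 ≠ y.1) ∧ val S = split hX (prodRefl X l) ∧
      (∀ x ∈ S, ∃ m, m ≠ [] ∧ m <:+: l ∧ x.2 = prodRefl X m) ∧
      ∀ x ∈ S.head?, ∃ m, m ≠ [] ∧ m <+: l ∧ x.2 = prodRefl X m := by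
  induction l with
  | nil => exact ⟨[], List.isChain_nil, by simp [val], by simp, by simp⟩
  | cons i l ih =>
    obtain ⟨S, hc, hv, hm, hh⟩ := ih
    have hone : ∃ m, m ≠ [] ∧ m <+: i :: l ∧ refl X i = prodRefl X m :=
      ⟨[i], by simp, ⟨l, rfl⟩, by simp⟩
    have hcons : ∀ m, m <:+: l → m <:+: i :: l := fun m h => h.trans (List.suffix_cons i l).isInfix
    by_cases hS : ∀ x ∈ S.head?, par i ≠ x.1
    · refine ⟨⟨par i, refl X i⟩ :: S, List.isChain_cons.2 ⟨hS, hc⟩, ?_, ?_, ?_⟩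
      · rw [prodRefl_cons, map_mul, ← hv, split_refl]; simp [val]
      · intro x hx
        rcases List.mem_cons.1 hx with rfl | hx
        · obtain ⟨m, h1, h2, h3⟩ := hone
          exact ⟨m, h1, h2.isInfix, h3⟩
        · obtain ⟨m, h1, h2, h3⟩ := hm x hx
          exact ⟨m, h1, hcons m h2, h3⟩
      · intro x hx
        obtain rfl : _ = x := by simpa using hx
        exact hone
    · push Not at hS
      obtain ⟨x, hx, hp⟩ := hS
      obtain ⟨S', rfl⟩ : ∃ S', S = x :: S' := by
        cases S with
        | nil => simp at hx
        | cons y S' => exact ⟨S', by simpa using hx⟩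
      have hpre : ∃ m, m ≠ [] ∧ m <+: i :: l ∧ refl X i * x.2 = prodRefl X m := by
        obtain ⟨m, -, h2, h3⟩ := hh x hx
        exact ⟨i :: m, by simp, List.cons_prefix_cons.2 ⟨rfl, h2⟩, by rw [prodRefl_cons, h3]⟩
      refine ⟨⟨par i, refl X i * x.2⟩ :: S', ?_, ?_, ?_, ?_⟩
      · rw [List.isChain_cons] at hc ⊢
        exact ⟨fun y hy => by simpa [hp] using hc.1 y hy, hc.2⟩
      · rw [prodRefl_cons, map_mul, ← hv, split_refl]
        simp [val, hp, mul_assoc]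
      · intro y hy
        rcases List.mem_cons.1 hy with rfl | hy
        · obtain ⟨m, h1, h2, h3⟩ := hpre
          exact ⟨m, h1, h2.isInfix, h3⟩
        · obtain ⟨m, h1, h2, h3⟩ := hm y (by simp [hy])
          exact ⟨m, h1, hcons m h2, h3⟩
      · intro y hy
        obtain rfl : _ = y := by simpa using hy
        exact hpre

/-- Unique parsing: the first element violating `P` determines a splitting of a list. -/
lemma parse_unique {α : Type*} (P : α → Prop) {S S' T T' : List α} {x x' : α}
    (hS : ∀ y ∈ S, P y) (hS' : ∀ y ∈ S', P y) (hx : ¬ P x) (hx' : ¬ P x')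
    (h : S ++ x :: T = S' ++ x' :: T') : S = S' ∧ x = x' := by
  induction S generalizing S' with
  | nil =>
    cases S' with
    | nil => simp at h; exact ⟨rfl, h.1⟩
    | cons y S' =>
      simp only [List.nil_append, List.cons_append, List.cons.injEq] at h
      exact absurd (hS' y (by simp)) (h.1 ▸ hx)
  | cons z S ih =>
    cases S' with
    | nil =>
      simp only [List.nil_append, List.cons_append, List.cons.injEq] at h
      exact absurd (hS z (by simp)) (h.1 ▸ hx')
    | cons y S' =>
      simp only [List.cons_append, List.cons.injEq] at h
      obtain ⟨rfl, h⟩ := h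
      obtain ⟨rfl, rfl⟩ := ih (fun y hy => hS y (by simp [hy])) (fun y hy => hS' y (by simp [hy])) h
      exact ⟨rfl, rfl⟩

/-! ### Word length and minimal walks -/

/-- The length of a shortest walk representing `a`. -/
noncomputable def wlen (Y : Set ℕ) (a : Ext Y) : ℕ := sInf {n | a ∈ walkBall Y n}

lemma wlen_le {Y : Set ℕ} {a : Ext Y} {n : ℕ} (h : a ∈ walkBall Y n) : wlen Y a ≤ n := Nat.sInf_le h

lemma mem_walkBall_wlen {Y : Set ℕ} {a : Ext Y} {n : ℕ} (h : a ∈ walkBall Y n) :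
    a ∈ walkBall Y (wlen Y a) := Nat.sInf_mem (s := {n | a ∈ walkBall Y n}) ⟨n, h⟩

/-- A shortest walk emitting as few reflections as possible has no contiguous block of emitted
reflections with trivial product: such a block could be dropped. -/
lemma exists_minimal_walk {Y : Set ℕ} {a : Ext Y} {n : ℕ} (h : a ∈ walkBall Y n) :
    ∃ l p, cost 0 l p ≤ wlen Y a ∧ a = ext Y (prodRefl Y l) p ∧
      ∀ m, m ≠ [] → m <:+: l → prodRefl Y m ≠ 1 := by
  classical
  let P : ℕ → Prop := fun k => ∃ l p, l.length = k ∧ cost 0 l p ≤ wlen Y a ∧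
    a = ext Y (prodRefl Y l) p
  have hP : ∃ k, P k := by
    obtain ⟨l, p, hc, ha⟩ := mem_walkBall_wlen h
    exact ⟨_, l, p, rfl, hc, ha⟩
  obtain ⟨l, p, hl, hc, ha⟩ := Nat.find_spec hP
  refine ⟨l, p, hc, ha, ?_⟩
  rintro m hm ⟨l₁, l₂, rfl⟩ h1
  have hpos : 0 < m.length := List.length_pos_iff.2 hm
  refine Nat.find_min hP (m := (l₁ ++ l₂).length) ?_
    ⟨l₁ ++ l₂, p, rfl, (cost_remove 0 l₁ m l₂ p).trans hc, ?_⟩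
  · rw [← hl]; simp only [List.length_append]; omega
  · rw [ha]; simp [h1]

/-! ### Elements whose normal form starts and ends with an odd syllable -/

/-- `a = w tᵖ` with `p` even, and the normal form of `w` starts and ends with an odd syllable. -/
def Good {Y : Set ℕ} (hY : ∀ e ∈ Y, Even e) (a : Ext Y) : Prop :=
  Even a.right.toAdd ∧ ∃ S, IsNF hY a.left S ∧ S ≠ [] ∧ (∀ x ∈ S.head?, x.1 = true) ∧
    ∀ x ∈ S.getLast?, x.1 = true

lemma nf_refl {Y : Set ℕ} (hY : ∀ e ∈ Y, Even e) {q : ℤ} (hq : Even q) :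
    IsNF hY (refl Y (q + 1)) [⟨true, refl Y (q + 1)⟩] := by
  refine nf_single (refl_ne_one _ _) ?_
  have : par (q + 1) = true := by
    obtain ⟨k, rfl⟩ := hq
    simp only [par, decide_eq_true_eq]
    omega
  rw [split_refl, this]

lemma exists_odd_ends {Y : Set ℕ} (hY : ∀ e ∈ Y, Even e) (w : Cox Y) {q : ℤ} (hq : Even q) :
    ∃ c d : Bool, ∃ S, IsNF hY ((if c then refl Y 1 else 1) * w *
        (if d then refl Y (q + 1) else 1)) S ∧ S ≠ [] ∧ (∀ x ∈ S.head?, x.1 = true) ∧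
      ∀ x ∈ S.getLast?, x.1 = true := by
  have step1 : ∃ c : Bool, ∃ S, IsNF hY ((if c then refl Y 1 else 1) * w) S ∧ S ≠ [] ∧
      ∀ x ∈ S.head?, x.1 = true := by
    obtain ⟨S, hS⟩ := exists_nf hY w
    by_cases h : S ≠ [] ∧ ∀ x ∈ S.head?, x.1 = true
    · exact ⟨false, S, by simpa using hS, h.1, h.2⟩
    · have h1 := nf_refl hY (q := 0) ⟨0, rfl⟩
      rw [zero_add] at h1
      refine ⟨true, ⟨true, refl Y 1⟩ :: S, ?_, by simp, by simp⟩
      refine nf_append h1 hS ?_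
      intro x hx y hy
      obtain rfl : _ = x := by simpa using hx
      cases S with
      | nil => simp at hy
      | cons z S =>
        obtain rfl : z = y := by simpa using hy
        intro hz
        exact h ⟨by simp, by simpa using hz.symm⟩
  obtain ⟨c, S, hS, hne, hh⟩ := step1
  by_cases h : ∀ x ∈ S.getLast?, x.1 = true
  · exact ⟨c, false, S, by simpa using hS, hne, hh, h⟩
  · refine ⟨c, true, S ++ [⟨true, refl Y (q + 1)⟩], ?_, by simp, ?_, by simp⟩
    · refine nf_append hS (nf_refl hY hq) ?_
      intro x hx y hy
      obtain rfl : _ = y := by simpa using hy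
      intro hxt
      exact h fun z hz => by rw [Option.mem_unique hz hx]; exact hxt
    · rwa [List.head?_append_of_ne_nil _ hne]

/-- The left corrections used to make an element `Good`. -/
def corrL (Y : Set ℕ) (c : Bool × Bool × Bool) : Ext Y := ext Y (if c.1 then refl Y 1 else 1) 0

/-- The right corrections used to make an element `Good`. -/
def corrR (Y : Set ℕ) (c : Bool × Bool × Bool) : Ext Y :=
  tt Y (if c.2.1 then 1 else 0) * ext Y (if c.2.2 then refl Y 1 else 1) 0

/-- Up to multiplication by one of eight pairs of short elements, every element is `Good`. -/
lemma exists_corr {Y : Set ℕ} (hY : ∀ e ∈ Y, Even e) (a : Ext Y) :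
    ∃ c, Good hY (corrL Y c * a * corrR Y c) := by
  obtain ⟨w, p, rfl⟩ := exists_ext a
  obtain ⟨ε, hε⟩ : ∃ ε : Bool, Even (p + if ε then 1 else 0) := by
    rcases Int.even_or_odd p with h | h
    · exact ⟨false, by simpa using h⟩
    · exact ⟨true, by simpa using h.add_one⟩
  obtain ⟨c, d, S, hS, h1, h2, h3⟩ := exists_odd_ends hY w hε
  refine ⟨(c, ε, d), ?_⟩
  have : corrL Y (c, ε, d) * ext Y w p * corrR Y (c, ε, d) = ext Y ((if c then refl Y 1 else 1) * w *
      (if d then refl Y ((p + if ε then 1 else 0) + 1) else 1)) (p + if ε then 1 else 0) := by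
    rw [corrL, corrR, ext_mul, shift_zero, ext_mul, ext_mul, one_mul, add_zero, zero_add, ext_inj]
    refine ⟨?_, rfl⟩
    congr 1
    cases d
    · simp
    · simp only [if_true, shift_refl]
      congr 1
      ring
  rw [this]
  exact ⟨hε, S, hS, h1, h2, h3⟩

lemma corr_mem {Y : Set ℕ} {a : Ext Y} {n : ℕ} (h : a ∈ walkBall Y n) (c : Bool × Bool × Bool) :
    corrL Y c * a * corrR Y c ∈ walkBall Y (n + 5) := by
  have h1 : ∀ d : Bool, ext Y (if d then refl Y 1 else 1) 0 ∈ walkBall Y 2 := by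
    intro d
    cases d
    · exact one_mem_walkBall Y _
    · exact ⟨[1], 0, by simp [cost], by simp⟩
  have h2 : tt Y (if c.2.1 then 1 else 0) ∈ walkBall Y 1 := by
    refine walkBall_mono Y ?_ (tt_mem_walkBall Y _)
    split_ifs <;> simp
  have := mul_mem_walkBall (mul_mem_walkBall (h1 c.1) h) (mul_mem_walkBall h2 (h1 c.2.2))
  exact walkBall_mono Y (by omega) this

/-! ### The separator -/

/-- The element `(σ p * σ (p + L))¹⁰⁰`. It becomes trivial once the label `L` is added. -/
def sep (X : Set ℕ) (L : ℕ) (p : ℤ) : Cox X := (refl X p * refl X (p + L)) ^ 100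

lemma shift_sep (X : Set ℕ) (L : ℕ) (p : ℤ) : shift X (.ofAdd p) (sep X L 0) = sep X L p := by
  rw [sep, map_pow, map_mul, shift_refl, shift_refl, zero_add, zero_add, add_comm (L : ℤ) p, sep]

lemma sep_mem (X : Set ℕ) (L : ℕ) : ext X (sep X L 0) 0 ∈ walkBall X (100 * (2 * L)) := by
  rw [sep, ← ext_pow]
  refine pow_mem_walkBall ⟨[0, 0 + L], 0, ?_, by simp⟩ 100
  simp only [cost]
  omega

lemma nf_sep {X : Set ℕ} (hX : ∀ e ∈ X, Even e) {L : ℕ} (hL : L ∉ X) (hL0 : 0 < L) (hLe : Even L)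
    {p : ℤ} (hp : Even p) : IsNF hX (sep X L p) [⟨false, sep X L p⟩] := by
  refine nf_single (dihedral_relator hL hL0 p).1 ?_
  obtain ⟨k, rfl⟩ := hp
  obtain ⟨j, hj⟩ := hLe
  have h1 : par (k + k) = false := by simp only [par, decide_eq_false_iff_not]; omega
  have h2 : par (k + k + L) = false := by simp only [par, decide_eq_false_iff_not]; omega
  rw [sep, map_pow, map_mul, split_refl, split_refl, h1, h2, ← map_mul, ← map_pow]

lemma coxRetract_cases {X Y : Set ℕ} {ρ : ℕ} (h : ∀ e ∈ X, e ≤ 2 * ρ → e ∈ Y) (i : ℤ) :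
    coxRetract ρ h (refl X i) = refl Y i ∨ coxRetract ρ h (refl X i) = 1 := by
  rw [coxRetract, coxLift_refl]
  split_ifs
  · exact .inl rfl
  · exact .inr rfl

lemma coxRetract_sep {X Y : Set ℕ} {ρ : ℕ} (h : ∀ e ∈ X, e ≤ 2 * ρ → e ∈ Y) {L : ℕ} (hL : L ∈ Y)
    (p : ℤ) : coxRetract ρ h (sep X L p) = 1 := by
  have hpow : ∀ i, refl Y i ^ 100 = 1 := fun i => by
    rw [show (100 : ℕ) = 2 * 50 from rfl, pow_mul, refl_sq, one_pow]
  rw [sep, map_pow, map_mul]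
  rcases coxRetract_cases h p with h1 | h1 <;> rcases coxRetract_cases h (p + L) with h2 | h2 <;>
    rw [h1, h2]
  · exact refl_mul_pow (by simpa using hL)
  · rw [mul_one, hpow]
  · rw [one_mul, hpow]
  · rw [one_mul, one_pow]

/-- A `Good` element of `Ext Y` has a shortest walk whose lift to `Ext X` has a normal form with odd
ends, none of whose syllables lies in the kernel of the retraction `Cox X → Cox Y`. -/
lemma exists_lift {X Y : Set ℕ} (hX : ∀ e ∈ X, Even e) (hY : ∀ e ∈ Y, Even e) {ρ : ℕ}
    (h : ∀ e ∈ X, e ≤ 2 * ρ → e ∈ Y) {a : Ext Y} (ha : a ∈ walkBall Y ρ) (hg : Good hY a) :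
    ∃ l p S, cost 0 l p ≤ wlen Y a ∧ a = ext Y (prodRefl Y l) p ∧ Even p ∧
      coxRetract ρ h (prodRefl X l) = prodRefl Y l ∧
      IsNF hX (prodRefl X l) S ∧ (∀ x ∈ S, coxRetract ρ h x.2 ≠ 1) ∧ S ≠ [] ∧
      (∀ x ∈ S.head?, x.1 = true) ∧ ∀ x ∈ S.getLast?, x.1 = true := by
  obtain ⟨l, p, hc, rfl, hmin⟩ := exists_minimal_walk ha
  obtain ⟨hp, S', hS', hne, hh, hl⟩ := hg
  have hρ : ∀ i ∈ l, i.natAbs ≤ ρ := fun i hi => by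
    have h1 := natAbs_le_cost (q := 0) (p := p) hi
    have h2 := wlen_le ha
    rw [sub_zero] at h1
    omega
  obtain ⟨S, hchain, hval, hm, -⟩ := exists_syllables hX l
  have hker : ∀ x ∈ S, coxRetract ρ h x.2 ≠ 1 := by
    intro x hx
    obtain ⟨m, hm0, hml, hxm⟩ := hm x hx
    rw [hxm, coxRetract_prodRefl h fun i hi => hρ i (hml.subset hi)]
    exact hmin m hm0 hml
  have hred := coxRetract_prodRefl h hρ
  have hmap : IsNF hY (coxRetract ρ h (prodRefl X l)) (mapSyl (coxRetract ρ h) S) := by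
    refine nf_map (fun i => ?_) hker hchain hval
    rcases coxRetract_cases h i with h1 | h1 <;> rw [h1]
    · exact split_refl _ _
    · rw [map_one, map_one]
  rw [hred] at hmap
  obtain rfl := nf_unique hS' hmap
  refine ⟨l, p, S, hc, rfl, hp, hred, ⟨fun x hx h1 => hker x hx (by rw [h1, map_one]), hchain, hval⟩,
    hker, ?_, mapSyl_head? hh, mapSyl_getLast? hl⟩
  rintro rfl
  exact hne rfl

/-! ### The renewal inequality -/

/-- The elements of the walk ball whose normal form does not start with an even syllable. -/
def oddBall {X : Set ℕ} (hX : ∀ e ∈ X, Even e) (n : ℕ) : Set (Ext X) :=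
  {g | g ∈ walkBall X n ∧ ∃ S, IsNF hX g.left S ∧ ∀ x ∈ S.head?, x.1 = true}

lemma finite_oddBall {X : Set ℕ} (hX : ∀ e ∈ X, Even e) (n : ℕ) : (oddBall hX n).Finite :=
  (finite_walkBall X n).subset fun _ h => h.1

lemma one_le_ncard_oddBall {X : Set ℕ} (hX : ∀ e ∈ X, Even e) (n : ℕ) :
    1 ≤ (oddBall hX n).ncard := by
  rw [Nat.one_le_iff_ne_zero, ← Nat.pos_iff_ne_zero, Set.ncard_pos (finite_oddBall hX n)]
  refine ⟨1, one_mem_walkBall X n, [], ⟨by simp, List.isChain_nil, ?_⟩, by simp⟩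
  simp [val]

/-- Prefixing by lifts of `Good` elements followed by the separator is injective, because the prefix
can be recovered from the normal form: it ends at the first syllable in the kernel of the
retraction. -/
lemma renewal {X Y : Set ℕ} (hX : ∀ e ∈ X, Even e) (hY : ∀ e ∈ Y, Even e) {ρ L : ℕ}
    (h : ∀ e ∈ X, e ≤ 2 * ρ → e ∈ Y) (hLX : L ∉ X) (hLY : L ∈ Y) (hL0 : 0 < L)
    (A : Finset (Ext Y)) (hA : ∀ a ∈ A, a ∈ walkBall Y ρ ∧ Good hY a) (n : ℕ)
    (hn : ρ + 100 * (2 * L) ≤ n) :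
    ∑ a ∈ A, (oddBall hX (n - (wlen Y a + 100 * (2 * L)))).ncard ≤ (oddBall hX n).ncard := by
  classical
  have hLe := hY L hLY
  have key : ∀ a : Ext Y, ∃ l p S, a ∈ A → cost 0 l p ≤ wlen Y a ∧ a = ext Y (prodRefl Y l) p ∧
      Even p ∧ coxRetract ρ h (prodRefl X l) = prodRefl Y l ∧
      IsNF hX (prodRefl X l) S ∧ (∀ x ∈ S, coxRetract ρ h x.2 ≠ 1) ∧ S ≠ [] ∧
      (∀ x ∈ S.head?, x.1 = true) ∧ ∀ x ∈ S.getLast?, x.1 = true := by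
    intro a
    by_cases ha : a ∈ A
    · obtain ⟨l, p, S, hh⟩ := exists_lift hX hY h (hA a ha).1 (hA a ha).2
      exact ⟨l, p, S, fun _ => hh⟩
    · exact ⟨[], 0, [], fun h => absurd h ha⟩
  choose l p S hlpS using key
  let x : Ext Y → Ext X := fun a => ext X (prodRefl X (l a)) (p a) * ext X (sep X L 0) 0
  have hxg : ∀ a g, x a * g =
      ext X (prodRefl X (l a) * sep X L (p a) * shift X (.ofAdd (p a)) g.left)
        (p a + g.right.toAdd) := by
    intro a g
    have h1 : x a = ext X (prodRefl X (l a) * sep X L (p a)) (p a) := by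
      simp only [x]
      rw [ext_mul, shift_sep, add_zero]
    rw [h1]
    exact ext_mul X _ g.left _ g.right.toAdd
  have hnf : ∀ a ∈ A, ∀ g : Ext X, ∀ T, IsNF hX g.left T → (∀ y ∈ T.head?, y.1 = true) →
      ∃ T', IsNF hX (x a * g).left (S a ++ ⟨false, sep X L (p a)⟩ :: T') := by
    intro a ha g T hT hT1
    obtain ⟨-, -, hp, -, hS, -, hne, hh, hl⟩ := hlpS a ha
    refine ⟨mapSyl (shift X (.ofAdd (p a))).toMonoidHom T, ?_⟩
    · rw [hxg, mul_assoc]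
      change IsNF hX (prodRefl X (l a) * (sep X L (p a) * shift X (.ofAdd (p a)) g.left)) _
      refine nf_append hS (nf_append (nf_sep hX hLX hL0 hLe hp) (shift_nf hp hT) ?_) ?_
      · intro y hy z hz
        obtain rfl : _ = y := by simpa using hy
        rw [head?_mapSyl hT1 z hz]
        simp
      · intro y hy z hz
        obtain rfl : _ = z := by simpa using hz
        rw [hl y hy]
        simp
  calc ∑ a ∈ A, (oddBall hX (n - (wlen Y a + 100 * (2 * L)))).ncard
      = (A.sigma fun a =>
          (finite_oddBall hX (n - (wlen Y a + 100 * (2 * L)))).toFinset).card := by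
        rw [Finset.card_sigma]
        exact Finset.sum_congr rfl fun a _ => Set.ncard_eq_toFinset_card _ _
    _ ≤ (finite_oddBall hX n).toFinset.card := by
        refine Finset.card_le_card_of_injOn (fun y => x y.1 * y.2) ?_ ?_
        · rintro ⟨a, g⟩ hy
          rw [Finset.mem_coe, Finset.mem_sigma, Set.Finite.mem_toFinset] at hy
          obtain ⟨ha, hg, T, hT, hT1⟩ := hy
          obtain ⟨T', hT'⟩ := hnf a ha g T hT hT1
          obtain ⟨hc, -, -, -, -, -, hne, hh, -⟩ := hlpS a ha
          rw [Finset.mem_coe, Set.Finite.mem_toFinset]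
          refine ⟨?_, _, hT', ?_⟩
          · have h1 : x a ∈ walkBall X (wlen Y a + 100 * (2 * L)) :=
              mul_mem_walkBall ⟨_, _, hc, rfl⟩ (sep_mem X L)
            have h2 := mul_mem_walkBall h1 hg
            have h3 := wlen_le (hA a ha).1
            rwa [Nat.add_sub_cancel' (by omega)] at h2
          · rwa [List.head?_append_of_ne_nil _ hne]
        · rintro ⟨a, g⟩ hy ⟨a', g'⟩ hy' heq
          rw [Finset.mem_coe, Finset.mem_sigma, Set.Finite.mem_toFinset] at hy hy'
          obtain ⟨ha, hg, T, hT, hT1⟩ := hy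
          obtain ⟨ha', hg', T₂, hT₂, hT₂1⟩ := hy'
          simp only at heq ha ha' hT hT₂
          obtain ⟨T', hT'⟩ := hnf a ha g T hT hT1
          obtain ⟨T₂', hT₂'⟩ := hnf a' ha' g' T₂ hT₂ hT₂1
          rw [heq] at hT'
          obtain ⟨-, h2, -, h4, h5, h6, -⟩ := hlpS a ha
          obtain ⟨-, k2, -, k4, k5, k6, -⟩ := hlpS a' ha'
          have hker : ∀ q, ¬ coxRetract ρ h (⟨false, sep X L q⟩ : Syl X).2 ≠ 1 := fun q =>
            not_not.2 (coxRetract_sep h hLY q)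
          obtain ⟨hSS, hsep⟩ := parse_unique (fun y : Syl X => coxRetract ρ h y.2 ≠ 1) h6 k6
            (hker (p a)) (hker (p a')) (nf_unique hT' hT₂')
          have hpp : p a = p a' :=
            (dihedral_relator hLX hL0 (p a)).2 _ (congrArg (fun y : Syl X => y.2) hsep)
          rw [← hSS] at k5
          have hll := nf_inj h5 k5
          obtain rfl : a = a' := by
            rw [h2, k2, ← h4, ← k4, hll, hpp]
          rw [mul_left_cancel heq]
    _ = _ := (Set.ncard_eq_toFinset_card _ _).symm

/-! ### Comparison of growth rates -/

/-- Relators with large exponents cannot compensate for the omission of the relator with exponent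
`L`. -/
theorem growthRate_lt {F : Set ℕ} {L : ℕ} (hF : ∀ e ∈ F, Even e) (hL : Even L) (hL0 : 0 < L) :
    ∃ R₀ : ℕ, ∀ X : Set ℕ, (∀ e ∈ X, Even e) → L ∉ X → (∀ e ∈ X, e ≤ R₀ → e ∈ F) →
      growthRate (gens (insert L F)) < growthRate (gens X) := by
  classical
  set Y := insert L F with hYdef
  have hY : ∀ e ∈ Y, Even e := by
    rintro e (rfl | he)
    · exact hL
    · exact hF e he
  set v := growthRate (gens Y) with hv
  have hv1 : 1 ≤ v := one_le_growthRate (finite_gens Y)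
  have hv0 : 0 < v := by linarith
  have hz0 : 0 < v⁻¹ := by positivity
  have hz1 : v⁻¹ ≤ 1 := inv_le_one_of_one_le₀ hv1
  set N := 100 * (2 * L) with hN
  obtain ⟨R, hR⟩ := exists_lt_sum_pow (walkBall Y) (walkBall_mono Y) (finite_walkBall Y) hz0 hz1
    (fun n => by
      have h1 : v ^ n ≤ (walkBall Y n).ncard :=
        (growthRate_pow_le (finite_gens Y) n).trans (by exact_mod_cast card_ball_le_ncard Y n)
      rwa [inv_pow, ← div_eq_mul_inv, one_le_div (by positivity)])
    (le_ncard_walkBall Y) (8 * v ^ (5 + N))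
  set A := (finite_walkBall Y (R + 5)).toFinset.filter (Good hY) with hA
  have hAmem : ∀ a ∈ A, a ∈ walkBall Y (R + 5) ∧ Good hY a := fun a ha => by
    rw [hA, Finset.mem_filter, Set.Finite.mem_toFinset] at ha
    exact ha
  -- each of the eight correction pairs maps the elements it makes `Good` injectively into `A`
  have hsum : ∑ a ∈ (finite_walkBall Y R).toFinset, v⁻¹ ^ (wlen Y a + 5) ≤
      8 * ∑ a ∈ A, v⁻¹ ^ wlen Y a := by
    let B := (finite_walkBall Y R).toFinset
    let φ : Bool × Bool × Bool → Ext Y → Ext Y := fun c a => corrL Y c * a * corrR Y c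
    have hB : ∀ a ∈ B, a ∈ walkBall Y R := fun a ha => (Set.Finite.mem_toFinset _).1 ha
    calc ∑ a ∈ B, v⁻¹ ^ (wlen Y a + 5)
        ≤ ∑ a ∈ B, ∑ c, if φ c a ∈ A then v⁻¹ ^ wlen Y (φ c a) else 0 := by
          refine Finset.sum_le_sum fun a ha => ?_
          obtain ⟨c, hc⟩ := exists_corr hY a
          have hmem : φ c a ∈ A := by
            rw [hA, Finset.mem_filter, Set.Finite.mem_toFinset]
            exact ⟨corr_mem (hB a ha) c, hc⟩
          have hle : wlen Y (φ c a) ≤ wlen Y a + 5 :=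
            wlen_le (corr_mem (mem_walkBall_wlen (hB a ha)) c)
          calc v⁻¹ ^ (wlen Y a + 5) ≤ v⁻¹ ^ wlen Y (φ c a) :=
                pow_le_pow_of_le_one hz0.le hz1 hle
            _ = if φ c a ∈ A then v⁻¹ ^ wlen Y (φ c a) else 0 := (if_pos hmem).symm
            _ ≤ _ := Finset.single_le_sum
                (f := fun c => if φ c a ∈ A then v⁻¹ ^ wlen Y (φ c a) else 0)
                (fun c _ => by split_ifs <;> positivity) (Finset.mem_univ c)
      _ = ∑ c, ∑ a ∈ B, if φ c a ∈ A then v⁻¹ ^ wlen Y (φ c a) else 0 := Finset.sum_comm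
      _ ≤ ∑ _c : Bool × Bool × Bool, ∑ a ∈ A, v⁻¹ ^ wlen Y a := by
          refine Finset.sum_le_sum fun c _ => ?_
          rw [← Finset.sum_filter]
          have hinj : Set.InjOn (φ c) (B.filter fun a => φ c a ∈ A) := fun a _ b _ hab =>
            mul_left_cancel (mul_right_cancel hab)
          rw [← Finset.sum_image (f := fun a => v⁻¹ ^ wlen Y a) hinj]
          refine Finset.sum_le_sum_of_subset_of_nonneg ?_ fun _ _ _ => by positivity
          intro b hb
          obtain ⟨a, ha, rfl⟩ := Finset.mem_image.1 hb
          exact (Finset.mem_filter.1 ha).2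
      _ = 8 * ∑ a ∈ A, v⁻¹ ^ wlen Y a := by simp
  have hbig : 1 < ∑ a ∈ A, v⁻¹ ^ (wlen Y a + N) := by
    have h1 : 8 * v ^ (5 + N) * v⁻¹ ^ (5 + N) <
        (∑ a ∈ (finite_walkBall Y R).toFinset, v⁻¹ ^ wlen Y a) * v⁻¹ ^ (5 + N) :=
      mul_lt_mul_of_pos_right hR (by positivity)
    rw [mul_assoc, ← mul_pow, mul_inv_cancel₀ hv0.ne', one_pow, mul_one] at h1
    have h2 : (∑ a ∈ (finite_walkBall Y R).toFinset, v⁻¹ ^ wlen Y a) * v⁻¹ ^ (5 + N) =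
        (∑ a ∈ (finite_walkBall Y R).toFinset, v⁻¹ ^ (wlen Y a + 5)) * v⁻¹ ^ N := by
      rw [Finset.sum_mul, Finset.sum_mul]
      exact Finset.sum_congr rfl fun a _ => by ring
    have h3 : ∑ a ∈ A, v⁻¹ ^ (wlen Y a + N) = (∑ a ∈ A, v⁻¹ ^ wlen Y a) * v⁻¹ ^ N := by
      rw [Finset.sum_mul]
      exact Finset.sum_congr rfl fun a _ => pow_add _ _ _
    have h4 := mul_le_mul_of_nonneg_right hsum (show (0 : ℝ) ≤ v⁻¹ ^ N by positivity)
    rw [h3]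
    linarith
  obtain ⟨z, hzpos, hzlt, hz⟩ := exists_smaller_root A (fun a => wlen Y a + N) hz0 hbig
  refine ⟨2 * (R + 5), fun X hX hLX hXF => ?_⟩
  have hXY : ∀ e ∈ X, e ≤ 2 * (R + 5) → e ∈ Y := fun e he h => Or.inr (hXF e he h)
  have hlow := renewal_lower_bound A (fun a => wlen Y a + N) (fun n => (oddBall hX n).ncard)
    (R + 5 + N) (fun a ha => ⟨by omega, by have := wlen_le (hAmem a ha).1; omega⟩)
    (one_le_ncard_oddBall hX)
    (fun n hn => renewal hX hY hXY hLX (Or.inl rfl) hL0 A hAmem n hn) hzpos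
    (hzlt.le.trans hz1) hz
  have : z⁻¹ ≤ growthRate (gens X) := by
    refine le_growthRate (finite_gens X) (κ := z ^ (R + 5 + N) / 2) (by positivity) (by positivity)
      fun n => ?_
    have h1 := hlow n
    have h2 : ((oddBall hX n).ncard : ℝ) ≤ 2 * Nat.card (ball (gens X) n) := by
      exact_mod_cast (Set.ncard_le_ncard (fun _ hg => hg.1 : oddBall hX n ⊆ walkBall X n)
        (finite_walkBall X n)).trans
        (ncard_walkBall_le X n)
    have h3 : z ^ (R + 5 + N) / 2 * z⁻¹ ^ n = (z ^ (R + 5 + N) * z⁻¹ ^ n) / 2 := by ring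
    rw [h3]
    linarith
  exact ((lt_inv_comm₀ hv0 hzpos).2 hzlt).trans_le this

/-! ### The sequence of exponents -/

/-- The bound of `growthRate_lt` can be chosen to depend on `L` only, if `F` is bounded by `L`. -/
lemma exists_radius : ∃ ρ : ℕ → ℕ, ∀ (F : Set ℕ) (L : ℕ), (∀ e ∈ F, Even e) → Even L → 0 < L →
    (∀ e ∈ F, e ≤ L) → ∀ X : Set ℕ, (∀ e ∈ X, Even e) → L ∉ X → (∀ e ∈ X, e ≤ ρ L → e ∈ F) →
      growthRate (gens (insert L F)) < growthRate (gens X) := by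
  classical
  have key : ∀ (F : Set ℕ) (L : ℕ), ∃ R₀ : ℕ, (∀ e ∈ F, Even e) → Even L → 0 < L →
      ∀ X : Set ℕ, (∀ e ∈ X, Even e) → L ∉ X → (∀ e ∈ X, e ≤ R₀ → e ∈ F) →
        growthRate (gens (insert L F)) < growthRate (gens X) := by
    intro F L
    by_cases h : (∀ e ∈ F, Even e) ∧ Even L ∧ 0 < L
    · obtain ⟨R₀, hR⟩ := growthRate_lt h.1 h.2.1 h.2.2
      exact ⟨R₀, fun _ _ _ => hR⟩
    · exact ⟨0, fun h1 h2 h3 => absurd ⟨h1, h2, h3⟩ h⟩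
  choose r hr using key
  -- there are only finitely many sets `F` of numbers at most `L`
  refine ⟨fun L => (Finset.range (L + 1)).powerset.sup fun F => r (F : Set ℕ) L, ?_⟩
  intro F L hF hL hL0 hFL X hX hLX hXF
  refine hr F L hF hL hL0 X hX hLX fun e he hle => hXF e he (hle.trans ?_)
  have hfin : F.Finite := (Set.finite_Iic L).subset hFL
  have hmem : hfin.toFinset ∈ (Finset.range (L + 1)).powerset := by
    rw [Finset.mem_powerset]
    intro e he
    have := hFL e (hfin.mem_toFinset.1 he)
    rw [Finset.mem_range]
    omega
  have := Finset.le_sup (f := fun F : Finset ℕ => r (F : Set ℕ) L) hmem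
  simpa using this

/-- A rapidly increasing sequence of even numbers. -/
def expo (ρ : ℕ → ℕ) : ℕ → ℕ
  | 0 => 2
  | i + 1 => 2 * (expo ρ i + ρ (expo ρ i) + 1)

lemma expo_even (ρ : ℕ → ℕ) (i : ℕ) : Even (expo ρ i) := by
  cases i
  · exact even_two
  · exact even_two_mul _

lemma expo_strictMono (ρ : ℕ → ℕ) : StrictMono (expo ρ) :=
  strictMono_nat_of_lt_succ fun i => by rw [expo]; omega

lemma expo_pos (ρ : ℕ → ℕ) (i : ℕ) : 0 < expo ρ i :=
  Nat.lt_of_lt_of_le (show 0 < expo ρ 0 from Nat.two_pos) ((expo_strictMono ρ).monotone i.zero_le)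

lemma lt_expo {ρ : ℕ → ℕ} {i k : ℕ} (h : i < k) : ρ (expo ρ i) < expo ρ k := by
  refine Nat.lt_of_lt_of_le ?_ ((expo_strictMono ρ).monotone (Nat.succ_le_of_lt h))
  rw [Nat.succ_eq_add_one, expo]
  omega

/-- At the first index where two sets of indices differ, the set containing it has the smaller growth
rate. -/
lemma growthRate_lt_of_first {ρ : ℕ → ℕ}
    (hρ : ∀ (F : Set ℕ) (L : ℕ), (∀ e ∈ F, Even e) → Even L → 0 < L →
      (∀ e ∈ F, e ≤ L) → ∀ X : Set ℕ, (∀ e ∈ X, Even e) → L ∉ X → (∀ e ∈ X, e ≤ ρ L → e ∈ F) →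
        growthRate (gens (insert L F)) < growthRate (gens X))
    {I J : Set ℕ} {i : ℕ} (hI : i ∉ I) (hJ : i ∈ J) (hIJ : ∀ k < i, k ∈ I ↔ k ∈ J) :
    growthRate (gens (expo ρ '' J)) < growthRate (gens (expo ρ '' I)) := by
  have hmono := expo_strictMono ρ
  have heven : ∀ K : Set ℕ, ∀ e ∈ expo ρ '' K, Even e := by
    rintro K _ ⟨k, -, rfl⟩
    exact expo_even ρ k
  have hsub : insert (expo ρ i) (expo ρ '' {k | k < i ∧ k ∈ J}) ⊆ expo ρ '' J := by
    rintro _ (rfl | ⟨k, hk, rfl⟩)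
    · exact ⟨i, hJ, rfl⟩
    · exact ⟨k, hk.2, rfl⟩
  refine (growthRate_mono hsub).trans_lt ?_
  refine hρ _ _ (heven _) (expo_even ρ i) (expo_pos ρ i) ?_ _ (heven I) ?_ ?_
  · rintro _ ⟨k, hk, rfl⟩
    exact (hmono hk.1).le
  · rintro ⟨k, hk, hki⟩
    exact hI (hmono.injective hki ▸ hk)
  · rintro _ ⟨k, hk, rfl⟩ hle
    rcases lt_trichotomy k i with h | h | h
    · exact ⟨k, ⟨h, (hIJ k h).1 hk⟩, rfl⟩
    · exact absurd (h ▸ hk) hI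
    · exact absurd (lt_expo h) (not_lt.2 hle)

lemma growthRate_congr {R : Set (FreeGroup Bool)} {X : Set ℕ} (h : R = growRels X) :
    growthRate (Set.range (PresentedGroup.of (rels := R))) = growthRate (gens X) := by
  subst h
  rfl

lemma rels_eq (E : ℕ → ℕ) (I : Set ℕ) :
    {r : FreeGroup Bool | ∃ i ∈ I,
      r = ((FreeGroup.of true ^ E i) * (FreeGroup.of false ^ E i)) ^ 100} = growRels (E '' I) := by
  ext r
  constructor
  · rintro ⟨i, hi, hr⟩
    exact ⟨E i, ⟨i, hi, rfl⟩, hr⟩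
  · rintro ⟨_, ⟨i, hi, rfl⟩, hr⟩
    exact ⟨i, hi, hr⟩

end GrowthRates

/-- There is `E : ℕ → ℕ` such that, with `r_i = (a^{E i} b^{E i})^{100}` and
`G_J = ⟨a, b | r_j = e, j ∈ J⟩`, distinct subsets `I ≠ J` of `ℕ` give groups with
distinct growth rates (with respect to the images of the generators `a, b`). -/
theorem exists_E_growth_rates_distinct :
    ∃ E : ℕ → ℕ, ∀ I J : Set ℕ, I ≠ J →
      growthRate (Set.range (PresentedGroup.of (rels :=
        {r : FreeGroup Bool | ∃ i ∈ I,
          r = ((FreeGroup.of true ^ E i) * (FreeGroup.of false ^ E i)) ^ 100}))) ≠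
      growthRate (Set.range (PresentedGroup.of (rels :=
        {r : FreeGroup Bool | ∃ j ∈ J,
          r = ((FreeGroup.of true ^ E j) * (FreeGroup.of false ^ E j)) ^ 100}))) := by
  classical
  obtain ⟨ρ, hρ⟩ := GrowthRates.exists_radius
  refine ⟨GrowthRates.expo ρ, fun I J hIJ => ?_⟩
  rw [GrowthRates.growthRate_congr (GrowthRates.rels_eq _ I),
    GrowthRates.growthRate_congr (GrowthRates.rels_eq _ J)]
  have hex : ∃ i, ¬ (i ∈ I ↔ i ∈ J) := by
    by_contra! h
    exact hIJ (Set.ext h)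
  have hlt : ∀ k < Nat.find hex, k ∈ I ↔ k ∈ J := fun k hk => not_not.1 (Nat.find_min hex hk)
  have hi := Nat.find_spec hex
  by_cases h : Nat.find hex ∈ I
  · have hJ : Nat.find hex ∉ J := fun hJ => hi ⟨fun _ => hJ, fun _ => h⟩
    exact (GrowthRates.growthRate_lt_of_first hρ hJ h fun k hk => (hlt k hk).symm).ne
  · have hJ : Nat.find hex ∈ J := by
      by_contra hJ
      exact hi ⟨fun h' => absurd h' h, fun h' => absurd h' hJ⟩
    exact (GrowthRates.growthRate_lt_of_first hρ h hJ hlt).ne'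
end

section
/- Let S be a finite set, let (w_i)_{i∈ℕ} be words in the free group on S, let H = ⟨S | w_i = e, i ∈ ℕ⟩ and, for each k ∈ ℕ, H_k = ⟨S | w_i = e, i ≤ k⟩. Then lim_{k→∞} v(H_k) = v(H), where all growth rates are taken with respect to the images of the generating set S. -/
section Ball

variable {G H : Type*} [Group G] [Group H]

lemma image_ball (f : G →* H) (S : Set G) (n : ℕ) : f '' ball S n = ball (f '' S) n := by
  ext h
  constructor
  · rintro ⟨_, ⟨l, hl, hn, rfl⟩, rfl⟩
    refine ⟨l.map f, ?_, by simpa using hn, by rw [map_list_prod]⟩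
    intro x hx
    obtain ⟨y, hy, rfl⟩ := List.mem_map.1 hx
    rcases hl y hy with h | h
    · exact Or.inl ⟨y, h, rfl⟩
    · exact Or.inr ⟨y⁻¹, h, by simp⟩
  · rintro ⟨l, hl, hn, rfl⟩
    have key : ∀ l : List H, (∀ x ∈ l, x ∈ f '' S ∨ x⁻¹ ∈ f '' S) →
        ∃ l' : List G, (∀ x ∈ l', x ∈ S ∨ x⁻¹ ∈ S) ∧ l'.map f = l := by
      intro l
      induction l with
      | nil => exact fun _ => ⟨[], by simp, rfl⟩
      | cons a l ih =>
        intro h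
        obtain ⟨l', h1, h2⟩ := ih fun x hx => h x (List.mem_cons_of_mem _ hx)
        have ha : ∃ y, (y ∈ S ∨ y⁻¹ ∈ S) ∧ f y = a := by
          rcases h a List.mem_cons_self with ⟨y, hy, e⟩ | ⟨y, hy, e⟩
          · exact ⟨y, Or.inl hy, e⟩
          · exact ⟨y⁻¹, Or.inr (by simpa using hy), by simp [e]⟩
        obtain ⟨y, hy, rfl⟩ := ha
        refine ⟨y :: l', ?_, by simp [h2]⟩
        intro x hx
        rcases List.mem_cons.1 hx with rfl | hx
        · exact hy
        · exact h1 x hx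
    obtain ⟨l', h1, rfl⟩ := key l hl
    exact ⟨l'.prod, ⟨l', h1, by simpa using hn, rfl⟩, by rw [map_list_prod]⟩

lemma one_mem_ball (S : Set G) (n : ℕ) : (1 : G) ∈ ball S n := ⟨[], by simp, by simp, rfl⟩

open scoped Pointwise in
lemma ball_add_subset (S : Set G) (m n : ℕ) : ball S (m + n) ⊆ ball S m * ball S n := by
  rintro _ ⟨l, hl, hn, rfl⟩
  refine ⟨(l.take m).prod, ⟨l.take m, fun x hx => hl x (List.mem_of_mem_take hx), by simp, rfl⟩,
    (l.drop m).prod, ⟨l.drop m, fun x hx => hl x (List.mem_of_mem_drop hx), ?_, rfl⟩, ?_⟩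
  · rw [List.length_drop]; omega
  · exact List.prod_take_mul_prod_drop l m

lemma ball_finite {S : Set G} (hS : S.Finite) (n : ℕ) : (ball S n).Finite := by
  open scoped Pointwise in
  induction n with
  | zero =>
    refine (Set.finite_singleton (1 : G)).subset ?_
    rintro _ ⟨l, -, hn, rfl⟩
    obtain rfl : l = [] := List.length_eq_zero_iff.1 (by omega)
    simp
  | succ n ih =>
    refine (ih.mul ?_).subset (ball_add_subset S n 1)
    refine ((hS.union hS.inv).union (Set.finite_singleton 1)).subset ?_
    rintro _ ⟨l, hl, hn, rfl⟩
    match l, hl, hn with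
    | [], _, _ => simp
    | [a], hl, _ => exact Or.inl (by simpa using hl a (by simp))
    | _ :: _ :: _, _, hn => simp at hn

lemma one_le_card_ball {S : Set G} (hS : S.Finite) (n : ℕ) : 1 ≤ Nat.card (ball S n) := by
  rw [Nat.card_coe_set_eq]
  exact (Set.ncard_pos (ball_finite hS n)).2 ⟨1, one_mem_ball S n⟩

lemma card_ball_add_le {S : Set G} (hS : S.Finite) (m n : ℕ) :
    Nat.card (ball S (m + n)) ≤ Nat.card (ball S m) * Nat.card (ball S n) := by
  open scoped Pointwise in
  calc Nat.card (ball S (m + n)) ≤ Nat.card (ball S m * ball S n : Set G) :=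
        Nat.card_mono ((ball_finite hS m).mul (ball_finite hS n)) (ball_add_subset S m n)
    _ ≤ _ := Set.natCard_mul_le

lemma subadditive_log_card_ball {S : Set G} (hS : S.Finite) :
    Subadditive fun n => Real.log (Nat.card (ball S n)) := by
  intro m n
  have hm := one_le_card_ball hS m
  have hn := one_le_card_ball hS n
  have hmn := one_le_card_ball hS (m + n)
  rw [← Real.log_mul (by positivity) (by positivity)]
  exact Real.log_le_log (by positivity) (by exact_mod_cast card_ball_add_le hS m n)

lemma bddBelow_log_card_ball (S : Set G) :
    BddBelow (Set.range fun n : ℕ => Real.log (Nat.card (ball S n)) / n) := by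
  refine ⟨0, ?_⟩
  rintro _ ⟨n, rfl⟩
  exact div_nonneg (Real.log_natCast_nonneg _) (Nat.cast_nonneg _)

lemma rpow_card_ball {S : Set G} (hS : S.Finite) (n : ℕ) :
    (Nat.card (ball S n) : ℝ) ^ ((1 : ℝ) / n) = Real.exp (Real.log (Nat.card (ball S n)) / n) := by
  have hn := one_le_card_ball hS n
  rw [Real.rpow_def_of_pos (by positivity), mul_one_div]

lemma tendsto_exp_lim {S : Set G} (hS : S.Finite) :
    Filter.Tendsto (fun n : ℕ => (Nat.card (ball S n) : ℝ) ^ ((1 : ℝ) / n)) Filter.atTop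
      (nhds (Real.exp (subadditive_log_card_ball hS).lim)) := by
  simp_rw [rpow_card_ball hS]
  exact (Real.continuous_exp.tendsto _).comp
    ((subadditive_log_card_ball hS).tendsto_lim (bddBelow_log_card_ball S))

lemma tendsto_growthRate {S : Set G} (hS : S.Finite) :
    Filter.Tendsto (fun n : ℕ => (Nat.card (ball S n) : ℝ) ^ ((1 : ℝ) / n)) Filter.atTop
      (nhds (growthRate S)) := by
  rw [growthRate, (tendsto_exp_lim hS).limsup_eq]
  exact tendsto_exp_lim hS

/-- The limit in Fekete's lemma is also the infimum, so every ball bounds the growth rate. -/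
lemma growthRate_le {S : Set G} (hS : S.Finite) {n : ℕ} (hn : n ≠ 0) :
    growthRate S ≤ (Nat.card (ball S n) : ℝ) ^ ((1 : ℝ) / n) := by
  rw [growthRate, (tendsto_exp_lim hS).limsup_eq, rpow_card_ball hS]
  exact Real.exp_le_exp.2
    ((subadditive_log_card_ball hS).lim_le_div (bddBelow_log_card_ball S) hn)

lemma growthRate_image_le (f : G →* H) {S : Set G} (hS : S.Finite) :
    growthRate (f '' S) ≤ growthRate S := by
  refine le_of_tendsto_of_tendsto' (tendsto_growthRate (hS.image f)) (tendsto_growthRate hS) ?_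
  intro n
  have h : Nat.card (ball (f '' S) n) ≤ Nat.card (ball S n) := by
    rw [← image_ball]
    exact Nat.card_image_le (ball_finite hS n)
  gcongr

end Ball

section Presentation

variable {α : Type} (w : ℕ → FreeGroup α)

/-- The relators `w_i` with `i ≤ k`. -/
abbrev truncRels (k : ℕ) : Set (FreeGroup α) := {r | ∃ i ≤ k, r = w i}

lemma normalClosure_truncRels_mono {k l : ℕ} (h : k ≤ l) :
    Subgroup.normalClosure (truncRels w k) ≤ Subgroup.normalClosure (truncRels w l) :=
  Subgroup.normalClosure_mono fun _ ⟨i, hi, e⟩ => ⟨i, hi.trans h, e⟩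

/-- A consequence of all the relators is a consequence of finitely many of them. -/
lemma exists_mem_normalClosure {x : FreeGroup α}
    (hx : x ∈ Subgroup.normalClosure (Set.range w)) :
    ∃ k, x ∈ Subgroup.normalClosure (truncRels w k) := by
  induction hx using Subgroup.closure_induction with
  | mem x hx =>
    obtain ⟨_, ⟨i, rfl⟩, hc⟩ := Group.mem_conjugatesOfSet_iff.1 hx
    exact ⟨i, Subgroup.subset_closure
      (Group.mem_conjugatesOfSet_iff.2 ⟨w i, ⟨i, le_rfl, rfl⟩, hc⟩)⟩
  | one => exact ⟨0, one_mem _⟩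
  | mul x y _ _ hx hy =>
    obtain ⟨k, hk⟩ := hx
    obtain ⟨l, hl⟩ := hy
    exact ⟨max k l, mul_mem (normalClosure_truncRels_mono w (le_max_left k l) hk)
      (normalClosure_truncRels_mono w (le_max_right k l) hl)⟩
  | inv x _ hx =>
    obtain ⟨k, hk⟩ := hx
    exact ⟨k, inv_mem hk⟩

/-- The canonical quotient map from the truncated presentation to the full one. -/
def truncProj (k : ℕ) : PresentedGroup (truncRels w k) →* PresentedGroup (Set.range w) :=
  QuotientGroup.map _ _ (MonoidHom.id _) (Subgroup.normalClosure_mono (by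
    rintro _ ⟨i, -, rfl⟩
    exact ⟨i, rfl⟩))

lemma truncProj_mk (k : ℕ) (x : FreeGroup α) :
    truncProj w k (PresentedGroup.mk _ x) = PresentedGroup.mk _ x := rfl

lemma image_truncProj (k : ℕ) :
    truncProj w k '' Set.range (PresentedGroup.of (rels := truncRels w k)) =
      Set.range (PresentedGroup.of (rels := Set.range w)) := by
  rw [← Set.range_comp]
  rfl

lemma ball_presentedGroup (rels : Set (FreeGroup α)) (n : ℕ) :
    ball (Set.range (PresentedGroup.of (rels := rels))) n =
      PresentedGroup.mk rels '' ball (Set.range FreeGroup.of) n := by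
  rw [image_ball, ← Set.range_comp]
  rfl

lemma eventually_card_ball_le [Finite α] (n : ℕ) :
    ∀ᶠ k in Filter.atTop,
      Nat.card (ball (Set.range (PresentedGroup.of (rels := truncRels w k))) n) ≤
        Nat.card (ball (Set.range (PresentedGroup.of (rels := Set.range w))) n) := by
  have hT : (ball (Set.range (FreeGroup.of (α := α))) n).Finite :=
    ball_finite (Set.finite_range _) n
  have hev : ∀ᶠ k in Filter.atTop,
      ∀ p ∈ ball (Set.range (FreeGroup.of (α := α))) n ×ˢ ball (Set.range FreeGroup.of) n,
        p.1⁻¹ * p.2 ∈ Subgroup.normalClosure (Set.range w) →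
          p.1⁻¹ * p.2 ∈ Subgroup.normalClosure (truncRels w k) := by
    refine (Filter.eventually_all_finite (hT.prod hT)).2 fun p _ => ?_
    by_cases hp : p.1⁻¹ * p.2 ∈ Subgroup.normalClosure (Set.range w)
    · obtain ⟨k, hk⟩ := exists_mem_normalClosure w hp
      filter_upwards [Filter.eventually_ge_atTop k] with l hl _
      exact normalClosure_truncRels_mono w hl hk
    · exact Filter.Eventually.of_forall fun k h => absurd h hp
  filter_upwards [hev] with k hk
  -- The quotient map `H_k → H` is injective on the `n`-ball.
  have hinj : Set.InjOn (truncProj w k)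
      (ball (Set.range (PresentedGroup.of (rels := truncRels w k))) n) := by
    rw [ball_presentedGroup]
    rintro _ ⟨x, hx, rfl⟩ _ ⟨y, hy, rfl⟩ hxy
    rw [truncProj_mk, truncProj_mk] at hxy
    exact QuotientGroup.eq.2 (hk (x, y) ⟨hx, hy⟩ (QuotientGroup.eq.1 hxy))
  rw [← image_truncProj w k, ← image_ball, Nat.card_image_of_injOn hinj]

end Presentation

/-- If `H = ⟨S | w_i = e, i ∈ ℕ⟩` and `H_k = ⟨S | w_i = e, i ≤ k⟩`, then
`lim_k v(H_k) = v(H)`. -/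
theorem tendsto_growthRate_of_truncated_presentations
    {α : Type} [Fintype α] (w : ℕ → FreeGroup α) :
    Filter.Tendsto
      (fun k : ℕ => growthRate (Set.range (PresentedGroup.of (rels :=
        {r : FreeGroup α | ∃ i ≤ k, r = w i}))))
      Filter.atTop
      (nhds (growthRate (Set.range (PresentedGroup.of (rels := Set.range w))))) := by
  refine tendsto_order.2 ⟨fun c hc => Filter.Eventually.of_forall fun k => hc.trans_le ?_,
    fun c hc => ?_⟩
  · rw [← image_truncProj w k]
    exact growthRate_image_le _ (Set.finite_range _)
  · obtain ⟨n, hn, hn0⟩ := (((tendsto_growthRate (Set.finite_range _)).eventually_lt_const hc).and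
      (Filter.eventually_ne_atTop 0)).exists
    filter_upwards [eventually_card_ball_le w n] with k hk
    refine (growthRate_le (Set.finite_range _) hn0).trans_lt (lt_of_le_of_lt ?_ hn)
    gcongr
end

section
/- Consider a Markov grammar with s states and k labels, deterministic and with every state reachable from the initial state, and let v be the growth rate of the language it generates. Let N ∈ ℕ with s ≤ N, and fix p words of length 4N, called long forbidden words. Let the new language consist of those words of the old language that contain none of the long forbidden words as a subword, and let v_new be its growth rate. Then v_new^N ≥ (v^N/s² − 4Np)/k^s. -/
/-!
Call two states equivalent if each can be reached from the other. Let `B` be the largest number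
of words of length `N` that can be read from a state `a` to an equivalent state `b`.

*Upper bound for the old language.* Cut a path into pieces of length `N`. A piece joining
equivalent states is one of at most `B` words once its ends are known, and every other piece
strictly shrinks the set of states reachable from the current one, so there is a bounded number
of them. Hence `v ^ N ≤ s * max B 1` (`card_wordsFrom_le`, `growth_le_of_count_le`).

*Lower bound for the new language.* Fix `a`, `b` attaining `B`, a path of length `< s` from `b`
back to `a` reading `u`, and one of length `< s` from the initial state to `a` reading `x`. Delete
from the `B` words those that are subwords of a forbidden word: at most `4 * N * p` of them, and
`M` words `w` remain. Each word `x w₁ u w₂ u ⋯ wₘ u` built from remaining words is in the old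
language, and it contains no forbidden word, because a subword of length `4 * N` contains
a complete `wᵢ` (`block_infix`). There are `M ^ m` of these words, so
`v_new ^ (N + |u|) ≥ M` (`le_growth_pow_of_le_count`); finally `v_new ≤ k` and `|u| ≤ s`.
-/

/-- A Markov grammar with states `Fin s`, labels in `Λ`: `edge p a q` is the number
of directed edges from `p` to `q` labelled `a`, and `init` is the initial state. -/
structure MarkovGrammar (s : ℕ) (Λ : Type*) where
  edge : Fin s → Λ → Fin s → ℕ
  init : Fin s

/-- `G.path p w q`: one can read the word `w` along a directed path from `p` to `q`. -/
def MarkovGrammar.path {s : ℕ} {Λ : Type*} (G : MarkovGrammar s Λ) :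
    Fin s → List Λ → Fin s → Prop
  | p, [], q => p = q
  | p, a :: w, q => ∃ t, 0 < G.edge p a t ∧ G.path t w q

/-- The language generated by a Markov grammar: words read along directed paths
starting at the initial state. -/
def MarkovGrammar.language {s : ℕ} {Λ : Type*} (G : MarkovGrammar s Λ) : Set (List Λ) :=
  {w | ∃ q, G.path G.init w q}

/-- Deterministic: edges leaving a common state carry distinct labels. -/
def MarkovGrammar.Deterministic {s : ℕ} {Λ : Type*} (G : MarkovGrammar s Λ) : Prop :=
  ∀ p a, (∑ q, G.edge p a q) ≤ 1

/-- Every state is reachable by a directed path from the initial state. -/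
def MarkovGrammar.Reachable {s : ℕ} {Λ : Type*} (G : MarkovGrammar s Λ) : Prop :=
  ∀ q, ∃ w, G.path G.init w q

/-- The adjacency matrix of a Markov grammar. -/
def MarkovGrammar.adj {s : ℕ} {Λ : Type*} [Fintype Λ] (G : MarkovGrammar s Λ) :
    Matrix (Fin s) (Fin s) ℕ :=
  fun p q => ∑ a, G.edge p a q

/-- The growth rate of a language. -/
noncomputable def langGrowth {Λ : Type*} (L : Set (List Λ)) : ℝ :=
  Filter.limsup (fun n : ℕ => (Nat.card {w ∈ L | w.length ≤ n} : ℝ) ^ ((1 : ℝ) / n))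
    Filter.atTop

/-- The maximal nonnegative eigenvalue of a matrix (equal to `0` if there is none). -/
noncomputable def maxEigenvalue {s : ℕ} (M : Matrix (Fin s) (Fin s) ℝ) : ℝ :=
  sSup ({0} ∪ {v : ℝ | 0 ≤ v ∧ M.charpoly.IsRoot v})

open Filter Topology

namespace ForbiddenWords

/-! ### Growth rates of languages -/

section Growth

variable {k : ℕ}

/-- The number of words of length at most `n` in `L`. -/
noncomputable def count (L : Set (List (Fin k))) (n : ℕ) : ℕ :=
  Nat.card {w ∈ L | w.length ≤ n}

lemma langGrowth_eq (L : Set (List (Fin k))) :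
    langGrowth L = limsup (fun n : ℕ => (count L n : ℝ) ^ ((1 : ℝ) / n)) atTop := rfl

lemma finite_le (L : Set (List (Fin k))) (n : ℕ) : {w ∈ L | w.length ≤ n}.Finite :=
  (List.finite_length_le (Fin k) n).subset fun _ h => h.2

lemma finite_eq (n : ℕ) : {w : List (Fin k) | w.length = n}.Finite :=
  List.finite_length_eq (Fin k) n

lemma ncard_length_eq (n : ℕ) : {w : List (Fin k) | w.length = n}.ncard = k ^ n := by
  have h := card_vector (α := Fin k) n
  rw [Fintype.card_fin] at h
  rw [← Nat.card_coe_set_eq, ← h, ← Nat.card_eq_fintype_card]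
  rfl

lemma count_le_sum (L : Set (List (Fin k))) (n : ℕ) :
    count L n ≤ ∑ j ∈ Finset.range (n + 1), {w ∈ L | w.length = j}.ncard := by
  induction n with
  | zero => simp [count, ← Nat.card_coe_set_eq]
  | succ n ih =>
    rw [Finset.sum_range_succ]
    refine le_trans ?_ (Nat.add_le_add_right ih _)
    unfold count
    rw [Nat.card_coe_set_eq, Nat.card_coe_set_eq]
    refine le_trans (Set.ncard_le_ncard ?_ ?_) (Set.ncard_union_le _ _)
    · rintro w ⟨h1, h2⟩
      rcases Nat.lt_or_ge n w.length with h | h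
      · exact Or.inr ⟨h1, by omega⟩
      · exact Or.inl ⟨h1, h⟩
    · exact (finite_le L n).union ((finite_eq (n + 1)).subset fun _ h => h.2)

lemma tendsto_bound {C ρ : ℝ} (hC : 0 < C) (hρ : 0 < ρ) :
    Tendsto (fun n : ℕ => (C * (n + 1) * ρ ^ n) ^ ((1 : ℝ) / n)) atTop (𝓝 ρ) := by
  have h1 : Tendsto (fun n : ℕ => C ^ ((1 : ℝ) / n)) atTop (𝓝 1) := by
    have := (tendsto_const_nhds (x := C)).rpow tendsto_one_div_atTop_nhds_zero_nat
      (Or.inl hC.ne')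
    simpa using this
  have h2 : Tendsto (fun n : ℕ => ((n : ℝ) + 1) ^ ((1 : ℝ) / n)) atTop (𝓝 1) := by
    have := (tendsto_rpow_div_mul_add 1 1 (-1) (by norm_num)).comp
      (tendsto_natCast_atTop_atTop.comp (tendsto_add_atTop_nat 1))
    refine this.congr fun n => ?_
    simp
  have h3 : Tendsto (fun n : ℕ => C ^ ((1 : ℝ) / n) * ((n : ℝ) + 1) ^ ((1 : ℝ) / n) * ρ)
      atTop (𝓝 ρ) := by simpa using (h1.mul h2).mul_const ρ
  refine h3.congr' ?_
  filter_upwards [eventually_ge_atTop 1] with n hn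
  have hn0 : (n : ℝ) ≠ 0 := by positivity
  rw [Real.mul_rpow (by positivity) (by positivity), Real.mul_rpow (by positivity) (by positivity),
    ← Real.rpow_natCast ρ n, ← Real.rpow_mul hρ.le, mul_one_div_cancel hn0, Real.rpow_one]

lemma isCobounded (L : Set (List (Fin k))) :
    IsCoboundedUnder (· ≤ ·) atTop (fun n : ℕ => (count L n : ℝ) ^ ((1 : ℝ) / n)) :=
  IsCoboundedUnder.of_frequently_ge (a := 0) (Frequently.of_forall fun n => by positivity)

lemma growth_le_of_count_le (L : Set (List (Fin k))) {C ρ : ℝ} (hC : 0 < C) (hρ : 0 < ρ)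
    (h : ∀ n, (count L n : ℝ) ≤ C * (n + 1) * ρ ^ n) : langGrowth L ≤ ρ := by
  have ht := tendsto_bound hC hρ
  rw [langGrowth_eq, ← ht.limsup_eq]
  refine limsup_le_limsup (Eventually.of_forall fun n => ?_) (isCobounded L)
    ht.isBoundedUnder_le
  exact Real.rpow_le_rpow (by positivity) (h n) (by positivity)

lemma count_le (L : Set (List (Fin k))) (n : ℕ) :
    (count L n : ℝ) ≤ 1 * (n + 1) * (max k 1 : ℝ) ^ n := by
  have h1 : count L n ≤ ∑ j ∈ Finset.range (n + 1), (max k 1) ^ n := by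
    refine (count_le_sum L n).trans (Finset.sum_le_sum fun j hj => ?_)
    calc _ ≤ {w : List (Fin k) | w.length = j}.ncard :=
          Set.ncard_le_ncard (fun _ h => h.2) (finite_eq j)
      _ = k ^ j := ncard_length_eq j
      _ ≤ (max k 1) ^ j := Nat.pow_le_pow_left (le_max_left _ _) _
      _ ≤ (max k 1) ^ n := Nat.pow_le_pow_right (by positivity)
          (by have := Finset.mem_range.1 hj; omega)
  rw [Finset.sum_const, Finset.card_range, smul_eq_mul] at h1
  have : (count L n : ℝ) ≤ ((n + 1) * (max k 1) ^ n : ℕ) := by exact_mod_cast h1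
  push_cast at this
  simpa using this

lemma growth_le (L : Set (List (Fin k))) : langGrowth L ≤ max (k : ℝ) 1 :=
  growth_le_of_count_le L one_pos (by positivity) (count_le L)

lemma isBounded (L : Set (List (Fin k))) :
    IsBoundedUnder (· ≤ ·) atTop (fun n : ℕ => (count L n : ℝ) ^ ((1 : ℝ) / n)) := by
  have ht := tendsto_bound (C := 1) (ρ := max k 1) one_pos (by positivity)
  refine ht.isBoundedUnder_le.mono_le (Eventually.of_forall fun n => ?_)
  exact Real.rpow_le_rpow (by positivity) (count_le L n) (by positivity)

lemma one_le_growth (L : Set (List (Fin k))) (h : [] ∈ L) : 1 ≤ langGrowth L := by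
  rw [langGrowth_eq]
  refine le_limsup_of_frequently_le (Frequently.of_forall fun n => ?_) (isBounded L)
  have : 1 ≤ count L n := by
    have : Finite {w ∈ L | w.length ≤ n} := finite_le L n
    have : Nonempty {w ∈ L | w.length ≤ n} := ⟨⟨[], h, by simp⟩⟩
    exact Nat.card_pos
  exact Real.one_le_rpow (by exact_mod_cast this) (by positivity)

lemma le_growth_pow_of_le_count (L : Set (List (Fin k))) (h0 : [] ∈ L) {M : ℝ} {d c : ℕ}
    (hd : 0 < d) (h : ∀ m : ℕ, M ^ m ≤ count L (c + m * d)) : M ≤ langGrowth L ^ d := by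
  by_contra! hlt
  have h1 := one_le_growth L h0
  -- an intermediate rate `ρ` with `langGrowth L < ρ` and `ρ ^ d < M`
  obtain ⟨ρ, hρ1, hρ2⟩ : ∃ ρ, langGrowth L < ρ ∧ ρ ^ d < M := by
    have hc : ContinuousAt (fun x : ℝ => x ^ d) (langGrowth L) := by fun_prop
    have he : ∀ᶠ x in 𝓝[>] (langGrowth L), x ^ d < M :=
      (hc.eventually_lt_const hlt).filter_mono nhdsWithin_le_nhds
    obtain ⟨x, hx1, hx2⟩ := (he.and self_mem_nhdsWithin).exists
    exact ⟨x, hx2, hx1⟩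
  have hρ0 : 0 < ρ := by linarith
  have hev := eventually_lt_of_limsup_lt (langGrowth_eq L ▸ hρ1) (isBounded L)
  have hq : 1 < M / ρ ^ d := (one_lt_div (by positivity)).2 hρ2
  have hbig := (tendsto_pow_atTop_atTop_of_one_lt hq).eventually_gt_atTop (ρ ^ c)
  have hlin : Tendsto (fun m : ℕ => c + m * d) atTop atTop :=
    tendsto_atTop_mono (fun m => (Nat.le_mul_of_pos_right m hd).trans (Nat.le_add_left _ _))
      tendsto_id
  obtain ⟨m, ⟨hm1, hm2⟩, hm3⟩ :=
    ((hbig.and (hlin.eventually hev)).and (eventually_ge_atTop 1)).exists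
  have hn0 : 0 < c + m * d := by positivity
  have hn1 : ((c + m * d : ℕ) : ℝ) ≠ 0 := by exact_mod_cast hn0.ne'
  have h4 : (count L (c + m * d) : ℝ) < ρ ^ (c + m * d) := by
    have := Real.rpow_lt_rpow (by positivity) hm2
      (z := ((c + m * d : ℕ) : ℝ)) (by exact_mod_cast hn0)
    rwa [← Real.rpow_mul (by positivity), one_div_mul_cancel hn1, Real.rpow_one,
      Real.rpow_natCast] at this
  have h5 := (h m).trans_lt h4
  rw [div_pow, lt_div_iff₀ (by positivity), ← pow_mul, ← pow_add, mul_comm d m] at hm1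
  linarith

end Growth

/-! ### Paths -/

section Paths

variable {s k : ℕ} (G : MarkovGrammar s (Fin k))

lemma path_append (a b : Fin s) (w w' : List (Fin k)) :
    G.path a (w ++ w') b ↔ ∃ t, G.path a w t ∧ G.path t w' b := by
  induction w generalizing a with
  | nil => simp [MarkovGrammar.path]
  | cons c w ih =>
    simp only [List.cons_append, MarkovGrammar.path, ih]
    constructor
    · rintro ⟨t, h, t', h1, h2⟩
      exact ⟨t', ⟨t, h, h1⟩, h2⟩
    · rintro ⟨t', ⟨t, h, h1⟩, h2⟩
      exact ⟨t, h, t', h1, h2⟩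

/-- The state `b` can be reached from `a`. -/
def Reach (a b : Fin s) : Prop := ∃ w, G.path a w b

lemma Reach.refl (a : Fin s) : Reach G a a := ⟨[], rfl⟩

variable {G} in
lemma Reach.trans {a b c : Fin s} : Reach G a b → Reach G b c → Reach G a c := by
  rintro ⟨w, h⟩ ⟨w', h'⟩
  exact ⟨w ++ w', (path_append G _ _ _ _).2 ⟨b, h, h'⟩⟩

/-- A shortest path visits no state twice. -/
lemma exists_short_path {a b : Fin s} (h : Reach G a b) : ∃ w, G.path a w b ∧ w.length < s := by
  classical
  have hex : ∃ n, ∃ w, G.path a w b ∧ w.length = n := by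
    obtain ⟨w, hw⟩ := h
    exact ⟨_, w, hw, rfl⟩
  obtain ⟨w, hw, hlen⟩ := Nat.find_spec hex
  refine ⟨w, hw, ?_⟩
  by_contra! hs
  have hsplit : ∀ i : Fin (w.length + 1), ∃ t, G.path a (w.take i) t ∧ G.path t (w.drop i) b :=
    fun i => (path_append G _ _ _ _).1 (by rwa [List.take_append_drop])
  choose t ht1 ht2 using hsplit
  obtain ⟨i, j, hij, heq⟩ := Fintype.exists_ne_map_eq_of_card_lt t (by simp; omega)
  wlog hlt : i < j generalizing i j
  · exact this j i hij.symm heq.symm (lt_of_le_of_ne (not_lt.1 hlt) hij.symm)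
  have hp : G.path a (w.take i ++ w.drop j) b :=
    (path_append G _ _ _ _).2 ⟨t i, ht1 i, heq ▸ ht2 j⟩
  have := Nat.find_min' hex ⟨_, hp, rfl⟩
  have h1 : (i : ℕ) < j := hlt
  have h2 := j.isLt
  simp only [List.length_append, List.length_take, List.length_drop] at this
  omega

/-- Words of length `n` that can be read from `a` to `b`. -/
def wordsBetween (n : ℕ) (a b : Fin s) : Set (List (Fin k)) := {w | w.length = n ∧ G.path a w b}

/-- Words of length `n` that can be read from `a`. -/
def wordsFrom (n : ℕ) (a : Fin s) : Set (List (Fin k)) := {w | w.length = n ∧ ∃ b, G.path a w b}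

/-- The number of states reachable from `a`. -/
noncomputable def rank (a : Fin s) : ℕ := {b | Reach G a b}.ncard

lemma wordsBetween_finite (n : ℕ) (a b : Fin s) : (wordsBetween G n a b).Finite :=
  (finite_eq n).subset fun _ h => h.1

lemma wordsFrom_finite (n : ℕ) (a : Fin s) : (wordsFrom G n a).Finite :=
  (finite_eq n).subset fun _ h => h.1

lemma card_wordsFrom_add_le (N n : ℕ) (a : Fin s) :
    (wordsFrom G (N + n) a).ncard ≤
      ∑ b, (wordsBetween G N a b).ncard * (wordsFrom G n b).ncard := by
  have hsub : wordsFrom G (N + n) a ⊆ ⋃ b, (fun q : List (Fin k) × List (Fin k) => q.1 ++ q.2) ''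
      (wordsBetween G N a b ×ˢ wordsFrom G n b) := by
    rintro w ⟨hl, c, hw⟩
    rw [← List.take_append_drop N w, path_append] at hw
    obtain ⟨b, h1, h2⟩ := hw
    refine Set.mem_iUnion.2 ⟨b, (w.take N, w.drop N), ⟨⟨?_, h1⟩, ?_, c, h2⟩, ?_⟩
    · simp [hl]
    · simp [hl]
    · simp
  have hfin : ∀ b, (wordsBetween G N a b ×ˢ wordsFrom G n b).Finite := fun b =>
    (wordsBetween_finite G N a b).prod (wordsFrom_finite G n b)
  refine (Set.ncard_le_ncard hsub (Set.finite_iUnion fun b => (hfin b).image _)).trans ?_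
  refine (Set.ncard_iUnion_le_of_fintype _).trans (Finset.sum_le_sum fun b _ => ?_)
  exact (Set.ncard_image_le (hfin b)).trans Set.ncard_prod.le

lemma rank_le {a b : Fin s} (h : Reach G a b) : rank G b ≤ rank G a :=
  Set.ncard_le_ncard (fun _ hc => h.trans hc) (Set.toFinite _)

lemma rank_lt {a b : Fin s} (h : Reach G a b) (h' : ¬ Reach G b a) : rank G b < rank G a :=
  Set.ncard_lt_ncard ⟨fun _ hc => h.trans hc, fun hs => h' (hs (Reach.refl G a))⟩ (Set.toFinite _)

/-- The bound for words read from `a`. A step to a state of smaller rank costs a factor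
`(k + 1) ^ N`, which the exponent `rank G a` pays for; the other steps have at most `B` words
for each of at most `s` targets. -/
lemma card_wordsFrom_le {N B : ℕ} (hN : 0 < N) (hB : 1 ≤ B)
    (h : ∀ a b, Reach G a b → Reach G b a → (wordsBetween G N a b).ncard ≤ B)
    {ρ : ℝ} (hρ : 1 ≤ ρ) (hρN : ρ ^ N = s * B) (n : ℕ) (a : Fin s) :
    ((wordsFrom G n a).ncard : ℝ) ≤ (((k : ℝ) + 1) ^ N) ^ (rank G a + 1) * ρ ^ n := by
  set K : ℝ := ((k : ℝ) + 1) ^ N with hK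
  have hK1 : 1 ≤ K := one_le_pow₀ (by linarith [(Nat.cast_nonneg k : (0 : ℝ) ≤ k)])
  have hB1 : (1 : ℝ) ≤ B := by exact_mod_cast hB
  have hcard : ∀ (j : ℕ), j ≤ N → ∀ S : Set (List (Fin k)), S ⊆ {w | w.length = j} →
      (S.ncard : ℝ) ≤ K := by
    intro j hj S hS
    have h1 : S.ncard ≤ k ^ j := (Set.ncard_le_ncard hS (finite_eq j)).trans (ncard_length_eq j).le
    calc (S.ncard : ℝ) ≤ (k : ℝ) ^ j := by exact_mod_cast h1
      _ ≤ ((k : ℝ) + 1) ^ j := by gcongr; linarith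
      _ ≤ K := pow_le_pow_right₀ (by linarith [(Nat.cast_nonneg k : (0 : ℝ) ≤ k)]) hj
  induction n using Nat.strong_induction_on generalizing a with
  | _ n ih =>
    rcases Nat.lt_or_ge n N with hn | hn
    · calc ((wordsFrom G n a).ncard : ℝ) ≤ K := hcard n hn.le _ fun _ h => h.1
        _ ≤ K ^ (rank G a + 1) := le_self_pow₀ hK1 (by omega)
        _ ≤ _ := le_mul_of_one_le_right (by positivity) (one_le_pow₀ hρ)
    · obtain ⟨m, rfl⟩ := Nat.exists_eq_add_of_le hn
      have h1 : ((wordsFrom G (N + m) a).ncard : ℝ) ≤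
          ∑ b, ((wordsBetween G N a b).ncard : ℝ) * (wordsFrom G m b).ncard := by
        exact_mod_cast card_wordsFrom_add_le G N m a
      refine h1.trans ?_
      have h2 : ∀ b ∈ (Finset.univ : Finset (Fin s)),
          ((wordsBetween G N a b).ncard : ℝ) * (wordsFrom G m b).ncard ≤
            B * (K ^ (rank G a + 1) * ρ ^ m) := by
        intro b _
        have ihb := ih m (by omega) b
        by_cases hab : Reach G a b
        · by_cases hba : Reach G b a
          · have hc : ((wordsBetween G N a b).ncard : ℝ) ≤ B := by exact_mod_cast h a b hab hba
            have hr := rank_le G hab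
            calc _ ≤ (B : ℝ) * (K ^ (rank G b + 1) * ρ ^ m) := by gcongr
              _ ≤ _ := by gcongr
          · have hc : ((wordsBetween G N a b).ncard : ℝ) ≤ K :=
              hcard N le_rfl _ fun _ h => h.1
            have hr := rank_lt G hab hba
            calc _ ≤ K * (K ^ (rank G b + 1) * ρ ^ m) := by gcongr
              _ = K ^ (rank G b + 1 + 1) * ρ ^ m := by ring
              _ ≤ K ^ (rank G a + 1) * ρ ^ m := by gcongr; omega
              _ ≤ _ := le_mul_of_one_le_left (by positivity) hB1
        · have he : wordsBetween G N a b = ∅ :=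
            Set.eq_empty_of_forall_notMem fun w hw => hab ⟨w, hw.2⟩
          rw [he, Set.ncard_empty, Nat.cast_zero, zero_mul]
          positivity
      refine (Finset.sum_le_sum h2).trans (le_of_eq ?_)
      rw [Finset.sum_const, Finset.card_univ, Fintype.card_fin, nsmul_eq_mul, pow_add ρ, hρN]
      ring

lemma growth_pow_le {N B : ℕ} (hN : 0 < N) (hB : 1 ≤ B)
    (h : ∀ a b, Reach G a b → Reach G b a → (wordsBetween G N a b).ncard ≤ B) :
    langGrowth G.language ^ N ≤ s * B := by
  have hs : 1 ≤ s := Nat.one_le_iff_ne_zero.2 (by rintro rfl; exact G.init.elim0)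
  have hsB : (1 : ℝ) ≤ s * B := by exact_mod_cast Nat.mul_pos hs hB
  obtain ⟨ρ, hρ1, hρ⟩ : ∃ ρ : ℝ, 1 ≤ ρ ∧ ρ ^ N = s * B :=
    ⟨((s : ℝ) * B) ^ ((N : ℝ)⁻¹), Real.one_le_rpow hsB (by positivity),
      Real.rpow_inv_natCast_pow (by positivity) hN.ne'⟩
  rw [← hρ]
  have h0 : 0 ≤ langGrowth G.language :=
    zero_le_one.trans (one_le_growth _ ⟨G.init, rfl⟩)
  refine pow_le_pow_left₀ h0 (growth_le_of_count_le _
    (C := (((k : ℝ) + 1) ^ N) ^ (rank G G.init + 1)) (by positivity) (by positivity) fun n => ?_) N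
  set C := (((k : ℝ) + 1) ^ N) ^ (rank G G.init + 1)
  have h1 : (count G.language n : ℝ) ≤
      ∑ j ∈ Finset.range (n + 1), ({w ∈ G.language | w.length = j}.ncard : ℝ) := by
    exact_mod_cast count_le_sum G.language n
  have h2 : ∀ j ∈ Finset.range (n + 1), ({w ∈ G.language | w.length = j}.ncard : ℝ) ≤
      C * ρ ^ n := by
    intro j hj
    have he : {w ∈ G.language | w.length = j} = wordsFrom G j G.init :=
      Set.ext fun w => and_comm
    rw [he]
    refine (card_wordsFrom_le G hN hB h hρ1 hρ j G.init).trans ?_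
    have := Finset.mem_range.1 hj
    exact mul_le_mul_of_nonneg_left (pow_le_pow_right₀ hρ1 (by omega)) (by positivity)
  refine h1.trans ((Finset.sum_le_sum h2).trans (le_of_eq ?_))
  rw [Finset.sum_const, Finset.card_range, nsmul_eq_mul]
  push_cast
  ring

end Paths

/-! ### Concatenations of blocks -/

section Blocks

variable {k : ℕ}

/-- The words `w₁ ++ u ++ w₂ ++ u ++ ⋯ ++ wₘ ++ u` with all `wᵢ` in `S`. -/
def blocks (S : Set (List (Fin k))) (u : List (Fin k)) : ℕ → Set (List (Fin k))
  | 0 => {[]}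
  | m + 1 => (fun q : List (Fin k) × List (Fin k) => q.1 ++ u ++ q.2) '' (S ×ˢ blocks S u m)

variable {S : Set (List (Fin k))} {u : List (Fin k)} {N : ℕ}

lemma ncard_blocks (hS : ∀ w ∈ S, w.length = N) (m : ℕ) :
    (blocks S u m).ncard = S.ncard ^ m := by
  induction m with
  | zero => simp [blocks]
  | succ m ih =>
    rw [blocks, Set.InjOn.ncard_image, Set.ncard_prod, ih, pow_succ, mul_comm]
    rintro ⟨w, t⟩ ⟨hw, -⟩ ⟨w', t'⟩ ⟨hw', -⟩ he
    have hl : w.length = w'.length := (hS w hw).trans (hS w' hw').symm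
    simp only [List.append_assoc] at he
    obtain ⟨h1, h2⟩ := List.append_inj he hl
    rw [h1, List.append_cancel_left h2]

lemma length_blocks (hS : ∀ w ∈ S, w.length = N) (m : ℕ) :
    ∀ t ∈ blocks S u m, t.length = m * (N + u.length) := by
  induction m with
  | zero => rintro t rfl; simp
  | succ m ih =>
    rintro _ ⟨⟨w, t⟩, ⟨hw, ht⟩, rfl⟩
    simp only [List.length_append, hS w hw, ih t ht]
    ring

lemma path_blocks {s : ℕ} (G : MarkovGrammar s (Fin k)) {a b : Fin s}
    (hS : ∀ w ∈ S, G.path a w b) (hu : G.path b u a) (m : ℕ) :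
    ∀ t ∈ blocks S u m, G.path a t a := by
  induction m with
  | zero => rintro t rfl; rfl
  | succ m ih =>
    rintro _ ⟨⟨w, t⟩, ⟨hw, ht⟩, rfl⟩
    exact (path_append G _ _ _ _).2 ⟨a, (path_append G _ _ _ _).2 ⟨b, hS w hw, hu⟩, ih t ht⟩

/-- A subword of length `4 * N` of a concatenation of blocks contains a complete `wᵢ`. The prefix
`x` stands for the initial word and, in the induction, for the block just passed. -/
lemma block_infix (hS : ∀ w ∈ S, w.length = N) (hu : u.length < N) {f : List (Fin k)}
    (hf : f.length = 4 * N) (m : ℕ) :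
    ∀ t ∈ blocks S u m, ∀ x : List (Fin k), x.length < 2 * N → f <:+: x ++ t →
      ∃ w ∈ S, w <:+: f := by
  induction m with
  | zero =>
    rintro t rfl x hx h
    have := h.length_le
    simp at this
    omega
  | succ m ih =>
    rintro _ ⟨⟨w, t⟩, ⟨hw, ht⟩, rfl⟩ x hx ⟨α, β, he⟩
    have hwl := hS w hw
    simp only [List.append_assoc] at he
    rcases le_or_gt α.length x.length with hα | hα
    · -- `f` starts inside `x`, hence runs through all of `w`
      refine ⟨w, hw, ?_⟩
      obtain ⟨x₁, rfl⟩ : α <+: x :=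
        List.prefix_of_prefix_length_le (l₃ := x ++ (w ++ (u ++ t))) ⟨f ++ β, he⟩
          (List.prefix_append _ _) hα
      rw [List.append_assoc, List.append_cancel_left_eq] at he
      have hp : x₁ ++ w <+: f := by
        refine List.prefix_of_prefix_length_le (l₃ := f ++ β) ?_ (List.prefix_append _ _) ?_
        · exact ⟨u ++ t, by rw [he, List.append_assoc]⟩
        · simp only [List.length_append] at hx ⊢
          omega
      exact (List.suffix_append x₁ w).isInfix.trans hp.isInfix
    · obtain ⟨α₁, rfl⟩ : x <+: α :=
        List.prefix_of_prefix_length_le (l₃ := x ++ (w ++ (u ++ t)))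
          (List.prefix_append _ _) ⟨f ++ β, he⟩ hα.le
      rw [List.append_assoc, List.append_cancel_left_eq] at he
      refine ih t ht (w ++ u) (by simp only [List.length_append]; omega) ⟨α₁, β, ?_⟩
      simpa only [List.append_assoc] using he

lemma ncard_bad_le {p : ℕ} (hN : 0 < N) (F : Fin p → List (Fin k))
    (hF : ∀ i, (F i).length = 4 * N) :
    {w : List (Fin k) | w.length = N ∧ ∃ i, w <:+: F i}.ncard ≤ 4 * N * p := by
  have hsub : {w : List (Fin k) | w.length = N ∧ ∃ i, w <:+: F i} ⊆
      Set.range fun q : Fin (4 * N) × Fin p => ((F q.2).drop q.1).take N := by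
    rintro w ⟨hl, i, α, β, he⟩
    have hlen := congrArg List.length he
    simp only [List.length_append, hF] at hlen
    refine ⟨(⟨α.length, by omega⟩, i), ?_⟩
    simp only [← he, List.append_assoc, List.drop_left]
    rw [← hl, List.take_left]
  refine (Set.ncard_le_ncard hsub (Set.finite_range _)).trans ?_
  rw [← Set.image_univ]
  refine (Set.ncard_image_le Set.finite_univ).trans ?_
  simp [Set.ncard_univ]

end Blocks

end ForbiddenWords

open ForbiddenWords in
/-- Forbidding `p` long forbidden words of length `4N` in the language of a Markov
grammar with `s ≤ N` states and `k` labels decreases the growth rate `v` to some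
`v_new` with `v_new ^ N ≥ (v ^ N / s² - 4 N p) / k ^ s`. -/
theorem langGrowth_forbidden_words_lower_bound {s k : ℕ} (G : MarkovGrammar s (Fin k))
    (hdet : G.Deterministic) (hreach : G.Reachable)
    (N p : ℕ) (hsN : s ≤ N) (F : Fin p → List (Fin k)) (hF : ∀ i, (F i).length = 4 * N) :
    ((langGrowth G.language) ^ N / (s : ℝ) ^ 2 - 4 * (N : ℝ) * p) / (k : ℝ) ^ s ≤
      (langGrowth {w ∈ G.language | ∀ i, ¬ F i <:+: w}) ^ N := by
  classical
  have hs : 1 ≤ s := Nat.one_le_iff_ne_zero.2 (by rintro rfl; exact G.init.elim0)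
  have hN : 0 < N := by omega
  set L := {w ∈ G.language | ∀ i, ¬ F i <:+: w} with hL
  have hnil : [] ∈ L := by
    refine ⟨⟨G.init, rfl⟩, fun i hi => ?_⟩
    have := hi.length_le
    simp [hF] at this
    omega
  have hv1 : 1 ≤ langGrowth L := one_le_growth L hnil
  have hv0 : 0 ≤ langGrowth L := zero_le_one.trans hv1
  rcases Nat.eq_zero_or_pos k with hk0 | hk
  · -- `k ^ s = 0`, and the quotient is `0` by convention
    have : (k : ℝ) ^ s = 0 := by rw [hk0, Nat.cast_zero, zero_pow (by omega)]
    rw [this, div_zero]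
    positivity
  have hk1 : (1 : ℝ) ≤ k := by exact_mod_cast hk
  have hs1 : (1 : ℝ) ≤ s := by exact_mod_cast hs
  rw [div_le_iff₀ (by positivity)]
  obtain ⟨⟨a, b⟩, ⟨hab, hba⟩, hmax⟩ := (Set.toFinite {q : Fin s × Fin s |
    Reach G q.1 q.2 ∧ Reach G q.2 q.1}).exists_maximalFor
      (fun q => (wordsBetween G N q.1 q.2).ncard) _
      ⟨(G.init, G.init), Reach.refl G _, Reach.refl G _⟩
  set B := (wordsBetween G N a b).ncard with hB
  have hle : ∀ a' b', Reach G a' b' → Reach G b' a' →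
      (wordsBetween G N a' b').ncard ≤ max B 1 := by
    intro a' b' h1 h2
    refine le_trans ?_ (le_max_left _ _)
    rcases le_total (wordsBetween G N a' b').ncard B with h | h
    · exact h
    · exact hmax (j := (a', b')) ⟨h1, h2⟩ h
  have hgrow : langGrowth G.language ^ N / (s : ℝ) ^ 2 ≤ (max B 1 : ℕ) := by
    rw [div_le_iff₀ (by positivity)]
    refine (growth_pow_le G hN (le_max_right _ _) hle).trans ?_
    have h1 : (s : ℝ) ≤ (s : ℝ) ^ 2 := le_self_pow₀ hs1 (by norm_num)
    rw [mul_comm]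
    gcongr
  have hNp : (0 : ℝ) ≤ 4 * (N : ℝ) * p := by positivity
  have hone : (1 : ℝ) ≤ langGrowth L ^ N * (k : ℝ) ^ s :=
    one_le_mul_of_one_le_of_one_le (one_le_pow₀ hv1) (one_le_pow₀ hk1)
  rcases Nat.eq_zero_or_pos B with hB0 | hBpos
  · rw [hB0] at hgrow
    norm_num at hgrow
    linarith
  rw [max_eq_left hBpos] at hgrow
  obtain ⟨u, hu, hul⟩ := exists_short_path G hba
  obtain ⟨x, hx, hxl⟩ := exists_short_path G (hreach a)
  set S : Set (List (Fin k)) :=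
    wordsBetween G N a b \ {w | w.length = N ∧ ∃ i, w <:+: F i} with hS
  have hSlen : ∀ w ∈ S, w.length = N := fun w hw => hw.1.1
  have hM : B ≤ S.ncard + 4 * N * p := by
    have h1 := Set.le_ncard_sdiff {w : List (Fin k) | w.length = N ∧ ∃ i, w <:+: F i}
      (wordsBetween G N a b) ((finite_eq N).subset fun _ h => h.1)
    rw [← hS, ← hB] at h1
    have h2 := ncard_bad_le hN F hF
    omega
  have hM' : (B : ℝ) ≤ S.ncard + 4 * (N : ℝ) * p := by exact_mod_cast hM
  have hpow : (S.ncard : ℝ) ≤ langGrowth L ^ (N + u.length) := by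
    refine le_growth_pow_of_le_count L hnil (c := x.length) (by omega) fun m => ?_
    have hsub : (fun t => x ++ t) '' blocks S u m ⊆
        {w ∈ L | w.length ≤ x.length + m * (N + u.length)} := by
      rintro _ ⟨t, ht, rfl⟩
      refine ⟨⟨⟨a, (path_append G _ _ _ _).2 ⟨a, hx, ?_⟩⟩, fun i hi => ?_⟩, ?_⟩
      · exact path_blocks G (fun w hw => hw.1.2) hu m t ht
      · obtain ⟨w, hw, hwi⟩ := block_infix hSlen (by omega) (hF i) m t ht x (by omega) hi
        exact hw.2 ⟨hw.1.1, i, hwi⟩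
      · rw [List.length_append, length_blocks hSlen m t ht]
    have h1 := Set.ncard_le_ncard hsub (finite_le L _)
    rw [Set.ncard_image_of_injective _ (List.append_right_injective x),
      ncard_blocks hSlen] at h1
    have h2 : S.ncard ^ m ≤ count L (x.length + m * (N + u.length)) := h1
    exact_mod_cast h2
  have hvk : langGrowth L ≤ k := by
    have := growth_le L
    rwa [max_eq_left hk1] at this
  calc langGrowth G.language ^ N / (s : ℝ) ^ 2 - 4 * (N : ℝ) * p ≤ S.ncard := by linarith
    _ ≤ langGrowth L ^ N * langGrowth L ^ u.length := by rw [← pow_add]; exact hpow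
    _ ≤ langGrowth L ^ N * (k : ℝ) ^ u.length := by gcongr
    _ ≤ langGrowth L ^ N * (k : ℝ) ^ s := by gcongr
end
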